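/- arXiv:1108.1878 — 4 statements merged into one kernel-verified Lean document; each statement's English description precedes it below -/
import Mathlib

section
/- For every z on the unit circle S¹ and every ψ ∈ ℂ², one has f_ψ(−z) = g_ψ(z). -/
/-!
Write `z = x + iy` with `|z| = 1` and put `d(z) = √(1 - |a|²x²) + |a|y`. Then the second entry of
`p(z) u(z)` is `i d(z)` (`lamS_sub`), and `d(z) d(-z) = 1 - |a|² = |b|²` (`dF_mul_dF_neg`).
With `c = ab/|a|`, so `|c| = |b|`, the vectors `u(-z) = p(-z)⁻¹ (-cz, i d(-z))` and
`J u(z) = p(z)⁻¹ (i d(z), conj (cz))` are therefore proportional, with factor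
`κ = i c z p(z) / (p(-z) d(z))`, and `|κ| = 1` because
`|b|² p(z)² = |b|² (|b|² + d(z)²) = d(z)² (d(-z)² + |b|²) = d(z)² p(-z)²`.
The expression `⟨φ, v⟩⟨v, ψ⟩` does not change when `v` is multiplied by a phase.
-/

open Filter Topology Asymptotics MeasureTheory

noncomputable section

/-- One step of the (column-decomposition) quantum walk `U` on functions `ℤ → ℂ²`:
`(Uf)(x) = P f(x+1) + Q f(x-1)` with `P = [[a,0],[-conj b,0]]`, `Q = [[0,b],[0,conj a]]`. -/
def qwStep (a b : ℂ) (f : ℤ → ℂ × ℂ) : ℤ → ℂ × ℂ := fun x =>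
  (a * (f (x + 1)).1 + b * (f (x - 1)).2,
   -(starRingEnd ℂ) b * (f (x + 1)).1 + (starRingEnd ℂ) a * (f (x - 1)).2)

/-- `δ₀ ⊗ φ : ℤ → ℂ²`. -/
def qwDelta (φ : ℂ × ℂ) : ℤ → ℂ × ℂ := fun x => if x = 0 then φ else 0

/-- Squared norm of a vector in `ℂ²`. -/
def nsq (u : ℂ × ℂ) : ℝ := ‖u.1‖ ^ 2 + ‖u.2‖ ^ 2

/-- Transition probability `p_n(φ; y) = ‖(Uⁿ(δ₀ ⊗ φ))(y)‖²`. -/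
def qwP (a b : ℂ) (φ : ℂ × ℂ) (n : ℕ) (y : ℤ) : ℝ :=
  nsq (((qwStep a b)^[n] (qwDelta φ)) y)

/-- `λ_A(φ) = |φ₂|² − |φ₁|² + (1/|a|²)(ab conj(φ₁)φ₂ + conj(ab) φ₁ conj(φ₂))` (a real number). -/
def lamA (a b : ℂ) (φ : ℂ × ℂ) : ℝ :=
  ‖φ.2‖ ^ 2 - ‖φ.1‖ ^ 2 +
    (a * b * (starRingEnd ℂ) φ.1 * φ.2 +
      (starRingEnd ℂ) a * (starRingEnd ℂ) b * φ.1 * (starRingEnd ℂ) φ.2).re / ‖a‖ ^ 2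

/-- `μ(t) = arccos(|a| cos t)`. -/
def muF (a : ℂ) (t : ℝ) : ℝ := Real.arccos (‖a‖ * Real.cos t)

/-- `t(η) = arcsin(|b|η/(|a|√(1 − η²)))`. -/
def tF (a b : ℂ) (η : ℝ) : ℝ := Real.arcsin (‖b‖ * η / (‖a‖ * Real.sqrt (1 - η ^ 2)))

/-- `θ(η) = 2μ(t(η)) − 2η t(η)`. -/
def thetaF (a b : ℂ) (η : ℝ) : ℝ := 2 * muF a (tF a b η) - 2 * η * tF a b η

/-- The standard inner product on `ℂ²`, conjugate-linear in the second argument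
(the convention of the paper): `⟨u, v⟩ = u₁ conj(v₁) + u₂ conj(v₂)`. -/
def innC (u v : ℂ × ℂ) : ℂ :=
  u.1 * (starRingEnd ℂ) v.1 + u.2 * (starRingEnd ℂ) v.2

/-- `φ̃(z) = (z + z⁻¹)/2`; on the unit circle this is real (`= Re z`). -/
def phit (z : ℂ) : ℝ := ((z + z⁻¹) / 2).re

/-- The eigenvalue `λ(z) = |a|φ̃(z) + i√(1 − |a|²φ̃(z)²)` of `A(ωz)`, for `z ∈ S¹`. -/
def lamS (a : ℂ) (z : ℂ) : ℂ :=
  ((‖a‖ * phit z : ℝ) : ℂ) +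
    Complex.I * ((Real.sqrt (1 - ‖a‖ ^ 2 * phit z ^ 2) : ℝ) : ℂ)

/-- The normalizing factor `p(z) = √(|b|² + |λ(z) − |a| conj z|²)`. -/
def pnormF (a b : ℂ) (z : ℂ) : ℝ :=
  Real.sqrt (‖b‖ ^ 2 + ‖lamS a z - (‖a‖ : ℂ) * (starRingEnd ℂ) z‖ ^ 2)

/-- The unit eigenvector `u(z) = (1/p(z)) ((ab/|a|)z, λ(z) − |a| conj z)ᵀ` of `A(ωz)`. -/
def uvec (a b : ℂ) (z : ℂ) : ℂ × ℂ :=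
  (((pnormF a b z : ℝ) : ℂ)⁻¹ * (a * b / (‖a‖ : ℂ) * z),
   ((pnormF a b z : ℝ) : ℂ)⁻¹ * (lamS a z - (‖a‖ : ℂ) * (starRingEnd ℂ) z))

/-- `Jψ = (−conj ψ₂, conj ψ₁)ᵀ`. -/
def Jmap (ψ : ℂ × ℂ) : ℂ × ℂ := (-(starRingEnd ℂ) ψ.2, (starRingEnd ℂ) ψ.1)

/-- `f_ψ(z) = ⟨φ, u(z)⟩⟨u(z), ψ⟩`. -/
def fpsi (a b : ℂ) (φ ψ : ℂ × ℂ) (z : ℂ) : ℂ :=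
  innC φ (uvec a b z) * innC (uvec a b z) ψ

/-- `g_ψ(z) = ⟨φ, Ju(z)⟩⟨Ju(z), ψ⟩`. -/
def gpsi (a b : ℂ) (φ ψ : ℂ × ℂ) (z : ℂ) : ℂ :=
  innC φ (Jmap (uvec a b z)) * innC (Jmap (uvec a b z)) ψ

/-- `d(z) = √(1 - |a|² φ̃(z)²) + |a| Im z`, the imaginary part of `λ(z) - |a| conj z`. -/
def dF (a z : ℂ) : ℝ := Real.sqrt (1 - ‖a‖ ^ 2 * phit z ^ 2) + ‖a‖ * z.im

lemma re_sq_add_im_sq {z : ℂ} (hz : ‖z‖ = 1) : z.re ^ 2 + z.im ^ 2 = 1 := by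
  have h := Complex.sq_norm z
  rw [hz, Complex.normSq_apply] at h
  linarith

lemma phit_eq {z : ℂ} (hz : ‖z‖ = 1) : phit z = z.re := by
  rw [phit, Complex.inv_eq_conj hz, Complex.add_conj]
  simp

lemma lamS_sub {a z : ℂ} (hz : ‖z‖ = 1) :
    lamS a z - (‖a‖ : ℂ) * (starRingEnd ℂ) z = Complex.I * (dF a z : ℂ) := by
  simp only [lamS, dF, phit_eq hz]
  apply Complex.ext <;> simp

lemma dF_mul_dF_neg {a b z : ℂ} (hab1 : ‖a‖ ^ 2 + ‖b‖ ^ 2 = 1) (hz : ‖z‖ = 1) :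
    dF a z * dF a (-z) = ‖b‖ ^ 2 := by
  have hz' : ‖-z‖ = 1 := by rwa [norm_neg]
  have hri := re_sq_add_im_sq hz
  have hnn : 0 ≤ 1 - ‖a‖ ^ 2 * z.re ^ 2 := by
    nlinarith [sq_nonneg (‖a‖ * z.im), sq_nonneg ‖b‖]
  simp only [dF, phit_eq hz, phit_eq hz', Complex.neg_re, Complex.neg_im, neg_sq]
  linear_combination Real.sq_sqrt hnn - hab1 - ‖a‖ ^ 2 * hri

lemma pnormF_sq {a b z : ℂ} (hz : ‖z‖ = 1) :
    pnormF a b z ^ 2 = ‖b‖ ^ 2 + dF a z ^ 2 := by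
  rw [pnormF, Real.sq_sqrt (by positivity), lamS_sub hz]
  simp

lemma innC_mul_innC_phase {κ : ℂ} (hκ : κ * (starRingEnd ℂ) κ = 1) (φ ψ v : ℂ × ℂ) :
    innC φ (κ * v.1, κ * v.2) * innC (κ * v.1, κ * v.2) ψ = innC φ v * innC v ψ := by
  simp only [innC, map_mul]
  linear_combination (φ.1 * (starRingEnd ℂ) v.1 + φ.2 * (starRingEnd ℂ) v.2) *
    (v.1 * (starRingEnd ℂ) ψ.1 + v.2 * (starRingEnd ℂ) ψ.2) * hκ

/-- `u(-z)` is a phase times `J u(z)`. -/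
lemma uvec_neg {a b z : ℂ} (hab1 : ‖a‖ ^ 2 + ‖b‖ ^ 2 = 1) (hab : a * b ≠ 0) (hz : ‖z‖ = 1) :
    ∃ κ : ℂ, κ * (starRingEnd ℂ) κ = 1 ∧
      uvec a b (-z) = (κ * (Jmap (uvec a b z)).1, κ * (Jmap (uvec a b z)).2) := by
  have hz' : ‖-z‖ = 1 := by rwa [norm_neg]
  have hb : 0 < ‖b‖ ^ 2 := by
    have := norm_pos_iff.2 (right_ne_zero_of_mul hab)
    positivity
  have ha : (‖a‖ : ℂ) ≠ 0 := by
    exact_mod_cast (norm_pos_iff.2 (left_ne_zero_of_mul hab)).ne'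
  have hdd := dF_mul_dF_neg hab1 hz
  have hp := pnormF_sq (a := a) (b := b) hz
  have hp' := pnormF_sq (a := a) (b := b) hz'
  have hd0 : (dF a z : ℂ) ≠ 0 := by
    have : dF a z ≠ 0 := by
      rintro h
      rw [h, zero_mul] at hdd
      exact hb.ne hdd
    exact_mod_cast this
  have hp0 : (pnormF a b z : ℂ) ≠ 0 := by
    have : pnormF a b z ≠ 0 := by
      rintro h
      rw [h] at hp
      nlinarith [sq_nonneg (dF a z)]
    exact_mod_cast this
  have hp0' : (pnormF a b (-z) : ℂ) ≠ 0 := by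
    have : pnormF a b (-z) ≠ 0 := by
      rintro h
      rw [h] at hp'
      nlinarith [sq_nonneg (dF a (-z))]
    exact_mod_cast this
  have hpp : ‖b‖ ^ 2 * pnormF a b z ^ 2 = dF a z ^ 2 * pnormF a b (-z) ^ 2 := by
    rw [hp, hp', ← hdd]
    ring
  have hppC : (‖b‖ : ℂ) ^ 2 * (pnormF a b z : ℂ) ^ 2
      = (dF a z : ℂ) ^ 2 * (pnormF a b (-z) : ℂ) ^ 2 := by exact_mod_cast hpp
  have hddC : (dF a z : ℂ) * (dF a (-z) : ℂ) = (‖b‖ : ℂ) ^ 2 := by exact_mod_cast hdd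
  obtain ⟨c, hc⟩ : ∃ c, c = a * b / (‖a‖ : ℂ) * z := ⟨_, rfl⟩
  have hcc : c * (starRingEnd ℂ) c = (‖b‖ : ℂ) ^ 2 := by
    have hcn : ‖c‖ = ‖b‖ := by
      have : ‖a‖ ≠ 0 := by exact_mod_cast ha
      rw [hc]
      simp [hz, this]
    rw [Complex.mul_conj', hcn]
  have hu : uvec a b z = ((pnormF a b z : ℂ)⁻¹ * c,
      (pnormF a b z : ℂ)⁻¹ * (Complex.I * (dF a z : ℂ))) := by
    rw [uvec, lamS_sub hz, hc]
  have hu' : uvec a b (-z) = ((pnormF a b (-z) : ℂ)⁻¹ * (-c),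
      (pnormF a b (-z) : ℂ)⁻¹ * (Complex.I * (dF a (-z) : ℂ))) := by
    rw [uvec, lamS_sub hz', hc, mul_neg]
  refine ⟨Complex.I * c * pnormF a b z / (pnormF a b (-z) * dF a z), ?_, ?_⟩
  · simp only [map_mul, map_div₀, Complex.conj_I, Complex.conj_ofReal]
    field_simp
    rw [Complex.I_sq]
    linear_combination (pnormF a b z : ℂ) ^ 2 * hcc + hppC
  · rw [hu, hu']
    simp only [Jmap, map_mul, map_inv₀, Complex.conj_I, Complex.conj_ofReal]
    refine Prod.ext ?_ ?_
    · field_simp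
      rw [Complex.I_sq]
      ring
    · field_simp
      linear_combination hddC - hcc

/-- Lemma `GandF`: `f_ψ(−z) = g_ψ(z)` for every `z ∈ S¹` and every `ψ ∈ ℂ²`. -/
theorem stmt7 (a b : ℂ) (hab1 : ‖a‖ ^ 2 + ‖b‖ ^ 2 = 1) (hab : a * b ≠ 0)
    (φ : ℂ × ℂ) (hφ : nsq φ = 1) :
    ∀ z : ℂ, ‖z‖ = 1 → ∀ ψ : ℂ × ℂ, fpsi a b φ ψ (-z) = gpsi a b φ ψ z := by
  intro z hz ψ
  obtain ⟨κ, hκ, hu⟩ := uvec_neg hab1 hab hz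
  rw [fpsi, gpsi, hu, innC_mul_innC_phase hκ]
end
end

section
/- Let 0 < α < |a|. Then for every ψ ∈ ℂ² with ‖ψ‖ = 1, uniformly over integers y with |y/n| ≤ α and writing ξₙ = y/n, one has ⟨Uⁿ(δ₀ ⊗ φ), δ_y ⊗ ψ⟩_{ℓ²} = (1 + (−1)^{n+y}) ω^{−y} √(|b| / (2π n (1 − ξₙ²)√(|a|² − ξₙ²))) · { e^{i n[μ(t(ξₙ)) − ξₙ t(ξₙ)] + πi/4} f_ψ(e^{i t(ξₙ)}) + e^{−i n[μ(t(ξₙ)) − ξₙ t(ξₙ)] − πi/4} g_ψ(e^{−i t(ξₙ)}) + O(1/n) } as n → ∞. -/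
/-!
In Fourier variables the walk multiplies by the matrix `A(ωe^{it})`, whose eigenvalues are
`e^{±iμ(t)}` with `cos μ(t) = |a| cos t`. Expanding in spectral projections (`vhat_eigen`) writes
the amplitude as a sum of two oscillatory integrals over a period. The shift `t ↦ t + π` sends
`e^{iμ}` to `-e^{-iμ}` and exchanges the projections (`HC_add_pi`), so the second integral is
`(-1)^{n+y}` times the first: this is the parity factor, and only
`J = ∫ e^{in(μ(t) - ξt)} H(t) dt` with `H = ⟨Πφ, ψ⟩` remains (`amp_eq`).

Since `1 - |a|² cos² w` avoids the negative axis near the real line, `μ` and `H` extend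
holomorphically to a strip `|Im w| < δ`. The phase `μ(t) - ξt` has two stationary points per period,
`t₀ = t(ξ)` and `π - t₀`, where `μ'' = ±m` with `m = (1 - ξ²)√(|a|² - ξ²)/|b|` (`tF_facts`). The
period interval is deformed (`contour_deform`) into two segments through these points in the
steepest-descent directions `1 + i` and `1 - i`, joined by horizontal segments above the
axis where `μ' > ξ` and below it where `μ' < ξ`.

* On the horizontal segments `|μ' - ξ|` is bounded below, because `μ'` is an increasing function of
  `sin t`; hence the integrand is exponentially small (`VR_gap`, `horizontal_bound`).
* On the tilted segments the integrand is `e^{n(-ms² + O(s³))}` times a smooth factor, and Laplace's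
  method gives the Gaussian value with error `O(n^{-3/2})`: the corrections of relative order
  `n^{-1/2}` are odd in `s` and integrate to zero (`laplace_local`, `local_contrib`).

The constants depend only on a lower bound for `cos t₀`, which `|ξ| ≤ α < |a|` provides; this is the
uniformity. Together these give `osc_integral`. Finally `H` is `f_ψ(e^{it₀})` at `t₀` and
`g_ψ(e^{-it₀})` at `π - t₀` (`fpsi_exp`, `gpsi_exp`), and the directions
`1 ± i = √2 e^{±πi/4}` produce the phases `e^{±πi/4}`.
-/

open Filter Topology Asymptotics MeasureTheory

noncomputable section

/-! ### Taylor remainders and contour deformation in a strip -/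

/-- The difference quotient of a bounded holomorphic function at the centre of a disc is holomorphic,
with a bound from the Schwarz lemma. -/
theorem exists_holo_quot {f : ℂ → ℂ} {c : ℂ} {R B : ℝ} (hR : 0 < R)
    (hf : DifferentiableOn ℂ f (Metric.ball c R)) (hB : ∀ w ∈ Metric.ball c R, ‖f w‖ ≤ B) :
    ∃ g : ℂ → ℂ, DifferentiableOn ℂ g (Metric.ball c R) ∧
      (∀ w, f w = f c + (w - c) * g w) ∧
      (∀ w ∈ Metric.ball c R, ‖g w‖ ≤ 2 * B / R) ∧ g c = deriv f c := by
  refine ⟨dslope f c, ?_, ?_, ?_, ?_⟩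
  · exact (Complex.differentiableOn_dslope (Metric.ball_mem_nhds c hR)).2 hf
  · intro w
    have := sub_smul_dslope f c w
    rw [smul_eq_mul] at this
    rw [this]; ring
  · intro w hw
    refine Complex.norm_dslope_le_div_of_mapsTo_ball hf (fun z hz => ?_) hw
    rw [Metric.mem_closedBall, dist_eq_norm]
    calc ‖f z - f c‖ ≤ ‖f z‖ + ‖f c‖ := norm_sub_le _ _
      _ ≤ B + B := add_le_add (hB z hz) (hB c (Metric.mem_ball_self hR))
      _ = 2 * B := by ring
  · exact dslope_same f c

/-- Second-order Taylor expansion with holomorphic, explicitly bounded remainder quotient: three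
iterations of `exists_holo_quot`. -/
theorem exists_taylor_two {f f' : ℂ → ℂ} {c f2 : ℂ} {R B : ℝ} (hR : 0 < R)
    (hf : ∀ w ∈ Metric.ball c R, HasDerivAt f (f' w) w)
    (hf2 : HasDerivAt f' f2 c) (hB : ∀ w ∈ Metric.ball c R, ‖f w‖ ≤ B) :
    ∃ g : ℂ → ℂ, DifferentiableOn ℂ g (Metric.ball c R) ∧
      (∀ w, f w = f c + f' c * (w - c) + f2 / 2 * (w - c) ^ 2 + (w - c) ^ 3 * g w) ∧
      (∀ w ∈ Metric.ball c R, ‖g w‖ ≤ 8 * B / R ^ 3) := by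
  have hc : c ∈ Metric.ball c R := Metric.mem_ball_self hR
  have hnhds : Metric.ball c R ∈ 𝓝 c := Metric.ball_mem_nhds c hR
  obtain ⟨g1, hg1, e1, b1, v1⟩ := exists_holo_quot hR
    (fun w hw => (hf w hw).differentiableAt.differentiableWithinAt) hB
  obtain ⟨g2, hg2, e2, b2, v2⟩ := exists_holo_quot hR hg1 b1
  obtain ⟨g3, hg3, e3, b3, v3⟩ := exists_holo_quot hR hg2 b2
  have v1' : g1 c = f' c := by rw [v1, (hf c hc).deriv]
  have v2' : g2 c = f2 / 2 := by
    -- differentiate `f w = f c + f' c (w - c) + (w - c)² g₂ w` once away from `c`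
    have hder : ∀ w ∈ Metric.ball c R,
        f' w = f' c + (w - c) * (2 * g2 w + (w - c) * deriv g2 w) := by
      intro w hw
      have hg2w : HasDerivAt g2 (deriv g2 w) w :=
        (hg2.differentiableAt (Metric.isOpen_ball.mem_nhds hw)).hasDerivAt
      have hid : HasDerivAt (fun z : ℂ => z - c) 1 w := (hasDerivAt_id w).sub_const c
      have h1 : HasDerivAt (fun z => f c + (z - c) * (g1 c + (z - c) * g2 z))
          (1 * (g1 c + (w - c) * g2 w) + (w - c) * (1 * g2 w + (w - c) * deriv g2 w)) w :=
        (hid.mul ((hid.mul hg2w).const_add (g1 c))).const_add (f c)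
      have h2 : (fun z => f c + (z - c) * (g1 c + (z - c) * g2 z)) = f := by
        funext z; rw [← e2, ← e1]
      rw [h2] at h1
      rw [(hf w hw).unique h1, v1']; ring
    have hg2' : DifferentiableOn ℂ (deriv g2) (Metric.ball c R) :=
      hg2.deriv Metric.isOpen_ball
    have hd : HasDerivAt (fun w => f' c + (w - c) * (2 * g2 w + (w - c) * deriv g2 w))
        (2 * g2 c) c := by
      have hid : HasDerivAt (fun z : ℂ => z - c) 1 c := (hasDerivAt_id c).sub_const c
      have hg2c : HasDerivAt g2 (deriv g2 c) c := (hg2.differentiableAt hnhds).hasDerivAt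
      have hg2c' : HasDerivAt (deriv g2) (deriv (deriv g2) c) c :=
        (hg2'.differentiableAt hnhds).hasDerivAt
      have := (hid.mul ((hg2c.const_mul 2).add (hid.mul hg2c'))).const_add (f' c)
      refine this.congr_deriv ?_
      simp
    have hd' : HasDerivAt f' (2 * g2 c) c := by
      refine hd.congr_of_eventuallyEq ?_
      filter_upwards [hnhds] with w hw using hder w hw
    have := hf2.unique hd'
    rw [this]; ring
  refine ⟨g3, hg3, ?_, ?_⟩
  · intro w
    rw [e1 w, e2 w, e3 w, v1', v2']; ring
  · intro w hw
    refine (b3 w hw).trans (le_of_eq ?_)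
    field_simp; ring

/-- The open horizontal strip of half-width `δ` around the real axis. -/
def strip (δ : ℝ) : Set ℂ := {w | |w.im| < δ}

theorem isOpen_strip (δ : ℝ) : IsOpen (strip δ) :=
  isOpen_lt (by fun_prop) continuous_const

theorem convex_strip (δ : ℝ) : Convex ℝ (strip δ) := by
  have : strip δ = Complex.imLm ⁻¹' Metric.ball 0 δ := by
    ext w; simp [strip]
  rw [this]
  exact (convex_ball _ _).linear_preimage _

/-- Holomorphic functions on a strip have primitives, since the strip is star-shaped about `0`: the
primitive is `z ↦ ∫₀¹ z F(sz) ds`. -/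
theorem exists_primitive_strip {δ : ℝ} {F : ℂ → ℂ}
    (hF : DifferentiableOn ℂ F (strip δ)) :
    ∃ G : ℂ → ℂ, ∀ z ∈ strip δ, HasDerivAt G (F z) z := by
  have hF' : DifferentiableOn ℂ (deriv F) (strip δ) := hF.deriv (isOpen_strip δ)
  have hmem : ∀ z ∈ strip δ, ∀ s ∈ Set.Icc (0:ℝ) 1, (s : ℂ) * z ∈ strip δ := by
    intro z hz s hs
    simp only [strip, Set.mem_ofPred_eq] at hz ⊢
    simp only [Complex.mul_im, Complex.ofReal_re, Complex.ofReal_im, zero_mul, add_zero]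
    rw [abs_mul, abs_of_nonneg hs.1]
    nlinarith [abs_nonneg z.im, hs.2]
  refine ⟨fun z => z * ∫ s in (0:ℝ)..1, F (s * z), fun z hz => ?_⟩
  obtain ⟨ε, hε, hball⟩ := Metric.nhds_basis_closedBall.mem_iff.1 ((isOpen_strip δ).mem_nhds hz)
  -- the derivative of `F` is bounded on the compact cone over `closedBall z ε`
  have hcont : ContinuousOn (fun p : ℝ × ℂ => deriv F (p.1 * p.2))
      (Set.Icc (0:ℝ) 1 ×ˢ Metric.closedBall z ε) := by
    refine hF'.continuousOn.comp (by fun_prop) ?_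
    rintro ⟨s, w⟩ ⟨hs, hw⟩
    exact hmem w (hball hw) s hs
  obtain ⟨B, hB⟩ := (isCompact_Icc.prod (isCompact_closedBall z ε)).exists_bound_of_continuousOn hcont
  have hline : ∀ w ∈ strip δ, ContinuousOn (fun s : ℝ => F (s * w)) (Set.uIcc (0:ℝ) 1) := by
    intro w hw
    refine hF.continuousOn.comp (by fun_prop) ?_
    intro s hs
    rw [Set.uIcc_of_le zero_le_one] at hs
    exact hmem w hw s hs
  have hline' : ContinuousOn (fun s : ℝ => (s : ℂ) * deriv F (s * z)) (Set.uIcc (0:ℝ) 1) := by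
    refine ContinuousOn.mul (by fun_prop) (hF'.continuousOn.comp (by fun_prop) ?_)
    intro s hs
    rw [Set.uIcc_of_le zero_le_one] at hs
    exact hmem z hz s hs
  have hdF : ∀ w ∈ strip δ, ∀ s ∈ Set.Icc (0:ℝ) 1, HasDerivAt F (deriv F (s * w)) (s * w) :=
    fun w hw s hs =>
      (hF.differentiableAt ((isOpen_strip δ).mem_nhds (hmem w hw s hs))).hasDerivAt
  have key := (intervalIntegral.hasDerivAt_integral_of_dominated_loc_of_deriv_le
    (μ := volume) (a := 0) (b := 1) (F := fun (w : ℂ) (s : ℝ) => F (s * w))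
    (F' := fun (w : ℂ) (s : ℝ) => s * deriv F (s * w)) (x₀ := z) (s := Metric.closedBall z ε)
    (bound := fun _ => B) (Metric.closedBall_mem_nhds z hε) ?_ ?_ ?_ ?_ ?_ ?_).2
  · have hprod := (hasDerivAt_id z).mul key
    have hid : HasDerivAt (fun w : ℂ => w * ∫ s in (0:ℝ)..1, F (s * w))
        (1 * (∫ s in (0:ℝ)..1, F (s * z)) + z * ∫ s in (0:ℝ)..1, (s : ℂ) * deriv F (s * z)) z := hprod
    refine hid.congr_deriv ?_
    have hftc : ∫ s in (0:ℝ)..1, (F (s * z) + z * (s * deriv F (s * z))) = F z := by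
      have := intervalIntegral.integral_eq_sub_of_hasDerivAt (a := 0) (b := 1)
        (f := fun s : ℝ => (s : ℂ) * F (s * z))
        (f' := fun s : ℝ => F (s * z) + z * (s * deriv F (s * z))) ?_ ?_
      · rw [this]; simp
      · intro s hs
        rw [Set.uIcc_of_le zero_le_one] at hs
        have h1 : HasDerivAt (fun s : ℝ => (s : ℂ)) 1 s := Complex.ofRealCLM.hasDerivAt
        have h2 : HasDerivAt (fun s : ℝ => (s : ℂ) * z) (1 * z) s := h1.mul_const z
        have h3 : HasDerivAt (fun s : ℝ => F (s * z)) (deriv F (s * z) * (1 * z)) s :=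
          (hdF z hz s hs).comp (𝕜 := ℝ) (𝕜' := ℂ) s h2
        refine (h1.mul h3).congr_deriv ?_
        ring
      · exact ((hline z hz).add (continuousOn_const.mul hline')).intervalIntegrable
    rw [one_mul, ← intervalIntegral.integral_const_mul, ← intervalIntegral.integral_add]
    · exact hftc
    · exact (hline z hz).intervalIntegrable
    · exact (continuousOn_const.mul hline').intervalIntegrable
  · filter_upwards [(isOpen_strip δ).mem_nhds hz] with w hw
    exact (intervalIntegrable_iff.1 (hline w hw).intervalIntegrable).aestronglyMeasurable
  · exact (hline z hz).intervalIntegrable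
  · exact (intervalIntegrable_iff.1 hline'.intervalIntegrable).aestronglyMeasurable
  · refine Eventually.of_forall fun s hs w hw => ?_
    rw [Set.uIoc_of_le zero_le_one] at hs
    have hs' : s ∈ Set.Icc (0:ℝ) 1 := ⟨hs.1.le, hs.2⟩
    have := hB (s, w) ⟨hs', hw⟩
    rw [norm_mul, Complex.norm_real, Real.norm_eq_abs, abs_of_nonneg hs'.1]
    simp only at this
    nlinarith [norm_nonneg (deriv F (s * w)), hs'.2]
  · exact intervalIntegrable_const
  · refine Eventually.of_forall fun s hs w hw => ?_
    rw [Set.uIoc_of_le zero_le_one] at hs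
    have hs' : s ∈ Set.Icc (0:ℝ) 1 := ⟨hs.1.le, hs.2⟩
    have h2 : HasDerivAt (fun w : ℂ => (s : ℂ) * w) (s * 1) w := (hasDerivAt_id w).const_mul _
    refine ((hdF w (hball hw) s hs').comp w h2).congr_deriv ?_
    ring

/-- Fundamental theorem of calculus along the segment `s ↦ c + ds` inside the strip. -/
theorem integral_segment {δ : ℝ} {F G : ℂ → ℂ} (hF : DifferentiableOn ℂ F (strip δ))
    (hG : ∀ z ∈ strip δ, HasDerivAt G (F z) z) (c d : ℂ) {p q : ℝ} (hpq : p ≤ q)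
    (hmem : ∀ s ∈ Set.Icc p q, c + d * s ∈ strip δ) :
    d * ∫ s in p..q, F (c + d * s) = G (c + d * q) - G (c + d * p) := by
  rw [← intervalIntegral.integral_const_mul]
  refine intervalIntegral.integral_eq_sub_of_hasDerivAt (f := fun s : ℝ => G (c + d * s)) ?_ ?_
  · intro s hs
    rw [Set.uIcc_of_le hpq] at hs
    have h1 : HasDerivAt (fun s : ℝ => (s : ℂ)) 1 s := Complex.ofRealCLM.hasDerivAt
    have h2 : HasDerivAt (fun s : ℝ => c + d * (s : ℂ)) (d * 1) s := (h1.const_mul d).const_add c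
    refine ((hG _ (hmem s hs)).comp (𝕜 := ℝ) (𝕜' := ℂ) s h2).congr_deriv ?_
    ring
  · refine ContinuousOn.intervalIntegrable ?_
    rw [Set.uIcc_of_le hpq]
    exact continuousOn_const.mul (hF.continuousOn.comp (by fun_prop) hmem)

/-- A period of a periodic holomorphic `F` may be integrated along the polygon that crosses
the axis at `t₀` in direction `1 + i`, runs at height `ρ`, crosses back at `π - t₀` in direction
`1 - i`, and runs at height `-ρ` up to the translate of its starting point. -/
theorem contour_deform {δ ρ t0 : ℝ} (hρ : 0 < ρ) (hρδ : ρ < δ) (h1 : t0 + ρ ≤ Real.pi / 2)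
    (h2 : -(Real.pi / 2) ≤ t0 - ρ) {F : ℂ → ℂ} (hF : DifferentiableOn ℂ F (strip δ))
    (hper : ∀ w, F (w + 2 * Real.pi) = F w) :
    ∫ t in (-Real.pi)..Real.pi, F t =
      (1 + Complex.I) * (∫ s in (-ρ)..ρ, F (t0 + (1 + Complex.I) * s)) +
      (∫ t in (t0 + ρ)..(Real.pi - t0 - ρ), F (ρ * Complex.I + t)) +
      (1 - Complex.I) * (∫ s in (-ρ)..ρ, F ((Real.pi - t0 : ℝ) + (1 - Complex.I) * s)) +
      (∫ t in (Real.pi - t0 + ρ)..(2 * Real.pi + t0 - ρ), F (-ρ * Complex.I + t)) := by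
  have hδ : 0 < δ := hρ.trans hρδ
  obtain ⟨G, hG⟩ := exists_primitive_strip hF
  have s0 := integral_segment hF hG 0 1 (p := -Real.pi) (q := Real.pi)
    (by linarith [Real.pi_pos]) (by intro s _; simpa [strip] using hδ)
  have s1 := integral_segment hF hG t0 (1 + Complex.I) (p := -ρ) (q := ρ) (by linarith)
    (by
      intro s hs
      simp only [strip, Set.mem_ofPred_eq]
      simp
      rw [abs_lt]; constructor <;> linarith [hs.1, hs.2])
  have s2 := integral_segment hF hG (ρ * Complex.I) 1 (p := t0 + ρ) (q := Real.pi - t0 - ρ)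
    (by linarith) (by
      intro s hs
      simp only [strip, Set.mem_ofPred_eq]
      simp
      rw [abs_lt]; constructor <;> linarith [hs.1, hs.2])
  have s3 := integral_segment hF hG (Real.pi - t0 : ℝ) (1 - Complex.I) (p := -ρ) (q := ρ)
    (by linarith)
    (by
      intro s hs
      simp only [strip, Set.mem_ofPred_eq]
      simp
      rw [abs_lt]; constructor <;> linarith [hs.1, hs.2])
  have s4 := integral_segment hF hG (-ρ * Complex.I) 1 (p := Real.pi - t0 + ρ)
    (q := 2 * Real.pi + t0 - ρ)
    (by linarith) (by
      intro s hs
      simp only [strip, Set.mem_ofPred_eq]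
      simp
      rw [abs_lt]; constructor <;> linarith [hs.1, hs.2])
  -- the increment of the primitive over one period does not depend on the base point
  have hconst : ∀ z ∈ strip δ, G (z + 2 * Real.pi) - G z = G (-Real.pi + 2 * Real.pi) - G (-Real.pi) := by
    have hmem2 : ∀ z ∈ strip δ, z + 2 * Real.pi ∈ strip δ := by
      intro z hz
      simpa [strip] using hz
    have hder : ∀ z ∈ strip δ, HasDerivAt (fun z => G (z + 2 * Real.pi) - G z) 0 z := by
      intro z hz
      have := ((hG _ (hmem2 z hz)).comp_add_const z (2 * Real.pi)).sub (hG z hz)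
      refine this.congr_deriv ?_
      rw [hper]; ring
    intro z hz
    refine (isOpen_strip δ).is_const_of_deriv_eq_zero (convex_strip δ).isPreconnected
      (f := fun z => G (z + 2 * Real.pi) - G z)
      (fun w hw => (hder w hw).differentiableAt.differentiableWithinAt)
      (fun w hw => (hder w hw).deriv) hz ?_
    simpa [strip] using hδ
  have hp := hconst (t0 + (1 + Complex.I) * (-ρ : ℝ)) (by
      simp only [strip, Set.mem_ofPred_eq]
      simp
      rw [abs_lt]; constructor <;> linarith)
  simp only [zero_add, one_mul] at s0 s1 s2 s3 s4
  rw [s0, s1, s2, s3, s4]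
  have e1 : (ρ * Complex.I + (t0 + ρ : ℝ) : ℂ) = t0 + (1 + Complex.I) * ρ := by push_cast; ring
  have e2 : (ρ * Complex.I + (Real.pi - t0 - ρ : ℝ) : ℂ)
      = (Real.pi - t0 : ℝ) + (1 - Complex.I) * (-ρ : ℝ) := by push_cast; ring
  have e3 : (-ρ * Complex.I + (Real.pi - t0 + ρ : ℝ) : ℂ)
      = (Real.pi - t0 : ℝ) + (1 - Complex.I) * ρ := by push_cast; ring
  have e4 : (-ρ * Complex.I + (2 * Real.pi + t0 - ρ : ℝ) : ℂ)
      = t0 + (1 + Complex.I) * (-ρ : ℝ) + 2 * Real.pi := by push_cast; ring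
  have e5 : (-Real.pi + 2 * Real.pi : ℂ) = Real.pi := by ring
  rw [e1, e2, e3, e4]
  rw [e5] at hp
  push_cast at hp ⊢
  linear_combination -hp

/-! ### Laplace's method with uniform error -/

/-- A polynomial factor costs half of the exponential rate. -/
theorem poly_exp_bound {K m0 x : ℝ} (hK : 0 ≤ K) (hm0 : 0 < m0) (hx : 0 ≤ x) :
    Real.exp (-(m0 / 2) * x) * (K ^ 3 * x ^ 3 + 2 * K ^ 2 * x ^ 2 + K * x) ≤
      (384 * K ^ 3 / m0 ^ 3 + 64 * K ^ 2 / m0 ^ 2 + 4 * K / m0) * Real.exp (-(m0 / 4) * x) := by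
  obtain ⟨u, rfl⟩ : ∃ u, x = 4 * u / m0 := ⟨m0 * x / 4, by field_simp⟩
  have hu : 0 ≤ u := by
    by_contra h
    push Not at h
    have : 4 * u / m0 < 0 := div_neg_of_neg_of_pos (by linarith) hm0
    linarith
  have e1 : -(m0 / 2) * (4 * u / m0) = -u + -u := by field_simp; ring
  have e2 : -(m0 / 4) * (4 * u / m0) = -u := by field_simp
  rw [e1, e2, Real.exp_add]
  have b1 := Real.pow_div_factorial_le_exp u hu 1
  have b2 := Real.pow_div_factorial_le_exp u hu 2
  have b3 := Real.pow_div_factorial_le_exp u hu 3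
  norm_num [Nat.factorial] at b1 b2 b3
  have hE : Real.exp (-u) * Real.exp u = 1 := by rw [← Real.exp_add]; simp
  have hp := Real.exp_pos (-u)
  have hq := Real.exp_pos u
  have key : K ^ 3 * (4 * u / m0) ^ 3 + 2 * K ^ 2 * (4 * u / m0) ^ 2 + K * (4 * u / m0) ≤
      (384 * K ^ 3 / m0 ^ 3 + 64 * K ^ 2 / m0 ^ 2 + 4 * K / m0) * Real.exp u := by
    have c1 : K ^ 3 * (4 * u / m0) ^ 3 ≤ 384 * K ^ 3 / m0 ^ 3 * Real.exp u := by
      have : K ^ 3 * (4 * u / m0) ^ 3 = 384 * K ^ 3 / m0 ^ 3 * (u ^ 3 / 6) := by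
        field_simp; ring
      rw [this]; gcongr
    have c2 : 2 * K ^ 2 * (4 * u / m0) ^ 2 ≤ 64 * K ^ 2 / m0 ^ 2 * Real.exp u := by
      have : 2 * K ^ 2 * (4 * u / m0) ^ 2 = 64 * K ^ 2 / m0 ^ 2 * (u ^ 2 / 2) := by
        field_simp; ring
      rw [this]; gcongr
    have c3 : K * (4 * u / m0) ≤ 4 * K / m0 * Real.exp u := by
      have : K * (4 * u / m0) = 4 * K / m0 * u := by
        field_simp
      rw [this]; gcongr
    linarith
  calc _ ≤ Real.exp (-u) * Real.exp (-u) *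
        ((384 * K ^ 3 / m0 ^ 3 + 64 * K ^ 2 / m0 ^ 2 + 4 * K / m0) * Real.exp u) := by gcongr
    _ = (384 * K ^ 3 / m0 ^ 3 + 64 * K ^ 2 / m0 ^ 2 + 4 * K / m0) * Real.exp (-u) *
        (Real.exp (-u) * Real.exp u) := by ring
    _ = _ := by rw [hE, mul_one]

/-- Pointwise Laplace estimate: `e^{N(-ms² + s³g)} h` agrees with the Gaussian times
`h₀ + (odd polynomial in s)` up to `O(1/N)` times a wider Gaussian. -/
theorem laplace_pointwise {m0 K m N s : ℝ} (hm0 : 0 < m0) (hK : 0 ≤ K) (hm : m0 ≤ m)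
    (hN : 1 ≤ N) (hs : K * |s| ≤ m0 / 2) {g h g0 h0 h1 : ℂ}
    (hg : ‖g‖ ≤ K) (hh : ‖h‖ ≤ K) (hgg : ‖g - g0‖ ≤ K * |s|) (hg0 : ‖g0‖ ≤ K)
    (hh0 : ‖h - h0‖ ≤ K * |s|) (hh1 : ‖h - h0 - h1 * s‖ ≤ K * s ^ 2) :
    ‖Complex.exp (N * (-m * s ^ 2 + s ^ 3 * g)) * h -
        (Real.exp (-(N * m) * s ^ 2) : ℝ) * (h0 + (h1 * s + N * g0 * h0 * s ^ 3))‖ ≤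
      (384 * K ^ 3 / m0 ^ 3 + 64 * K ^ 2 / m0 ^ 2 + 4 * K / m0) / N *
        Real.exp (-(m0 / 4 * N) * s ^ 2) := by
  have hN0 : 0 < N := by linarith
  set x : ℝ := N * s ^ 2 with hx
  have hx0 : 0 ≤ x := by positivity
  set z : ℂ := N * (s ^ 3 * g) with hz
  have habs : |s| ^ 2 = s ^ 2 := sq_abs s
  have hs3 : ‖(s : ℂ) ^ 3‖ = |s| ^ 3 := by rw [norm_pow, Complex.norm_real, Real.norm_eq_abs]
  have hNn : ‖(N : ℂ)‖ = N := by rw [Complex.norm_real, Real.norm_eq_abs, abs_of_pos hN0]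
  have hz1 : ‖z‖ ≤ x * (K * |s|) := by
    rw [hz, norm_mul, norm_mul, hs3, hNn, hx]
    calc N * (|s| ^ 3 * ‖g‖) ≤ N * (|s| ^ 3 * K) := by gcongr
      _ = N * |s| ^ 2 * (K * |s|) := by ring
      _ = _ := by rw [habs]
  have hz2 : ‖z‖ ≤ m0 / 2 * x := hz1.trans (by nlinarith)
  have hexp : ‖Complex.exp z - 1 - z‖ ≤ ‖z‖ ^ 2 * Real.exp ‖z‖ := by
    have := Complex.norm_exp_sub_sum_le_norm_mul_exp z 2
    simpa [Finset.sum_range_succ, sub_sub] using this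
  have hzsq : ‖z‖ ^ 2 ≤ K ^ 2 * x ^ 2 * s ^ 2 := by
    calc ‖z‖ ^ 2 ≤ (x * (K * |s|)) ^ 2 := by gcongr
      _ = K ^ 2 * x ^ 2 * |s| ^ 2 := by ring
      _ = _ := by rw [habs]
  have hsplit : Complex.exp (N * (-m * s ^ 2 + s ^ 3 * g)) * h -
        (Real.exp (-(N * m) * s ^ 2) : ℝ) * (h0 + (h1 * s + N * g0 * h0 * s ^ 3)) =
      (Real.exp (-(N * m) * s ^ 2) : ℝ) *
        ((Complex.exp z - 1 - z) * h + (h - h0 - h1 * s) +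
          N * s ^ 3 * ((g - g0) * h + g0 * (h - h0))) := by
    have : (N * (-m * s ^ 2 + s ^ 3 * g) : ℂ) = ((-(N * m) * s ^ 2 : ℝ) : ℂ) + z := by
      rw [hz]; push_cast; ring
    rw [this, Complex.exp_add, Complex.ofReal_exp, hz]
    ring
  have hR : ‖(Complex.exp z - 1 - z) * h + (h - h0 - h1 * s) +
          N * s ^ 3 * ((g - g0) * h + g0 * (h - h0))‖ ≤
        s ^ 2 * (K ^ 3 * x ^ 2 + 2 * K ^ 2 * x + K) * Real.exp (m0 / 2 * x) := by
    have hE1 : 1 ≤ Real.exp (m0 / 2 * x) := Real.one_le_exp (by positivity)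
    have t1 : ‖(Complex.exp z - 1 - z) * h‖ ≤ s ^ 2 * (K ^ 3 * x ^ 2) * Real.exp (m0 / 2 * x) := by
      rw [norm_mul]
      calc ‖Complex.exp z - 1 - z‖ * ‖h‖
          ≤ (K ^ 2 * x ^ 2 * s ^ 2 * Real.exp (m0 / 2 * x)) * K := by
            refine mul_le_mul (hexp.trans ?_) hh (norm_nonneg _) (by positivity)
            gcongr
        _ = _ := by ring
    have t2 : ‖h - h0 - h1 * s‖ ≤ s ^ 2 * K * Real.exp (m0 / 2 * x) := by
      refine hh1.trans ?_
      have : 0 ≤ s ^ 2 * K := by positivity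
      nlinarith
    have t3 : ‖(N * s ^ 3 * ((g - g0) * h + g0 * (h - h0)) : ℂ)‖ ≤
        s ^ 2 * (2 * K ^ 2 * x) * Real.exp (m0 / 2 * x) := by
      have i1 : ‖(g - g0) * h + g0 * (h - h0)‖ ≤ 2 * K ^ 2 * |s| := by
        refine (norm_add_le _ _).trans ?_
        rw [norm_mul, norm_mul]
        have j1 : ‖g - g0‖ * ‖h‖ ≤ (K * |s|) * K :=
          mul_le_mul hgg hh (norm_nonneg _) (by positivity)
        have j2 : ‖g0‖ * ‖h - h0‖ ≤ K * (K * |s|) :=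
          mul_le_mul hg0 hh0 (norm_nonneg _) hK
        linarith
      rw [norm_mul, norm_mul, hs3, hNn]
      calc N * |s| ^ 3 * ‖(g - g0) * h + g0 * (h - h0)‖ ≤ N * |s| ^ 3 * (2 * K ^ 2 * |s|) := by
            gcongr
        _ = |s| ^ 2 * (2 * K ^ 2 * (N * |s| ^ 2)) * 1 := by ring
        _ ≤ |s| ^ 2 * (2 * K ^ 2 * (N * |s| ^ 2)) * Real.exp (m0 / 2 * x) := by gcongr
        _ = _ := by rw [habs]
    refine (norm_add₃_le).trans ?_
    calc _ ≤ _ := add_le_add (add_le_add t1 t2) t3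
      _ = _ := by ring
  rw [hsplit, norm_mul, Complex.norm_real, Real.norm_eq_abs, abs_of_pos (Real.exp_pos _)]
  have hexm : Real.exp (-(N * m) * s ^ 2) ≤ Real.exp (-m0 * x) := by
    apply Real.exp_le_exp.2
    have : -(N * m) * s ^ 2 = -m * x := by rw [hx]; ring
    rw [this]; nlinarith
  calc _ ≤ Real.exp (-m0 * x) *
        (s ^ 2 * (K ^ 3 * x ^ 2 + 2 * K ^ 2 * x + K) * Real.exp (m0 / 2 * x)) := by gcongr
    _ = (Real.exp (-m0 * x) * Real.exp (m0 / 2 * x)) * (K ^ 3 * x ^ 3 + 2 * K ^ 2 * x ^ 2 + K * x) / N := by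
        rw [hx]; field_simp
    _ = Real.exp (-(m0 / 2) * x) * (K ^ 3 * x ^ 3 + 2 * K ^ 2 * x ^ 2 + K * x) / N := by
        rw [← Real.exp_add]; congr 3; ring
    _ ≤ ((384 * K ^ 3 / m0 ^ 3 + 64 * K ^ 2 / m0 ^ 2 + 4 * K / m0) * Real.exp (-(m0 / 4) * x)) / N := by
        exact div_le_div_of_nonneg_right (poly_exp_bound hK hm0 hx0) hN0.le
    _ = _ := by
        rw [hx]
        have : -(m0 / 4) * (N * s ^ 2) = -(m0 / 4 * N) * s ^ 2 := by ring
        rw [this]; ring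

/-- The Gaussian integral over `[-ρ, ρ]` differs from the full one by `O(N^{-3/2})`. -/
theorem gauss_tail {m0 ρ m N : ℝ} (hm0 : 0 < m0) (hρ : 0 < ρ) (hm : m0 ≤ m) (hN : 1 ≤ N) :
    |(∫ s in (-ρ)..ρ, Real.exp (-(N * m) * s ^ 2)) - √(Real.pi / (N * m))| ≤
      4 / (m0 * ρ ^ 2) / N * √(Real.pi / (m0 / 4 * N)) := by
  have hN0 : 0 < N := by linarith
  have hmp : 0 < m := by linarith
  have hint := integrable_exp_neg_mul_sq (b := N * m) (by positivity)
  have hint2 := integrable_exp_neg_mul_sq (b := m0 / 4 * N) (by positivity)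
  rw [← integral_gaussian, ← integral_gaussian,
    ← integral_add_compl (measurableSet_Ioc (a := -ρ) (b := ρ)) hint,
    intervalIntegral.integral_of_le (by linarith), sub_add_cancel_left, abs_neg,
    abs_of_nonneg (integral_nonneg fun _ => (Real.exp_pos _).le), ← integral_const_mul]
  calc _ ≤ ∫ s in (Set.Ioc (-ρ) ρ)ᶜ, 4 / (m0 * ρ ^ 2) / N * Real.exp (-(m0 / 4 * N) * s ^ 2) := by
        refine setIntegral_mono_on hint.integrableOn (hint2.const_mul _).integrableOn
          measurableSet_Ioc.compl ?_
        intro s hs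
        have hs' : ρ ^ 2 ≤ s ^ 2 := by
          by_contra hc
          push Not at hc
          have := abs_lt_of_sq_lt_sq hc hρ.le
          rw [abs_lt] at this
          exact hs ⟨this.1, this.2.le⟩
        have h1 : (m0 / 4 * N * s ^ 2) ≤ Real.exp (m0 / 4 * N * s ^ 2) := by
          linarith [Real.add_one_le_exp (m0 / 4 * N * s ^ 2)]
        have h2 : Real.exp (-(N * m) * s ^ 2) ≤
            Real.exp (-(m0 / 4 * N) * s ^ 2) * Real.exp (-(m0 / 4 * N * s ^ 2)) := by
          rw [← Real.exp_add]
          apply Real.exp_le_exp.2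
          have : 0 ≤ N * s ^ 2 := by positivity
          nlinarith
        have h3 : Real.exp (-(m0 / 4 * N * s ^ 2)) ≤ 4 / (m0 * ρ ^ 2) / N := by
          rw [Real.exp_neg, inv_eq_one_div, div_div, div_le_div_iff₀ (Real.exp_pos _) (by positivity)]
          have : m0 * ρ ^ 2 * N ≤ m0 * s ^ 2 * N := by gcongr
          nlinarith
        calc _ ≤ _ := h2
          _ ≤ Real.exp (-(m0 / 4 * N) * s ^ 2) * (4 / (m0 * ρ ^ 2) / N) := by gcongr
          _ = _ := by ring
    _ ≤ _ := by
        refine setIntegral_le_integral (hint2.const_mul _) ?_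
        exact Eventually.of_forall fun s => by positivity

/-- Laplace's method on `[-ρ, ρ]` with error `O(N^{-3/2})`. The constant depends on `m₀`, `K` and
`ρ` only, so the estimate is uniform over all exponents and amplitudes obeying the bounds. -/
theorem laplace_local {m0 K ρ : ℝ} (hm0 : 0 < m0) (hK : 0 ≤ K) (hρ : 0 < ρ)
    (hsmall : K * ρ ≤ m0 / 2) :
    ∃ C : ℝ, 0 ≤ C ∧ ∀ m N : ℝ, m0 ≤ m → 1 ≤ N → ∀ (X g h : ℝ → ℂ) (g0 h0 h1 : ℂ),
      ContinuousOn X (Set.Icc (-ρ) ρ) → ‖g0‖ ≤ K → ‖h0‖ ≤ K →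
      (∀ s ∈ Set.Icc (-ρ) ρ,
        X s = Complex.exp (N * (-m * s ^ 2 + s ^ 3 * g s)) * h s ∧ ‖g s‖ ≤ K ∧ ‖h s‖ ≤ K ∧
        ‖g s - g0‖ ≤ K * |s| ∧ ‖h s - h0‖ ≤ K * |s| ∧ ‖h s - h0 - h1 * s‖ ≤ K * s ^ 2) →
      ‖(∫ s in (-ρ)..ρ, X s) - (√(Real.pi / (N * m)) : ℝ) * h0‖ ≤ C / (N * √N) := by
  set A := 384 * K ^ 3 / m0 ^ 3 + 64 * K ^ 2 / m0 ^ 2 + 4 * K / m0 with hA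
  have hA0 : 0 ≤ A := by positivity
  refine ⟨(A + 4 / (m0 * ρ ^ 2) * K) * √(Real.pi / (m0 / 4)), by positivity, ?_⟩
  intro m N hm hN X g h g0 h0 h1 hX hg0 hh0 hyp
  have hN0 : 0 < N := by linarith
  have hρ' : -ρ ≤ ρ := by linarith
  set E : ℝ → ℝ := fun s => Real.exp (-(N * m) * s ^ 2) with hE
  have hEc : Continuous E := by fun_prop
  set O : ℝ → ℂ := fun s => (E s : ℂ) * (h1 * s + N * g0 * h0 * s ^ 3) with hO
  have hOc : Continuous O := by fun_prop
  have hXi : IntervalIntegrable X volume (-ρ) ρ := by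
    apply ContinuousOn.intervalIntegrable; rwa [Set.uIcc_of_le hρ']
  have hodd : ∫ s in (-ρ)..ρ, O s = 0 := by
    have h1 : ∫ s in (-ρ)..ρ, O (-s) = ∫ s in (-ρ)..ρ, O s := by simp
    have h2 : ∀ s, O (-s) = - O s := by
      intro s; simp only [hO, hE]; push_cast; rw [neg_sq]; ring
    simp only [h2, intervalIntegral.integral_neg] at h1
    exact self_eq_neg.1 h1.symm
  have hD : ‖∫ s in (-ρ)..ρ, (X s - (E s : ℂ) * (h0 + (h1 * s + N * g0 * h0 * s ^ 3)))‖ ≤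
      A / N * √(Real.pi / (m0 / 4 * N)) := by
    have hint2 := integrable_exp_neg_mul_sq (b := m0 / 4 * N) (by positivity)
    calc _ ≤ ∫ s in (-ρ)..ρ, A / N * Real.exp (-(m0 / 4 * N) * s ^ 2) := by
          refine intervalIntegral.norm_integral_le_of_norm_le hρ' ?_
            (by apply Continuous.intervalIntegrable; fun_prop)
          refine Eventually.of_forall fun s hs => ?_
          have hs' : s ∈ Set.Icc (-ρ) ρ := ⟨hs.1.le, hs.2⟩
          obtain ⟨e, b1, b2, b3, b4, b5⟩ := hyp s hs'
          rw [e]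
          refine laplace_pointwise hm0 hK hm hN ?_ b1 b2 b3 hg0 b4 b5
          have : |s| ≤ ρ := abs_le.2 hs'
          nlinarith
      _ ≤ ∫ s, A / N * Real.exp (-(m0 / 4 * N) * s ^ 2) := by
          rw [intervalIntegral.integral_of_le hρ']
          exact setIntegral_le_integral (hint2.const_mul _)
            (Eventually.of_forall fun s => by positivity)
      _ = _ := by rw [integral_const_mul, integral_gaussian]
  have hsum : (∫ s in (-ρ)..ρ, X s) =
      (∫ s in (-ρ)..ρ, (X s - (E s : ℂ) * (h0 + (h1 * s + N * g0 * h0 * s ^ 3)))) +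
        ((∫ s in (-ρ)..ρ, E s : ℝ) : ℂ) * h0 := by
    have e1 : ∀ s, X s - (E s : ℂ) * (h0 + (h1 * s + N * g0 * h0 * s ^ 3)) =
        X s - ((E s : ℂ) * h0 + O s) := by intro s; simp only [hO]; ring
    simp only [e1]
    rw [intervalIntegral.integral_sub hXi (by apply Continuous.intervalIntegrable; fun_prop),
      intervalIntegral.integral_add (by apply Continuous.intervalIntegrable; fun_prop)
        (hOc.intervalIntegrable _ _), hodd, intervalIntegral.integral_mul_const,
      intervalIntegral.integral_ofReal]
    ring
  have hsq : √(Real.pi / (m0 / 4 * N)) = √(Real.pi / (m0 / 4)) / √N := by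
    rw [← div_div, Real.sqrt_div (by positivity)]
  rw [hsum, add_sub_assoc, ← sub_mul, ← Complex.ofReal_sub]
  calc _ ≤ A / N * √(Real.pi / (m0 / 4 * N)) +
        4 / (m0 * ρ ^ 2) / N * √(Real.pi / (m0 / 4 * N)) * K := by
        refine (norm_add_le _ _).trans (add_le_add hD ?_)
        rw [norm_mul, Complex.norm_real, Real.norm_eq_abs]
        exact mul_le_mul (gauss_tail hm0 hρ hm hN) hh0 (norm_nonneg _) (by positivity)
    _ = _ := by
        rw [hsq]; field_simp

/-! ### The phase function in a strip -/

/-- `1 - r² cos² w`, whose square root is `sin μ(w)`. -/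
def zetaC (r : ℝ) (w : ℂ) : ℂ := 1 - (r : ℂ) ^ 2 * Complex.cos w ^ 2

/-- The principal square root of `1 - r² cos² w`: the holomorphic extension of `sin μ(t)`. -/
def SC (r : ℝ) (w : ℂ) : ℂ := Complex.exp (Complex.log (zetaC r w) / 2)

/-- The holomorphic extension of the eigenvalue `λ(e^{it}) = e^{iμ(t)}`. -/
def LC (r : ℝ) (w : ℂ) : ℂ := r * Complex.cos w + Complex.I * SC r w

/-- The holomorphic extension of `μ`. -/
def MC (r : ℝ) (w : ℂ) : ℂ := -Complex.I * Complex.log (LC r w)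

/-- The holomorphic extension of the group velocity `μ'`. -/
def VC (r : ℝ) (w : ℂ) : ℂ := r * Complex.sin w / SC r w

/-- A width for the strip on which `1 - r² cos² w` stays in the right half-plane. -/
theorem exists_delta {r : ℝ} (hr1 : r ^ 2 < 1) :
    ∃ δ : ℝ, 0 < δ ∧ δ ≤ 1 ∧ r ^ 2 * (Real.cosh δ ^ 2 + Real.sinh δ ^ 2) < 1 := by
  have hc : Continuous fun δ : ℝ => r ^ 2 * (Real.cosh δ ^ 2 + Real.sinh δ ^ 2) := by fun_prop
  have h0 : (fun δ : ℝ => r ^ 2 * (Real.cosh δ ^ 2 + Real.sinh δ ^ 2)) 0 < 1 := by simpa using hr1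
  have hev := hc.continuousAt.eventually_lt (continuousAt_const (y := (1:ℝ))) h0
  obtain ⟨ε, hε, hball⟩ := Metric.eventually_nhds_iff.1 hev
  refine ⟨min (ε / 2) 1, by positivity, min_le_right _ _, hball ?_⟩
  rw [Real.dist_eq, sub_zero, abs_of_pos (by positivity)]
  exact (min_le_left _ _).trans_lt (by linarith)

section strip
variable {r δ : ℝ} {w : ℂ}

theorem zeta_re_gt (hδ : r ^ 2 * (Real.cosh δ ^ 2 + Real.sinh δ ^ 2) < 1) (hw : w ∈ strip δ) :
    r ^ 2 * Real.sinh w.im ^ 2 < (zetaC r w).re := by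
  have hw' : |w.im| < δ := hw
  have hc : Real.cosh w.im ≤ Real.cosh δ := by
    rw [Real.cosh_le_cosh]; exact hw'.le.trans (le_abs_self _)
  have hc1 := Real.one_le_cosh w.im
  have hcs := Real.cosh_sq w.im
  have hcsδ := Real.cosh_sq δ
  have hre : (Complex.cos w ^ 2).re =
      (Real.cos w.re * Real.cosh w.im) ^ 2 - (Real.sin w.re * Real.sinh w.im) ^ 2 := by
    rw [Complex.cos_eq w, ← Complex.ofReal_cos, ← Complex.ofReal_cosh, ← Complex.ofReal_sin,
      ← Complex.ofReal_sinh]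
    simp [pow_two]
    rfl
  have hle : (Complex.cos w ^ 2).re ≤ Real.cosh w.im ^ 2 := by
    rw [hre]
    have := Real.sin_sq_add_cos_sq w.re
    have h1 : Real.cos w.re ^ 2 ≤ 1 := by nlinarith [sq_nonneg (Real.sin w.re)]
    nlinarith [sq_nonneg (Real.sin w.re * Real.sinh w.im), sq_nonneg (Real.cosh w.im)]
  have hz : (zetaC r w).re = 1 - r ^ 2 * (Complex.cos w ^ 2).re := by
    simp [zetaC, ← Complex.ofReal_pow]
  rw [hz]
  have h2 : Real.cosh w.im ^ 2 ≤ Real.cosh δ ^ 2 := by gcongr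
  have h3 : r ^ 2 * (Real.cosh w.im ^ 2 + Real.sinh w.im ^ 2) < 1 := by
    refine lt_of_le_of_lt ?_ hδ
    apply mul_le_mul_of_nonneg_left _ (sq_nonneg r)
    nlinarith
  nlinarith [sq_nonneg r, mul_le_mul_of_nonneg_left hle (sq_nonneg r)]

theorem zeta_re_pos (hδ : r ^ 2 * (Real.cosh δ ^ 2 + Real.sinh δ ^ 2) < 1) (hw : w ∈ strip δ) :
    0 < (zetaC r w).re :=
  lt_of_le_of_lt (by positivity) (zeta_re_gt hδ hw)

theorem zeta_ne (hδ : r ^ 2 * (Real.cosh δ ^ 2 + Real.sinh δ ^ 2) < 1) (hw : w ∈ strip δ) :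
    zetaC r w ≠ 0 := by
  intro h
  have := zeta_re_pos hδ hw
  rw [h] at this
  simp at this

theorem SC_ne (r : ℝ) (w : ℂ) : SC r w ≠ 0 := Complex.exp_ne_zero _

theorem SC_sq (hδ : r ^ 2 * (Real.cosh δ ^ 2 + Real.sinh δ ^ 2) < 1) (hw : w ∈ strip δ) :
    SC r w ^ 2 = zetaC r w := by
  rw [SC, ← Complex.exp_nat_mul]
  push_cast
  rw [mul_div_cancel₀ _ two_ne_zero, Complex.exp_log (zeta_ne hδ hw)]

theorem SC_re_pos (hδ : r ^ 2 * (Real.cosh δ ^ 2 + Real.sinh δ ^ 2) < 1) (hw : w ∈ strip δ) :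
    0 < (SC r w).re := by
  rw [SC, Complex.exp_re]
  refine mul_pos (Real.exp_pos _) (Real.cos_pos_of_mem_Ioo ?_)
  have him : (Complex.log (zetaC r w) / 2).im = (zetaC r w).arg / 2 := by
    rw [show (2 : ℂ) = ((2 : ℝ) : ℂ) by norm_num, Complex.div_ofReal_im, Complex.log_im]
  rw [him]
  have := Complex.abs_arg_lt_pi_div_two_iff.2 (Or.inl (zeta_re_pos hδ hw))
  rw [abs_lt] at this
  constructor <;> linarith [this.1, this.2, Real.pi_pos]

/-- `LC` maps the strip to the upper half-plane, because `Re √ζ` exceeds `|Im (r cos w)|` by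
`zeta_re_gt`; hence its principal logarithm is holomorphic there. -/
theorem LC_im_pos (hδ : r ^ 2 * (Real.cosh δ ^ 2 + Real.sinh δ ^ 2) < 1)
    (hw : w ∈ strip δ) : 0 < (LC r w).im := by
  have h1 : (LC r w).im = (SC r w).re - r * (Real.sin w.re * Real.sinh w.im) := by
    have : (Complex.cos w).im = -(Real.sin w.re * Real.sinh w.im) := by
      rw [Complex.cos_eq w, ← Complex.ofReal_cos, ← Complex.ofReal_cosh, ← Complex.ofReal_sin,
        ← Complex.ofReal_sinh]
      simp
      rfl
    rw [LC]
    simp [this]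
    ring
  have h2 : r ^ 2 * Real.sinh w.im ^ 2 < (SC r w).re ^ 2 := by
    have := zeta_re_gt hδ hw
    rw [← SC_sq hδ hw] at this
    have h3 : (SC r w ^ 2).re = (SC r w).re ^ 2 - (SC r w).im ^ 2 := by
      simp [pow_two]
    nlinarith [sq_nonneg (SC r w).im]
  have h3 := SC_re_pos hδ hw
  have h4 : |r * Real.sinh w.im| < (SC r w).re := by
    apply abs_lt_of_sq_lt_sq _ h3.le
    nlinarith
  have h5 : r * (Real.sin w.re * Real.sinh w.im) ≤ |r * Real.sinh w.im| := by
    calc r * (Real.sin w.re * Real.sinh w.im) = Real.sin w.re * (r * Real.sinh w.im) := by ring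
      _ ≤ |Real.sin w.re * (r * Real.sinh w.im)| := le_abs_self _
      _ = |Real.sin w.re| * |r * Real.sinh w.im| := abs_mul _ _
      _ ≤ 1 * |r * Real.sinh w.im| := by gcongr; exact Real.abs_sin_le_one _
      _ = _ := one_mul _
  rw [h1]; linarith

/-- The values of the eigenvalue at the two saddles, in terms of `μ`. -/
theorem LC_mul (hδ : r ^ 2 * (Real.cosh δ ^ 2 + Real.sinh δ ^ 2) < 1)
    (hw : w ∈ strip δ) : LC r w * (r * Complex.cos w - Complex.I * SC r w) = 1 := by
  have := SC_sq hδ hw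
  rw [zetaC] at this
  rw [LC]
  linear_combination this - (SC r w) ^ 2 * Complex.I_sq

theorem LC_slit (hδ : r ^ 2 * (Real.cosh δ ^ 2 + Real.sinh δ ^ 2) < 1)
    (hw : w ∈ strip δ) : LC r w ∈ Complex.slitPlane :=
  Or.inr (LC_im_pos hδ hw).ne'

theorem exp_MC (hδ : r ^ 2 * (Real.cosh δ ^ 2 + Real.sinh δ ^ 2) < 1)
    (hw : w ∈ strip δ) : Complex.exp (Complex.I * MC r w) = LC r w := by
  have : Complex.I * MC r w = Complex.log (LC r w) := by
    rw [MC]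
    linear_combination (- Complex.log (LC r w)) * Complex.I_sq
  rw [this, Complex.exp_log (Complex.slitPlane_ne_zero (LC_slit hδ hw))]

theorem hasDerivAt_SC (hδ : r ^ 2 * (Real.cosh δ ^ 2 + Real.sinh δ ^ 2) < 1)
    (hw : w ∈ strip δ) :
    HasDerivAt (SC r) ((r : ℂ) ^ 2 * Complex.cos w * Complex.sin w / SC r w) w := by
  have h1 : HasDerivAt (zetaC r) (2 * (r : ℂ) ^ 2 * Complex.cos w * Complex.sin w) w := by
    have := (((Complex.hasDerivAt_cos w).pow 2).const_mul ((r : ℂ) ^ 2)).const_sub 1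
    refine this.congr_deriv ?_
    push_cast; ring
  have h2 := ((h1.clog (Or.inl (zeta_re_pos hδ hw))).div_const 2).cexp
  refine h2.congr_deriv ?_
  change SC r w * _ = _
  rw [← SC_sq hδ hw]
  field_simp [SC_ne r w]

theorem hasDerivAt_LC (hδ : r ^ 2 * (Real.cosh δ ^ 2 + Real.sinh δ ^ 2) < 1)
    (hw : w ∈ strip δ) : HasDerivAt (LC r) (Complex.I * VC r w * LC r w) w := by
  have := ((Complex.hasDerivAt_cos w).const_mul (r : ℂ)).add
    ((hasDerivAt_SC hδ hw).const_mul Complex.I)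
  refine this.congr_deriv ?_
  have hS := SC_ne r w
  rw [VC, LC]
  field_simp
  linear_combination (- SC r w * r * Complex.sin w) * Complex.I_sq

theorem hasDerivAt_MC (hδ : r ^ 2 * (Real.cosh δ ^ 2 + Real.sinh δ ^ 2) < 1)
    (hw : w ∈ strip δ) : HasDerivAt (MC r) (VC r w) w := by
  have := ((hasDerivAt_LC hδ hw).clog (LC_slit hδ hw)).const_mul (-Complex.I)
  refine this.congr_deriv ?_
  have hL := Complex.slitPlane_ne_zero (LC_slit hδ hw)
  field_simp
  linear_combination (- VC r w) * Complex.I_sq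

theorem hasDerivAt_VC {s : ℝ} (hrs : r ^ 2 + s ^ 2 = 1)
    (hδ : r ^ 2 * (Real.cosh δ ^ 2 + Real.sinh δ ^ 2) < 1)
    (hw : w ∈ strip δ) :
    HasDerivAt (VC r) (r * (s : ℂ) ^ 2 * Complex.cos w / SC r w ^ 3) w := by
  have := ((Complex.hasDerivAt_sin w).const_mul (r : ℂ)).div (hasDerivAt_SC hδ hw) (SC_ne r w)
  refine this.congr_deriv ?_
  have hS := SC_ne r w
  have hsq := SC_sq hδ hw
  rw [zetaC] at hsq
  have hcs := Complex.sin_sq_add_cos_sq w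
  have hrs' : (r : ℂ) ^ 2 + (s : ℂ) ^ 2 = 1 := by exact_mod_cast hrs
  field_simp
  linear_combination (r * Complex.cos w) * (hsq - (r : ℂ) ^ 2 * hcs - hrs')

theorem SC_periodic (r : ℝ) (w : ℂ) : SC r (w + 2 * Real.pi) = SC r w := by
  rw [SC, zetaC, Complex.cos_add_two_pi]; rfl

theorem LC_periodic (r : ℝ) (w : ℂ) : LC r (w + 2 * Real.pi) = LC r w := by
  rw [LC, SC_periodic, Complex.cos_add_two_pi]; rfl

theorem SC_add_pi (r : ℝ) (w : ℂ) : SC r (w + Real.pi) = SC r w := by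
  rw [SC, zetaC, Complex.cos_add_pi, neg_sq]; rfl

theorem SC_pi_sub (r : ℝ) (w : ℂ) : SC r (Real.pi - w) = SC r w := by
  rw [SC, zetaC, Complex.cos_pi_sub, neg_sq]; rfl

end strip

/-- `√(1 - r² cos² t)`, the value of `SC r` on the real axis. -/
def SR (r t : ℝ) : ℝ := √(1 - r ^ 2 * Real.cos t ^ 2)

theorem one_sub_ge {r s : ℝ} (hrs : r ^ 2 + s ^ 2 = 1) (t : ℝ) :
    s ^ 2 ≤ 1 - r ^ 2 * Real.cos t ^ 2 := by
  nlinarith [Real.sin_sq_add_cos_sq t, sq_nonneg (r * Real.sin t)]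

theorem SR_sq {r s : ℝ} (hrs : r ^ 2 + s ^ 2 = 1) (t : ℝ) :
    SR r t ^ 2 = 1 - r ^ 2 * Real.cos t ^ 2 :=
  Real.sq_sqrt ((sq_nonneg s).trans (one_sub_ge hrs t))

theorem SR_ge {r s : ℝ} (hrs : r ^ 2 + s ^ 2 = 1) (t : ℝ) : s ≤ SR r t :=
  Real.le_sqrt_of_sq_le (one_sub_ge hrs t)

theorem SR_le (r t : ℝ) : SR r t ≤ 1 := by
  rw [SR, Real.sqrt_le_left (by norm_num), one_pow]
  nlinarith [sq_nonneg (r * Real.cos t)]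

theorem SC_real {r s : ℝ} (hs : 0 < s) (hrs : r ^ 2 + s ^ 2 = 1) (t : ℝ) :
    SC r t = (SR r t : ℂ) := by
  have hpos : 0 < 1 - r ^ 2 * Real.cos t ^ 2 :=
    lt_of_lt_of_le (by positivity) (one_sub_ge hrs t)
  have hz : zetaC r t = ((1 - r ^ 2 * Real.cos t ^ 2 : ℝ) : ℂ) := by
    rw [zetaC]; push_cast; ring
  rw [SC, hz, ← Complex.ofReal_log hpos.le, SR]
  have : ((Real.log (1 - r ^ 2 * Real.cos t ^ 2) : ℝ) / 2 : ℂ)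
      = ((Real.log (1 - r ^ 2 * Real.cos t ^ 2) / 2 : ℝ) : ℂ) := by push_cast; ring
  rw [this, ← Complex.ofReal_exp, Real.sqrt_eq_rpow, Real.rpow_def_of_pos hpos]
  congr 2
  ring

theorem LC_norm_real {r s : ℝ} (hs : 0 < s) (hrs : r ^ 2 + s ^ 2 = 1) (t : ℝ) :
    ‖LC r t‖ = 1 := by
  have h := SR_sq hrs t
  have : LC r t = (r * Real.cos t : ℝ) + (SR r t : ℝ) * Complex.I := by
    rw [LC, SC_real hs hrs]; push_cast; ring
  rw [this, Complex.norm_add_mul_I, h]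
  rw [show (r * Real.cos t) ^ 2 + (1 - r ^ 2 * Real.cos t ^ 2) = 1 by ring, Real.sqrt_one]

/-! ### Contributions of the pieces of the contour -/

/-- Quantitative form of `sin t > sin t₀` between `t₀` and `π - t₀`, at distance `ρ` from both ends. -/
theorem sin_gap {c0 ρ t0 t : ℝ} (hc : c0 ≤ Real.cos t0) (hρ : 0 < ρ) (hρc : ρ ≤ c0 / 2)
    (ht0 : -(Real.pi / 2) ≤ t0) (h1 : t0 + ρ ≤ t) (h2 : t ≤ Real.pi - t0 - ρ) :
    c0 * ρ / 4 ≤ Real.sin t - Real.sin t0 := by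
  have hc1 := Real.cos_le_one t0
  have hpi := Real.pi_gt_three
  have hpi4 := Real.pi_le_four
  have ha : Real.cos (Real.pi / 2 - t0 - ρ) ≤ Real.sin t := by
    rw [← Real.cos_sub_pi_div_two, ← Real.cos_abs (t - Real.pi / 2)]
    refine Real.cos_le_cos_of_nonneg_of_le_pi (abs_nonneg _) (by linarith) ?_
    rw [abs_le]; constructor <;> linarith
  have hb : Real.cos (Real.pi / 2 - t0 - ρ) =
      Real.sin t0 * Real.cos ρ + Real.cos t0 * Real.sin ρ := by
    rw [sub_sub, Real.cos_pi_div_two_sub, Real.sin_add]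
  have hs : 1 / 2 * ρ ≤ Real.sin ρ := by
    refine le_trans ?_ (Real.mul_le_sin hρ.le (by linarith))
    refine mul_le_mul_of_nonneg_right ?_ hρ.le
    rw [div_le_div_iff₀ (by norm_num) (by linarith)]; linarith
  have hcos := Real.one_sub_sq_div_two_le_cos (x := ρ)
  have hs1 := Real.sin_le_one t0
  have hcl := Real.cos_le_one ρ
  have h3 : Real.sin t0 * (1 - Real.cos ρ) ≤ ρ ^ 2 / 2 := by
    nlinarith
  have h4 : c0 * (1 / 2 * ρ) ≤ Real.cos t0 * Real.sin ρ :=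
    mul_le_mul hc hs (by positivity) (by linarith)
  nlinarith

/-- As a function of `x = sin t`, the velocity is `rx / √(s² + r²x²)`, with derivative at least
`rs²`. -/
theorem vel_gap {r s x x' : ℝ} (hr : 0 < r) (hs : 0 < s) (hrs : r ^ 2 + s ^ 2 = 1)
    (hx : -1 ≤ x) (hxx : x ≤ x') (hx' : x' ≤ 1) :
    r * s ^ 2 * (x' - x) ≤ r * x' / √(s ^ 2 + r ^ 2 * x' ^ 2) - r * x / √(s ^ 2 + r ^ 2 * x ^ 2) := by
  have hpos : ∀ x : ℝ, 0 < s ^ 2 + r ^ 2 * x ^ 2 := fun x => by positivity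
  have hder : ∀ x : ℝ, HasDerivAt (fun x => r * x / √(s ^ 2 + r ^ 2 * x ^ 2))
      (r * s ^ 2 / √(s ^ 2 + r ^ 2 * x ^ 2) ^ 3) x := by
    intro x
    have hq : 0 < √(s ^ 2 + r ^ 2 * x ^ 2) := Real.sqrt_pos.2 (hpos x)
    have h1 : HasDerivAt (fun x : ℝ => s ^ 2 + r ^ 2 * x ^ 2) (r ^ 2 * (2 * x)) x := by
      have := ((hasDerivAt_pow 2 x).const_mul (r ^ 2)).const_add (s ^ 2)
      refine this.congr_deriv ?_
      push_cast; ring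
    have h2 := ((hasDerivAt_id x).const_mul r).div (h1.sqrt (hpos x).ne') hq.ne'
    refine h2.congr_deriv ?_
    have hsq := Real.sq_sqrt (hpos x).le
    simp only [id]
    field_simp
    rw [hsq]; ring
  refine (convex_Icc (-1:ℝ) 1).mul_sub_le_image_sub_of_le_deriv
    (f := fun x => r * x / √(s ^ 2 + r ^ 2 * x ^ 2))
    (fun x _ => (hder x).continuousAt.continuousWithinAt)
    (fun x _ => (hder x).differentiableAt.differentiableWithinAt) ?_ x ⟨hx, hxx.trans hx'⟩ x'
    ⟨hx.trans hxx, hx'⟩ hxx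
  intro x hx
  rw [interior_Icc] at hx
  rw [(hder x).deriv]
  have hq : 0 < √(s ^ 2 + r ^ 2 * x ^ 2) := Real.sqrt_pos.2 (hpos x)
  have hq1 : √(s ^ 2 + r ^ 2 * x ^ 2) ≤ 1 := by
    rw [Real.sqrt_le_left (by norm_num)]
    have : x ^ 2 ≤ 1 := by nlinarith [hx.1, hx.2]
    nlinarith [sq_nonneg r]
  rw [le_div_iff₀ (by positivity)]
  exact mul_le_of_le_one_right (by positivity) (pow_le_one₀ hq.le hq1)

/-- The group velocity `μ'(t)` on the real axis. -/
def VR (r t : ℝ) : ℝ := r * Real.sin t / SR r t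

theorem VR_gap {r s t t' : ℝ} (hr : 0 < r) (hs : 0 < s) (hrs : r ^ 2 + s ^ 2 = 1)
    (h : Real.sin t ≤ Real.sin t') :
    r * s ^ 2 * (Real.sin t' - Real.sin t) ≤ VR r t' - VR r t := by
  have hS : ∀ t, SR r t = √(s ^ 2 + r ^ 2 * Real.sin t ^ 2) := by
    intro t
    rw [SR]; congr 1
    nlinarith [Real.sin_sq_add_cos_sq t]
  rw [VR, VR, hS, hS]
  exact vel_gap hr hs hrs (Real.neg_one_le_sin t) h (Real.sin_le_one t')

theorem VC_real {r s : ℝ} (hs : 0 < s) (hrs : r ^ 2 + s ^ 2 = 1) (t : ℝ) :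
    VC r t = (VR r t : ℂ) := by
  rw [VC, SC_real hs hrs, VR]; push_cast; rfl

/-- The integrand `λⁿ e^{-iyw} H(w)` of the Fourier representation, extended to complex `w`. -/
def FC (r : ℝ) (H : ℂ → ℂ) (n : ℕ) (y : ℤ) (w : ℂ) : ℂ :=
  LC r w ^ n * Complex.exp (-(Complex.I * y * w)) * H w

theorem FC_eq {r δ ξ : ℝ} (hδ : r ^ 2 * (Real.cosh δ ^ 2 + Real.sinh δ ^ 2) < 1)
    (H : ℂ → ℂ) {n : ℕ} (hn : 0 < n) {y : ℤ} (hξ : ξ = y / n) {w : ℂ} (hw : w ∈ strip δ) :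
    FC r H n y w = Complex.exp (n * (Complex.I * (MC r w - ξ * w))) * H w := by
  rw [FC, ← exp_MC hδ hw, ← Complex.exp_nat_mul, ← Complex.exp_add]
  congr 2
  have hn' : (n : ℂ) ≠ 0 := by exact_mod_cast hn.ne'
  rw [hξ]; push_cast
  field_simp
  ring

theorem MC_real_im {r s δ : ℝ} (hs : 0 < s) (hrs : r ^ 2 + s ^ 2 = 1) (hδ0 : 0 < δ)
    (hδ : r ^ 2 * (Real.cosh δ ^ 2 + Real.sinh δ ^ 2) < 1) (t : ℝ) : (MC r t).im = 0 := by
  have h1 := exp_MC hδ (w := (t : ℂ)) (by simpa [strip] using hδ0)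
  have h2 := LC_norm_real hs hrs t
  rw [← h1, Complex.norm_exp] at h2
  simpa using h2

/-- A constant dominating all the Taylor remainders used on the tilted segments, for functions
bounded by `B` on discs of radius `R`. -/
def Kbd (B R : ℝ) : ℝ :=
  8 * (8 * B / R ^ 3) + 16 * (2 * (8 * B / R ^ 3) / R) + B + 2 * (2 * B / R) +
    4 * (2 * (2 * B / R) / R)

/-- Contribution of a saddle `c` (where `μ'(c) = y/n` and `μ''(c) = m'`) along a segment in a
direction `d` for which `i d² m' / 2 = -m < 0`. -/
theorem local_contrib {r s δ B R m0 ρ : ℝ} (hs : 0 < s) (hrs : r ^ 2 + s ^ 2 = 1) (hδ0 : 0 < δ)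
    (hδ : r ^ 2 * (Real.cosh δ ^ 2 + Real.sinh δ ^ 2) < 1) {H : ℂ → ℂ}
    (hH : DifferentiableOn ℂ H (strip δ)) (hR : 0 < R) (hB0 : 0 ≤ B)
    (hB : ∀ c : ℝ, |c| ≤ 8 → ∀ w ∈ Metric.ball (c : ℂ) R,
      w ∈ strip δ ∧ ‖MC r w‖ ≤ B ∧ ‖H w‖ ≤ B)
    (hm0 : 0 < m0) (hρ : 0 < ρ) (hρR : 2 * ρ < R) (hKρ : Kbd B R * ρ ≤ m0 / 2) :
    ∃ C : ℝ, 0 ≤ C ∧ ∀ (n : ℕ) (y : ℤ) (c m m' : ℝ) (d : ℂ), 0 < n → |c| ≤ 8 →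
      VR r c = y / n → r * s ^ 2 * Real.cos c / SR r c ^ 3 = m' → m0 ≤ m →
      ‖d‖ ≤ 2 → Complex.I * d ^ 2 * m' / 2 = -m →
      ‖(∫ u in (-ρ)..ρ, FC r H n y (c + d * u)) -
        (√(Real.pi / (n * m)) : ℝ) * FC r H n y c‖ ≤ C / (n * √n) := by
  have hK0 : 0 ≤ Kbd B R := by rw [Kbd]; positivity
  obtain ⟨C, hC, hlap⟩ := laplace_local hm0 hK0 hρ hKρ
  refine ⟨C, hC, ?_⟩
  intro n y c m m' d hn hc hV hm' hm hd hdm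
  have hn1 : (1 : ℝ) ≤ n := by exact_mod_cast hn
  have hBc := hB c hc
  have hcc : (c : ℂ) ∈ Metric.ball (c : ℂ) R := Metric.mem_ball_self hR
  have hcs : (c : ℂ) ∈ strip δ := (hBc _ hcc).1
  obtain ⟨g, hg, eg, bg⟩ := exists_taylor_two hR
    (fun w hw => hasDerivAt_MC hδ (hBc w hw).1) (hasDerivAt_VC hrs hδ hcs)
    (fun w hw => (hBc w hw).2.1)
  obtain ⟨g4, -, eg4, bg4, -⟩ := exists_holo_quot hR hg bg
  obtain ⟨k1, hk1, ek1, bk1, -⟩ := exists_holo_quot hR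
    (hH.mono fun w hw => (hBc w hw).1) (fun w hw => (hBc w hw).2.2)
  obtain ⟨k2, -, ek2, bk2, -⟩ := exists_holo_quot hR hk1 bk1
  have hm'' : (r : ℂ) * s ^ 2 * Complex.cos c / SC r c ^ 3 = m' := by
    rw [SC_real hs hrs, ← hm']; push_cast; ring
  rw [hm'', VC_real hs hrs] at eg
  have hball : ∀ u ∈ Set.Icc (-ρ) ρ, (c + d * u : ℂ) ∈ Metric.ball (c : ℂ) R := by
    intro u hu
    rw [Metric.mem_ball, dist_eq_norm, add_sub_cancel_left, norm_mul, Complex.norm_real,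
      Real.norm_eq_abs]
    have : |u| ≤ ρ := abs_le.2 hu
    calc ‖d‖ * |u| ≤ 2 * ρ := by gcongr
      _ < R := hρR
  set e0 : ℂ := Complex.exp (n * (Complex.I * (MC r c - (VR r c : ℝ) * c))) with he0
  have he0n : ‖e0‖ = 1 := by
    rw [he0, Complex.norm_exp]
    have : (n * (Complex.I * (MC r c - (VR r c : ℝ) * c)) : ℂ).re = 0 := by
      have := MC_real_im hs hrs hδ0 hδ c
      simp [this]
    rw [this, Real.exp_zero]
  have hFc : FC r H n y c = e0 * H c := FC_eq hδ H hn hV hcs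
  have hFu : ∀ u ∈ Set.Icc (-ρ) ρ, FC r H n y (c + d * u) =
      e0 * (Complex.exp (((n : ℝ) : ℂ) * (-m * u ^ 2 + u ^ 3 * (Complex.I * d ^ 3 * g (c + d * u)))) *
        H (c + d * u)) := by
    intro u hu
    rw [FC_eq hδ H hn hV (hBc _ (hball u hu)).1, he0,
      ← mul_assoc (Complex.exp (n * (Complex.I * (MC r c - (VR r c : ℝ) * c)))), ← Complex.exp_add]
    congr 2
    rw [eg (c + d * u), ← hdm]
    push_cast
    ring
  have hcont : ContinuousOn (fun u : ℝ => Complex.exp (((n : ℝ) : ℂ) *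
      (-m * u ^ 2 + u ^ 3 * (Complex.I * d ^ 3 * g (c + d * u)))) * H (c + d * u))
      (Set.Icc (-ρ) ρ) := by
    have c1 : ContinuousOn (fun u : ℝ => g (c + d * u)) (Set.Icc (-ρ) ρ) :=
      hg.continuousOn.comp (by fun_prop) hball
    have c2 : ContinuousOn (fun u : ℝ => H (c + d * u)) (Set.Icc (-ρ) ρ) :=
      hH.continuousOn.comp (by fun_prop) fun u hu => (hBc _ (hball u hu)).1
    refine ContinuousOn.mul (ContinuousOn.cexp (continuousOn_const.mul (ContinuousOn.add
      (Continuous.continuousOn (by fun_prop)) (ContinuousOn.mul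
        (Continuous.continuousOn (by fun_prop)) (continuousOn_const.mul c1))))) c2
  have hIdn : ‖Complex.I * d ^ 3‖ ≤ 8 := by
    rw [norm_mul, Complex.norm_I, one_mul, norm_pow]
    calc ‖d‖ ^ 3 ≤ 2 ^ 3 := by gcongr
      _ = 8 := by norm_num
  have p1 : 0 ≤ 8 * B / R ^ 3 := by positivity
  have p2 : 0 ≤ 2 * (8 * B / R ^ 3) / R := by positivity
  have p3 : 0 ≤ 2 * B / R := by positivity
  have p4 : 0 ≤ 2 * (2 * B / R) / R := by positivity
  have hdu : ∀ u : ℝ, ‖d * u‖ ≤ 2 * |u| := by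
    intro u
    rw [norm_mul, Complex.norm_real, Real.norm_eq_abs]; gcongr
  have hIg : ∀ w ∈ Metric.ball (c : ℂ) R, ‖Complex.I * d ^ 3 * g w‖ ≤ Kbd B R := by
    intro w hw
    rw [norm_mul]
    calc _ ≤ 8 * (8 * B / R ^ 3) :=
          mul_le_mul hIdn (bg w hw) (norm_nonneg _) (by norm_num)
      _ ≤ _ := by rw [Kbd]; linarith
  have hHw : ∀ w ∈ Metric.ball (c : ℂ) R, ‖H w‖ ≤ Kbd B R := by
    intro w hw
    refine (hBc w hw).2.2.trans ?_
    rw [Kbd]; linarith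
  have hmain := hlap m n hm hn1 _ (fun u => Complex.I * d ^ 3 * g (c + d * u))
    (fun u => H (c + d * u)) (Complex.I * d ^ 3 * g c) (H c) (d * k1 c) hcont
    (hIg _ hcc) (hHw _ hcc) (by
      intro u hu
      have hbu := hball u hu
      refine ⟨rfl, hIg _ hbu, hHw _ hbu, ?_, ?_, ?_⟩
      · have e : Complex.I * d ^ 3 * g (c + d * u) - Complex.I * d ^ 3 * g c =
            Complex.I * d ^ 3 * (d * u * g4 (c + d * u)) := by
          rw [eg4 (c + d * u)]; ring
        rw [e, norm_mul (Complex.I * d ^ 3), norm_mul (d * (u : ℂ))]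
        calc _ ≤ 8 * (2 * |u| * (2 * (8 * B / R ^ 3) / R)) := by
              refine mul_le_mul hIdn ?_ (by positivity) (by norm_num)
              exact mul_le_mul (hdu u) (bg4 _ hbu) (norm_nonneg _) (by positivity)
          _ = 16 * (2 * (8 * B / R ^ 3) / R) * |u| := by ring
          _ ≤ _ := by gcongr; rw [Kbd]; linarith
      · have e : H (c + d * u) - H c = d * u * k1 (c + d * u) := by
          rw [ek1 (c + d * u)]; ring
        rw [e, norm_mul]
        calc _ ≤ 2 * |u| * (2 * B / R) :=
              mul_le_mul (hdu u) (bk1 _ hbu) (norm_nonneg _) (by positivity)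
          _ = 2 * (2 * B / R) * |u| := by ring
          _ ≤ _ := by gcongr; rw [Kbd]; linarith
      · have e : H (c + d * u) - H c - d * k1 c * u = d * u * (d * u) * k2 (c + d * u) := by
          rw [ek1 (c + d * u), ek2 (c + d * u)]; ring
        rw [e, norm_mul, norm_mul]
        calc _ ≤ 2 * |u| * (2 * |u|) * (2 * (2 * B / R) / R) := by
              refine mul_le_mul ?_ (bk2 _ hbu) (norm_nonneg _) (by positivity)
              exact mul_le_mul (hdu u) (hdu u) (norm_nonneg _) (by positivity)
          _ = 4 * (2 * (2 * B / R) / R) * |u| ^ 2 := by ring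
          _ = 4 * (2 * (2 * B / R) / R) * u ^ 2 := by rw [sq_abs]
          _ ≤ _ := by gcongr; rw [Kbd]; linarith)
  have hint : (∫ u in (-ρ)..ρ, FC r H n y (c + d * u)) = e0 * ∫ u in (-ρ)..ρ,
      Complex.exp (((n : ℝ) : ℂ) * (-m * u ^ 2 + u ^ 3 * (Complex.I * d ^ 3 * g (c + d * u)))) *
        H (c + d * u) := by
    rw [← intervalIntegral.integral_const_mul]
    refine intervalIntegral.integral_congr fun u hu => ?_
    rw [Set.uIcc_of_le (by linarith)] at hu
    exact hFu u hu
  rw [hint, hFc]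
  rw [show ∀ I' q h : ℂ, e0 * I' - q * (e0 * h) = e0 * (I' - q * h) by intros; ring, norm_mul,
    he0n, one_mul]
  exact hmain

/-- At height `σρ` above a point `t` where `σ(μ'(t) - ξ) ≥ κρ`, the integrand is exponentially small:
to first order the exponent has real part `-nσρ(μ'(t) - ξ)`, the quadratic Taylor term is real, and
the cubic one is absorbed by the smallness of `ρ`. -/
theorem horizontal_bound {r s δ B R ρ κ : ℝ} (hs : 0 < s) (hrs : r ^ 2 + s ^ 2 = 1) (hδ0 : 0 < δ)
    (hδ : r ^ 2 * (Real.cosh δ ^ 2 + Real.sinh δ ^ 2) < 1) {H : ℂ → ℂ}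
    (hR : 0 < R)
    (hB : ∀ c : ℝ, |c| ≤ 8 → ∀ w ∈ Metric.ball (c : ℂ) R,
      w ∈ strip δ ∧ ‖MC r w‖ ≤ B ∧ ‖H w‖ ≤ B)
    (hρ : 0 < ρ) (hρR : ρ < R) (hBρ : 8 * B / R ^ 3 * ρ ≤ κ / 2)
    {n : ℕ} {y : ℤ} {ξ t σ : ℝ} (hn : 0 < n) (hξ : ξ = y / n) (ht : |t| ≤ 8)
    (hσ : |σ| = 1) (hv : κ * ρ ≤ σ * (VR r t - ξ)) :
    ‖FC r H n y (σ * ρ * Complex.I + t)‖ ≤ B * Real.exp (-(n * (κ * ρ ^ 2 / 2))) := by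
  have hBc := hB t ht
  have htt : (t : ℂ) ∈ Metric.ball (t : ℂ) R := Metric.mem_ball_self hR
  have hts : (t : ℂ) ∈ strip δ := (hBc _ htt).1
  obtain ⟨g, hg, eg, bg⟩ := exists_taylor_two hR
    (fun w hw => hasDerivAt_MC hδ (hBc w hw).1) (hasDerivAt_VC hrs hδ hts)
    (fun w hw => (hBc w hw).2.1)
  set m' : ℝ := r * s ^ 2 * Real.cos t / SR r t ^ 3
  have hm'' : (r : ℂ) * s ^ 2 * Complex.cos t / SC r t ^ 3 = m' := by
    rw [SC_real hs hrs]; simp only [m']; push_cast; ring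
  rw [hm'', VC_real hs hrs] at eg
  have hwb : (σ * ρ * Complex.I + t : ℂ) ∈ Metric.ball (t : ℂ) R := by
    rw [Metric.mem_ball, dist_eq_norm, add_sub_cancel_right]
    simp [hσ, abs_of_pos hρ, hρR]
  set w : ℂ := σ * ρ * Complex.I + t with hw
  have hσ2 : σ ^ 2 = 1 := by rw [← sq_abs, hσ, one_pow]
  rw [FC_eq hδ H hn hξ (hBc w hwb).1, norm_mul, Complex.norm_exp, mul_comm]
  refine mul_le_mul (hBc w hwb).2.2 ?_ (Real.exp_pos _).le ((norm_nonneg _).trans (hBc w hwb).2.2)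
  apply Real.exp_le_exp.2
  have him : ((n : ℂ) * (Complex.I * (MC r w - ξ * w))).re = -(n * ((MC r w).im - ξ * w.im)) := by
    simp; ring
  have hwim : w.im = σ * ρ := by simp [hw]
  have hd : w - t = ((σ * ρ : ℝ) : ℂ) * Complex.I := by rw [hw]; push_cast; ring
  have hcube : |((w - t) ^ 3 * g w).im| ≤ ρ ^ 3 * (8 * B / R ^ 3) := by
    refine (Complex.abs_im_le_norm _).trans ?_
    rw [norm_mul, norm_pow, hd, norm_mul, Complex.norm_real, Complex.norm_I, mul_one,
      Real.norm_eq_abs, abs_mul, hσ, one_mul, abs_of_pos hρ]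
    gcongr
    exact bg w hwb
  have hMim : (MC r w).im = VR r t * (σ * ρ) + ((w - t) ^ 3 * g w).im := by
    rw [eg w, Complex.add_im, Complex.add_im, Complex.add_im, MC_real_im hs hrs hδ0 hδ]
    have q1 : ((VR r t : ℂ) * (w - t)).im = VR r t * (σ * ρ) := by
      rw [hd]; simp
    have q2 : ((m' : ℂ) / 2 * (w - t) ^ 2).im = 0 := by
      have : ((m' : ℂ) / 2 * (w - t) ^ 2) = ((-(m' / 2 * (σ * ρ) ^ 2) : ℝ) : ℂ) := by
        rw [hd]; push_cast; linear_combination (m' / 2 * (σ * ρ) ^ 2 : ℂ) * Complex.I_sq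
      rw [this, Complex.ofReal_im]
    rw [q1, q2]; ring
  rw [him, hMim, hwim, neg_le_neg_iff]
  gcongr
  have := neg_abs_le ((w - t) ^ 3 * g w).im
  have h1 : κ * ρ * ρ ≤ σ * (VR r t - ξ) * ρ := by gcongr
  have h2 : ρ ^ 3 * (8 * B / R ^ 3) ≤ κ / 2 * ρ ^ 2 := by
    calc ρ ^ 3 * (8 * B / R ^ 3) = (8 * B / R ^ 3 * ρ) * ρ ^ 2 := by ring
      _ ≤ _ := by gcongr
  nlinarith

/-! ### Asymptotics of the oscillatory integral -/

/-- Uniform bounds for the phase and the amplitude on discs about points of `[-8, 8]`, an interval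
containing every real point over which the deformed contour passes. -/
theorem exists_strip_bound {r δ : ℝ} (hδ0 : 0 < δ) (hδ1 : δ ≤ 1)
    (hδ : r ^ 2 * (Real.cosh δ ^ 2 + Real.sinh δ ^ 2) < 1) {H : ℂ → ℂ}
    (hH : DifferentiableOn ℂ H (strip δ)) :
    ∃ B : ℝ, 0 < B ∧ ∀ c : ℝ, |c| ≤ 8 → ∀ w ∈ Metric.ball (c : ℂ) (δ / 2),
      w ∈ strip δ ∧ ‖MC r w‖ ≤ B ∧ ‖H w‖ ≤ B := by
  set K : Set ℂ := Set.Icc (-9) 9 ×ℂ Set.Icc (-(δ / 2)) (δ / 2) with hK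
  have hKc : IsCompact K := isCompact_Icc.reProdIm isCompact_Icc
  have hKs : K ⊆ strip δ := by
    intro w hw
    have : |w.im| ≤ δ / 2 := abs_le.2 hw.2
    show |w.im| < δ
    linarith
  have hM : ContinuousOn (MC r) K := fun w hw =>
    (hasDerivAt_MC hδ (hKs hw)).continuousAt.continuousWithinAt
  obtain ⟨B1, hB1⟩ := hKc.exists_bound_of_continuousOn hM
  obtain ⟨B2, hB2⟩ := hKc.exists_bound_of_continuousOn (hH.continuousOn.mono hKs)
  refine ⟨max (max B1 B2) 1, by positivity, ?_⟩
  intro c hc w hw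
  have hwK : w ∈ K := by
    rw [Metric.mem_ball, dist_eq_norm] at hw
    have h1 := (Complex.abs_re_le_norm (w - c)).trans hw.le
    have h2 := (Complex.abs_im_le_norm (w - c)).trans hw.le
    simp only [Complex.sub_re, Complex.sub_im, Complex.ofReal_re, Complex.ofReal_im, sub_zero]
      at h1 h2
    rw [abs_le] at h1 h2 hc
    refine ⟨⟨?_, ?_⟩, h2⟩ <;> linarith [h1.1, h1.2, hc.1, hc.2]
  exact ⟨hKs hwK, (hB1 w hwK).trans ((le_max_left _ _).trans (le_max_left _ _)),
    (hB2 w hwK).trans ((le_max_right _ _).trans (le_max_left _ _))⟩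

theorem exp_small {q : ℝ} (hq : 0 < q) {n : ℕ} (hn : 0 < n) :
    Real.exp (-(n * q)) ≤ 2 / q ^ 2 / (n * √n) := by
  have hn1 : (1 : ℝ) ≤ n := by exact_mod_cast hn
  have hn0 : (0 : ℝ) < n := by linarith
  have hx : 0 < n * q := by positivity
  have h := Real.quadratic_le_exp_of_nonneg hx.le
  have hsq : √(n : ℝ) ≤ n := by
    rw [Real.sqrt_le_left hn0.le]; nlinarith
  have hsp : 0 < √(n : ℝ) := Real.sqrt_pos.2 hn0
  rw [Real.exp_neg, inv_le_comm₀ (Real.exp_pos _) (by positivity)]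
  rw [div_div, inv_div]
  have : q ^ 2 * (n * √n) / 2 ≤ (n * q) ^ 2 / 2 := by
    have := mul_le_mul_of_nonneg_left hsq (by positivity : 0 ≤ q ^ 2 * n)
    nlinarith
  linarith

theorem FC_differentiableOn {r δ : ℝ}
    (hδ : r ^ 2 * (Real.cosh δ ^ 2 + Real.sinh δ ^ 2) < 1) {H : ℂ → ℂ}
    (hH : DifferentiableOn ℂ H (strip δ)) (n : ℕ) (y : ℤ) :
    DifferentiableOn ℂ (FC r H n y) (strip δ) := by
  have h1 : DifferentiableOn ℂ (LC r) (strip δ) := fun w hw =>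
    (hasDerivAt_LC hδ hw).differentiableAt.differentiableWithinAt
  have h2 : Differentiable ℂ fun w : ℂ => Complex.exp (-(Complex.I * y * w)) := by fun_prop
  exact ((h1.pow n).mul h2.differentiableOn).mul hH

theorem FC_periodic {r : ℝ} {H : ℂ → ℂ} (hper : ∀ w, H (w + 2 * Real.pi) = H w) (n : ℕ) (y : ℤ)
    (w : ℂ) : FC r H n y (w + 2 * Real.pi) = FC r H n y w := by
  rw [FC, FC, LC_periodic, hper]
  congr 2
  rw [show -(Complex.I * y * (w + 2 * Real.pi)) =
    -(Complex.I * y * w) - y * (2 * Real.pi * Complex.I) by ring]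
  exact Complex.exp_periodic.sub_int_mul_eq y

/-- Uniform two-saddle asymptotics of `∫ λⁿ e^{-iyt} H(t) dt`: the saddles are `t₀` and `π - t₀`,
the second derivatives of the phase are `m` and `-m`, and the error is `O(n^{-3/2})` uniformly as
long as the saddles stay apart, i.e. `cos t₀ ≥ c₀ > 0`. -/
theorem osc_integral {r s δ c0 : ℝ} (hr : 0 < r) (hs : 0 < s) (hrs : r ^ 2 + s ^ 2 = 1)
    (hδ0 : 0 < δ) (hδ1 : δ ≤ 1) (hδ : r ^ 2 * (Real.cosh δ ^ 2 + Real.sinh δ ^ 2) < 1)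
    {H : ℂ → ℂ} (hH : DifferentiableOn ℂ H (strip δ)) (hper : ∀ w, H (w + 2 * Real.pi) = H w)
    (hc0 : 0 < c0) :
    ∃ C : ℝ, 0 ≤ C ∧ ∀ (n : ℕ) (y : ℤ) (t0 m : ℝ), 0 < n → -(Real.pi / 2) ≤ t0 →
      t0 ≤ Real.pi / 2 → c0 ≤ Real.cos t0 → VR r t0 = y / n →
      r * s ^ 2 * Real.cos t0 / SR r t0 ^ 3 = m →
      ‖(∫ t in (-Real.pi)..Real.pi, FC r H n y t) - (√(Real.pi / (n * m)) : ℝ) *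
        ((1 + Complex.I) * FC r H n y t0 + (1 - Complex.I) * FC r H n y (Real.pi - t0 : ℝ))‖
        ≤ C / (n * √n) := by
  obtain ⟨B, hB0, hB⟩ := exists_strip_bound hδ0 hδ1 hδ hH
  set R := δ / 2 with hRdef
  have hR : 0 < R := by positivity
  -- a lower bound for `μ''(t₀)`, since `SR ≤ 1`
  set m0 := r * s ^ 2 * c0 with hm0def
  have hm0 : 0 < m0 := by positivity
  set κ := m0 / 4 with hκ
  have hκ0 : 0 < κ := by positivity
  have hK0 : 0 ≤ Kbd B R := by rw [Kbd]; positivity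
  -- a radius small enough for the deformed contour and for all the Taylor estimates on it
  obtain ⟨ρ, hρ, hρR, hρc, hρK, hρB⟩ : ∃ ρ : ℝ, 0 < ρ ∧ 2 * ρ < R ∧ ρ ≤ c0 / 2 ∧
      Kbd B R * ρ ≤ m0 / 2 ∧ 8 * B / R ^ 3 * ρ ≤ κ / 2 := by
    refine ⟨min (min (R / 4) (c0 / 2)) (min (m0 / 2 / (Kbd B R + 1)) (κ / 2 / (8 * B / R ^ 3))),
      by positivity, ?_, ?_, ?_, ?_⟩
    · have := (min_le_left (min (R / 4) (c0 / 2))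
        (min (m0 / 2 / (Kbd B R + 1)) (κ / 2 / (8 * B / R ^ 3)))).trans (min_le_left _ _)
      linarith
    · exact (min_le_left _ _).trans (min_le_right _ _)
    · have := (min_le_right (min (R / 4) (c0 / 2))
        (min (m0 / 2 / (Kbd B R + 1)) (κ / 2 / (8 * B / R ^ 3)))).trans (min_le_left _ _)
      refine (mul_le_mul (le_add_of_nonneg_right zero_le_one) this (by positivity)
        (by positivity)).trans_eq ?_
      field_simp
    · have := (min_le_right (min (R / 4) (c0 / 2))
        (min (m0 / 2 / (Kbd B R + 1)) (κ / 2 / (8 * B / R ^ 3)))).trans (min_le_right _ _)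
      refine (mul_le_mul_of_nonneg_left this (by positivity)).trans_eq ?_
      field_simp
  obtain ⟨C1, hC1, hloc⟩ := local_contrib hs hrs hδ0 hδ hH hR hB0.le hB hm0 hρ hρR hρK
  set q := κ * ρ ^ 2 / 2 with hq
  have hq0 : 0 < q := by positivity
  refine ⟨4 * C1 + 2 * (7 * B * (2 / q ^ 2)), by positivity, ?_⟩
  intro n y t0 m hn ht0 ht0' hcos hV hm
  have hpi := Real.pi_gt_three
  have hpi2 := Real.pi_lt_d2
  have hn0 : (0 : ℝ) < n := by exact_mod_cast hn
  have hnn : 0 < (n : ℝ) * √n := mul_pos hn0 (Real.sqrt_pos.2 hn0)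
  have hSR : 0 < SR r t0 := hs.trans_le (SR_ge hrs t0)
  have hmm : m0 ≤ m := by
    rw [← hm, le_div_iff₀ (by positivity)]
    calc m0 * SR r t0 ^ 3 ≤ m0 * 1 := by
          gcongr; exact pow_le_one₀ hSR.le (SR_le r t0)
      _ ≤ _ := by rw [mul_one, hm0def]; gcongr
  -- `cos t₀ ≥ c₀ ≥ 2ρ` keeps `t₀` at distance at least `ρ` from `±π/2`
  have e1 : Real.cos t0 ≤ Real.pi / 2 - t0 := by
    rw [← Real.sin_pi_div_two_sub]; exact Real.sin_le (by linarith)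
  have e2 : Real.cos t0 ≤ Real.pi / 2 + t0 := by
    rw [← Real.sin_add_pi_div_two, add_comm]; exact Real.sin_le (by linarith)
  have hd := contour_deform hρ (by linarith : ρ < δ) (by linarith : t0 + ρ ≤ Real.pi / 2)
    (by linarith) (FC_differentiableOn hδ hH n y) (FC_periodic hper n y)
  have hS2 : SR r (Real.pi - t0) = SR r t0 := by
    rw [SR, SR, Real.cos_pi_sub, neg_sq]
  have hn1 : ‖(1 + Complex.I : ℂ)‖ ≤ 2 := (norm_add_le _ _).trans (by simp; norm_num)
  have hn2 : ‖(1 - Complex.I : ℂ)‖ ≤ 2 := (norm_sub_le _ _).trans (by simp; norm_num)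
  have L1 := hloc n y t0 m m (1 + Complex.I) hn (abs_le.2 ⟨by linarith, by linarith⟩) hV hm hmm hn1
    (by linear_combination ((m : ℂ) / 2) * (Complex.I + 2) * Complex.I_sq)
  have L2 := hloc n y (Real.pi - t0) m (-m) (1 - Complex.I) hn
    (abs_le.2 ⟨by linarith, by linarith⟩)
    (by rw [VR, hS2, Real.sin_pi_sub]; exact hV)
    (by rw [hS2, Real.cos_pi_sub, ← hm]; ring) hmm hn2
    (by push_cast; linear_combination (-(m : ℂ) / 2) * (Complex.I - 2) * Complex.I_sq)
  have hE := exp_small hq0 hn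
  have L3 : ‖∫ t in (t0 + ρ)..(Real.pi - t0 - ρ), FC r H n y (ρ * Complex.I + t)‖ ≤
      7 * B * (2 / q ^ 2) / (n * √n) := by
    refine (intervalIntegral.norm_integral_le_of_norm_le_const
      (C := B * Real.exp (-(n * q))) ?_).trans ?_
    · intro t ht
      rw [Set.uIoc_of_le (by linarith)] at ht
      have hg := sin_gap hcos hρ hρc ht0 ht.1.le ht.2
      have hv := VR_gap hr hs hrs (t := t0) (t' := t)
        (by linarith [(by positivity : 0 < c0 * ρ / 4)])
      have := horizontal_bound (σ := 1) (ξ := VR r t0) hs hrs hδ0 hδ hR hB hρ (by linarith) hρB hn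
        hV (t := t) (abs_le.2 ⟨by linarith [ht.1], by linarith [ht.2]⟩) (by simp) (by
          have := mul_le_mul_of_nonneg_left hg (by positivity : 0 ≤ r * s ^ 2)
          rw [hκ, hm0def]; linarith)
      simpa using this
    · rw [abs_of_nonneg (by linarith)]
      calc _ ≤ B * (2 / q ^ 2 / (n * √n)) * 7 := by
            gcongr <;> linarith
        _ = _ := by ring
  have L4 : ‖∫ t in (Real.pi - t0 + ρ)..(2 * Real.pi + t0 - ρ), FC r H n y (-ρ * Complex.I + t)‖ ≤
      7 * B * (2 / q ^ 2) / (n * √n) := by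
    refine (intervalIntegral.norm_integral_le_of_norm_le_const
      (C := B * Real.exp (-(n * q))) ?_).trans ?_
    · intro t ht
      rw [Set.uIoc_of_le (by linarith)] at ht
      -- the reflection `t ↦ t - π`, `t₀ ↦ -t₀` reduces the lower segment to the upper one
      have hg := sin_gap (t0 := -t0) (t := t - Real.pi) (by rwa [Real.cos_neg]) hρ hρc
        (by linarith) (by linarith [ht.1]) (by linarith [ht.2])
      rw [Real.sin_sub_pi, Real.sin_neg] at hg
      have hv := VR_gap hr hs hrs (t := t) (t' := t0)
        (by linarith [(by positivity : 0 < c0 * ρ / 4)])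
      have := horizontal_bound (σ := -1) (ξ := VR r t0) hs hrs hδ0 hδ hR hB hρ (by linarith) hρB hn
        hV (t := t) (abs_le.2 ⟨by linarith [ht.1], by linarith [ht.2]⟩) (by simp) (by
          have := mul_le_mul_of_nonneg_left hg (by positivity : 0 ≤ r * s ^ 2)
          rw [hκ, hm0def]; linarith)
      simpa using this
    · rw [abs_of_nonneg (by linarith)]
      calc _ ≤ B * (2 / q ^ 2 / (n * √n)) * 7 := by
            gcongr <;> linarith
        _ = _ := by ring
  rw [hd]
  rw [show ∀ d1 d2 I1 I2 I3 I4 Q F1 F2 : ℂ, d1 * I1 + I2 + d2 * I3 + I4 - Q * (d1 * F1 + d2 * F2) =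
    d1 * (I1 - Q * F1) + I2 + d2 * (I3 - Q * F2) + I4 by intros; ring]
  refine (norm_add₄_le).trans ?_
  rw [norm_mul, norm_mul]
  calc _ ≤ 2 * (C1 / (n * √n)) + 7 * B * (2 / q ^ 2) / (n * √n) + 2 * (C1 / (n * √n)) +
        7 * B * (2 / q ^ 2) / (n * √n) := by gcongr
    _ = _ := by ring

/-! ### Fourier representation of the walk -/

/-- The Fourier transform of `Uⁿ(δ₀ ⊗ φ)` at `ω e^{it}`: the vector `A(ωe^{it})ⁿ φ`, where
`A(ωe^{it})` has rows `(r e^{-it}, β e^{it})` and `(-conj β e^{-it}, r e^{it})` with `r = |a|` and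
`β = ωb`. -/
def vhat (r : ℝ) (β : ℂ) (φ : ℂ × ℂ) : ℕ → ℝ → ℂ × ℂ
  | 0, _ => φ
  | n + 1, t =>
    (r * Complex.exp (-(Complex.I * t)) * (vhat r β φ n t).1 +
        β * Complex.exp (Complex.I * t) * (vhat r β φ n t).2,
      -(starRingEnd ℂ) β * Complex.exp (-(Complex.I * t)) * (vhat r β φ n t).1 +
        r * Complex.exp (Complex.I * t) * (vhat r β φ n t).2)

theorem vhat_continuous (r : ℝ) (β : ℂ) (φ : ℂ × ℂ) (n : ℕ) : Continuous (vhat r β φ n) := by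
  induction n with
  | zero => exact continuous_const
  | succ n ih =>
    have h1 : Continuous fun t => (vhat r β φ n t).1 := continuous_fst.comp ih
    have h2 : Continuous fun t => (vhat r β φ n t).2 := continuous_snd.comp ih
    show Continuous fun t : ℝ => (_, _)
    fun_prop

theorem integral_character (y : ℤ) :
    ∫ t in (-Real.pi)..Real.pi, Complex.exp (-(Complex.I * y * (t : ℝ))) =
      if y = 0 then 2 * (Real.pi : ℂ) else 0 := by
  split_ifs with h
  · subst h
    simp
    ring
  · have hc : -(Complex.I * (y : ℂ)) ≠ 0 := by simpa using h
    have := integral_exp_mul_complex (a := -Real.pi) (b := Real.pi) hc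
    simp only [neg_mul] at this
    rw [this, div_eq_zero_iff]
    left
    rw [sub_eq_zero, Complex.exp_eq_exp_iff_exists_int]
    exact ⟨-y, by push_cast; ring⟩

/-- Fourier representation of the walk, with the phase `ω = a/|a|` of `a` factored out. -/
theorem fourier_rep {a b ω : ℂ} {r : ℝ} (hω : ω * (starRingEnd ℂ) ω = 1) (ha : a = r * ω)
    (φ : ℂ × ℂ) (n : ℕ) (y : ℤ) :
    ((qwStep a b)^[n] (qwDelta φ)) y =
      (ω ^ (-y) * (1 / (2 * Real.pi)) * ∫ t in (-Real.pi)..Real.pi,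
          Complex.exp (-(Complex.I * y * (t : ℝ))) * (vhat r (ω * b) φ n t).1,
        ω ^ (-y) * (1 / (2 * Real.pi)) * ∫ t in (-Real.pi)..Real.pi,
          Complex.exp (-(Complex.I * y * (t : ℝ))) * (vhat r (ω * b) φ n t).2) := by
  have hω0 : ω ≠ 0 := left_ne_zero_of_mul_eq_one hω
  have hpi : (Real.pi : ℂ) ≠ 0 := by exact_mod_cast Real.pi_ne_zero
  induction n generalizing y with
  | zero =>
    simp only [Function.iterate_zero, id, vhat, intervalIntegral.integral_mul_const,
      integral_character, qwDelta]
    split_ifs with h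
    · subst h
      ext <;> simp <;> field_simp
    · ext <;> simp
  | succ n ih =>
    rw [Function.iterate_succ_apply', qwStep, ih, ih]
    have hc := vhat_continuous r (ω * b) φ n
    have h1 : Continuous fun t => (vhat r (ω * b) φ n t).1 := continuous_fst.comp hc
    have h2 : Continuous fun t => (vhat r (ω * b) φ n t).2 := continuous_snd.comp hc
    have key : ∀ c d : ℂ, ∫ t in (-Real.pi)..Real.pi,
        Complex.exp (-(Complex.I * y * (t : ℝ))) *
          (c * Complex.exp (-(Complex.I * t)) * (vhat r (ω * b) φ n t).1 +
            d * Complex.exp (Complex.I * t) * (vhat r (ω * b) φ n t).2) =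
        c * (∫ t in (-Real.pi)..Real.pi,
          Complex.exp (-(Complex.I * (y + 1 : ℤ) * (t : ℝ))) * (vhat r (ω * b) φ n t).1) +
        d * ∫ t in (-Real.pi)..Real.pi,
          Complex.exp (-(Complex.I * (y - 1 : ℤ) * (t : ℝ))) * (vhat r (ω * b) φ n t).2 := by
      intro c d
      rw [← intervalIntegral.integral_const_mul, ← intervalIntegral.integral_const_mul,
        ← intervalIntegral.integral_add]
      · refine intervalIntegral.integral_congr fun t _ => ?_
        have e1 : Complex.exp (-(Complex.I * (y + 1 : ℤ) * (t : ℝ))) =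
            Complex.exp (-(Complex.I * y * (t : ℝ))) * Complex.exp (-(Complex.I * t)) := by
          rw [← Complex.exp_add]; congr 1; push_cast; ring
        have e2 : Complex.exp (-(Complex.I * (y - 1 : ℤ) * (t : ℝ))) =
            Complex.exp (-(Complex.I * y * (t : ℝ))) * Complex.exp (Complex.I * t) := by
          rw [← Complex.exp_add]; congr 1; push_cast; ring
        simp only [e1, e2]
        ring
      · exact Continuous.intervalIntegrable (by fun_prop) _ _
      · exact Continuous.intervalIntegrable (by fun_prop) _ _
    have z1 : ω ^ (-(y + 1)) = ω ^ (-y) * (starRingEnd ℂ) ω := by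
      rw [neg_add, zpow_add₀ hω0, zpow_neg_one, inv_eq_of_mul_eq_one_right hω]
    have z2 : ω ^ (-(y - 1)) = ω ^ (-y) * ω := by
      rw [neg_sub, sub_eq_add_neg, add_comm, zpow_add₀ hω0, zpow_one]
    ext
    · simp only [vhat, key, z1, z2, ha]
      linear_combination (r * ω ^ (-y) * (1 / (2 * Real.pi)) * ∫ t in (-Real.pi)..Real.pi,
          Complex.exp (-(Complex.I * (y + 1 : ℤ) * (t : ℝ))) * (vhat r (ω * b) φ n t).1) * hω
    · simp only [vhat, key, z1, z2, ha, map_mul, Complex.conj_ofReal]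
      linear_combination (r * ω ^ (-y) * (1 / (2 * Real.pi)) * ∫ t in (-Real.pi)..Real.pi,
          Complex.exp (-(Complex.I * (y - 1 : ℤ) * (t : ℝ))) * (vhat r (ω * b) φ n t).2) * hω

/-- The second eigenvalue `e^{-iμ(w)}`. -/
def LB (r : ℝ) (w : ℂ) : ℂ := r * Complex.cos w - Complex.I * SC r w

/-- The amplitude `⟨Πφ, ψ⟩`, extended to complex `w`, where `Π = (A - e^{-iμ}) / (e^{iμ} - e^{-iμ})`
is the spectral projection of `A(ωe^{iw})` onto the `e^{iμ}`-eigenspace. -/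
def HC (r : ℝ) (β : ℂ) (φ ψ : ℂ × ℂ) (w : ℂ) : ℂ :=
  (((r * Complex.exp (-(Complex.I * w)) - LB r w) * φ.1 + β * Complex.exp (Complex.I * w) * φ.2) *
      (starRingEnd ℂ) ψ.1 +
    (-(starRingEnd ℂ) β * Complex.exp (-(Complex.I * w)) * φ.1 +
      (r * Complex.exp (Complex.I * w) - LB r w) * φ.2) * (starRingEnd ℂ) ψ.2) /
    (2 * Complex.I * SC r w)

theorem exp_I (w : ℂ) : Complex.exp (Complex.I * w) = Complex.cos w + Complex.I * Complex.sin w := by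
  rw [mul_comm, Complex.exp_mul_I]; ring

theorem exp_neg_I (w : ℂ) :
    Complex.exp (-(Complex.I * w)) = Complex.cos w - Complex.I * Complex.sin w := by
  rw [← mul_neg, exp_I, Complex.cos_neg, Complex.sin_neg]; ring

theorem HC_differentiableOn {r δ : ℝ} (hδ : r ^ 2 * (Real.cosh δ ^ 2 + Real.sinh δ ^ 2) < 1)
    (β : ℂ) (φ ψ : ℂ × ℂ) : DifferentiableOn ℂ (HC r β φ ψ) (strip δ) := by
  have hS : DifferentiableOn ℂ (SC r) (strip δ) := fun w hw =>
    (hasDerivAt_SC hδ hw).differentiableAt.differentiableWithinAt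
  have hc : DifferentiableOn ℂ Complex.cos (strip δ) := Complex.differentiable_cos.differentiableOn
  have hL : DifferentiableOn ℂ (LB r) (strip δ) := (hc.const_mul _).sub (hS.const_mul _)
  refine DifferentiableOn.div ?_ (hS.const_mul _) fun w _ => by simp [SC_ne]
  fun_prop

theorem HC_periodic (r : ℝ) (β : ℂ) (φ ψ : ℂ × ℂ) (w : ℂ) :
    HC r β φ ψ (w + 2 * Real.pi) = HC r β φ ψ w := by
  simp only [HC, LB, exp_I, exp_neg_I, SC_periodic, Complex.cos_add_two_pi, Complex.sin_add_two_pi]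

/-- Shifting by `π` exchanges the two spectral projections. -/
theorem HC_add_pi (r : ℝ) (β : ℂ) (φ ψ : ℂ × ℂ) (w : ℂ) :
    HC r β φ ψ (w + Real.pi) = innC φ ψ - HC r β φ ψ w := by
  have hS := SC_ne r w
  simp only [HC, LB, exp_I, exp_neg_I, SC_add_pi, Complex.cos_add_pi, Complex.sin_add_pi, innC]
  field_simp
  ring

/-- Spectral decomposition of `A(ωe^{it})ⁿ`, with `1 - Π` the projection for the eigenvalue
`e^{-iμ}`. -/
theorem vhat_eigen {r s : ℝ} (hs : 0 < s) (hrs : r ^ 2 + s ^ 2 = 1) {β : ℂ} (hβ : ‖β‖ = s)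
    (φ ψ : ℂ × ℂ) (n : ℕ) (t : ℝ) :
    innC (vhat r β φ n t) ψ =
      LC r t ^ n * HC r β φ ψ t + LB r t ^ n * (innC φ ψ - HC r β φ ψ t) := by
  have hββ : β * (starRingEnd ℂ) β = (s : ℂ) ^ 2 := by
    rw [Complex.mul_conj, Complex.normSq_eq_norm_sq, hβ]; push_cast; rfl
  have hrs' : (r : ℂ) ^ 2 + (s : ℂ) ^ 2 = 1 := by exact_mod_cast hrs
  have hS0 : SC r t ≠ 0 := SC_ne r t
  have hSsq : SC r t ^ 2 = 1 - (r : ℂ) ^ 2 * Complex.cos t ^ 2 := by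
    rw [SC_real hs hrs]; exact_mod_cast SR_sq hrs t
  have hee : Complex.exp (-(Complex.I * t)) * Complex.exp (Complex.I * t) = 1 := by
    rw [← Complex.exp_add]; simp
  set p := Complex.exp (Complex.I * t) with hp
  set q := Complex.exp (-(Complex.I * t)) with hq
  have hpq : p + q = 2 * Complex.cos t := by rw [hp, hq, exp_I, exp_neg_I]; ring
  set l := LC r t with hl
  set l' := LB r t with hl'
  have htr : l + l' = r * q + r * p := by
    rw [hl, hl', LC, LB]; linear_combination (-(r : ℂ)) * hpq
  have hdet : l * l' = (r * q) * (r * p) - (β * p) * (-(starRingEnd ℂ) β * q) := by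
    rw [hl, hl', LC, LB]
    linear_combination (-(SC r t ^ 2)) * Complex.I_sq + hSsq - hrs' -
      ((r : ℂ) ^ 2 + (s : ℂ) ^ 2) * hee - p * q * hββ
  have hD : 2 * Complex.I * SC r t = l - l' := by rw [hl, hl', LC, LB]; ring
  have hD0 : l - l' ≠ 0 := by
    rw [← hD]; simp [hS0]
  have main : (l - l') * (vhat r β φ n t).1 =
        l ^ n * ((r * q - l') * φ.1 + β * p * φ.2) -
          l' ^ n * ((r * q - l) * φ.1 + β * p * φ.2) ∧
      (l - l') * (vhat r β φ n t).2 =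
        l ^ n * (-(starRingEnd ℂ) β * q * φ.1 + (r * p - l') * φ.2) -
          l' ^ n * (-(starRingEnd ℂ) β * q * φ.1 + (r * p - l) * φ.2) := by
    induction n with
    | zero => constructor <;> simp only [vhat] <;> ring
    | succ n ih =>
      obtain ⟨i1, i2⟩ := ih
      constructor
      · simp only [vhat, ← hp, ← hq]
        linear_combination (r * q) * i1 + (β * p) * i2 +
          (l ^ n - l' ^ n) * (φ.1 * (hdet - r * q * htr) - β * p * φ.2 * htr)
      · simp only [vhat, ← hp, ← hq]
        linear_combination (-(starRingEnd ℂ) β * q) * i1 + (r * p) * i2 +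
          (l ^ n - l' ^ n) * (φ.2 * (hdet - r * p * htr) + (starRingEnd ℂ) β * q * φ.1 * htr)
  obtain ⟨m1, m2⟩ := main
  apply mul_left_cancel₀ hD0
  rw [HC, ← hp, ← hq, ← hl', hD, innC, innC]
  field_simp
  linear_combination (starRingEnd ℂ) ψ.1 * m1 + (starRingEnd ℂ) ψ.2 * m2

theorem exp_int_pi (y : ℤ) : Complex.exp (Complex.I * y * Real.pi) = (-1) ^ y := by
  rw [show Complex.I * (y : ℂ) * Real.pi = y * (Real.pi * Complex.I) by ring, Complex.exp_int_mul,
    Complex.exp_pi_mul_I]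

/-- The amplitude as a single oscillatory integral: the `e^{-iμ}`-branch is the `π`-shift of the
`e^{iμ}`-branch, which produces the parity factor. -/
theorem amp_eq {a b ω : ℂ} {r s : ℝ} (hs : 0 < s) (hrs : r ^ 2 + s ^ 2 = 1) (hb : ‖b‖ = s)
    (hω : ω * (starRingEnd ℂ) ω = 1) (hω1 : ‖ω‖ = 1) (ha : a = r * ω) (φ ψ : ℂ × ℂ) (n : ℕ)
    (y : ℤ) :
    innC (((qwStep a b)^[n] (qwDelta φ)) y) ψ =
      (1 + (-1 : ℂ) ^ ((n : ℤ) + y)) * ω ^ (-y) * ((1 / (2 * Real.pi)) *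
        ∫ t in (-Real.pi)..Real.pi, FC r (HC r (ω * b) φ ψ) n y t) := by
  set β := ω * b with hβdef
  have hβ : ‖β‖ = s := by rw [hβdef, norm_mul, hω1, one_mul, hb]
  rw [fourier_rep hω ha]
  have hc := vhat_continuous r β φ n
  have h1 : Continuous fun t => (vhat r β φ n t).1 := continuous_fst.comp hc
  have h2 : Continuous fun t => (vhat r β φ n t).2 := continuous_snd.comp hc
  obtain ⟨δ, hδ0, -, hδ⟩ := exists_delta (r := r) (by nlinarith [pow_pos hs 2])
  have hFd := FC_differentiableOn hδ (HC_differentiableOn hδ β φ ψ) n y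
  have hFc : Continuous fun t : ℝ => FC r (HC r β φ ψ) n y t := by
    rw [← continuousOn_univ]
    exact hFd.continuousOn.comp Complex.continuous_ofReal.continuousOn
      (fun t _ => by simpa [strip] using hδ0)
  have hFs : Continuous fun t : ℝ =>
      (-1 : ℂ) ^ ((n : ℤ) + y) * FC r (HC r β φ ψ) n y ((t + Real.pi : ℝ) : ℂ) :=
    continuous_const.mul (hFc.comp (by fun_prop : Continuous fun t : ℝ => t + Real.pi))
  have hsplit : ∀ t : ℝ, Complex.exp (-(Complex.I * y * (t : ℝ))) * innC (vhat r β φ n t) ψ =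
      FC r (HC r β φ ψ) n y t +
        (-1 : ℂ) ^ ((n : ℤ) + y) * FC r (HC r β φ ψ) n y ((t + Real.pi : ℝ) : ℂ) := by
    intro t
    rw [vhat_eigen hs hrs hβ, FC, FC]
    push_cast
    rw [HC_add_pi]
    have e1 : LC r (t + Real.pi) = -LB r t := by
      rw [LC, LB, SC_add_pi, Complex.cos_add_pi]; ring
    have e2 : Complex.exp (-(Complex.I * y * (t + Real.pi))) =
        Complex.exp (-(Complex.I * y * (t : ℝ))) * (-1) ^ y := by
      rw [← exp_int_pi, show -(Complex.I * (y : ℂ) * ((t : ℂ) + Real.pi)) =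
        (-(Complex.I * y * (t : ℝ)) + Complex.I * y * Real.pi) - y * (2 * Real.pi * Complex.I) by
          ring, Complex.exp_periodic.sub_int_mul_eq, Complex.exp_add]
    rw [e1, e2, neg_pow, zpow_add₀ (by norm_num), zpow_natCast]
    have e3 : ((-1 : ℂ) ^ n) * (-1) ^ n = 1 := by rw [← mul_pow]; simp
    have e4 : ((-1 : ℂ) ^ y) * (-1) ^ y = 1 := by rw [← mul_zpow]; simp
    linear_combination (-(Complex.exp (-(Complex.I * y * (t : ℝ))) * LB r t ^ n *
      (innC φ ψ - HC r β φ ψ t))) * (e3 * ((-1 : ℂ) ^ y) * (-1) ^ y + e4)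
  have hshift : ∫ t in (-Real.pi)..Real.pi, FC r (HC r β φ ψ) n y ((t + Real.pi : ℝ) : ℂ) =
      ∫ t in (-Real.pi)..Real.pi, FC r (HC r β φ ψ) n y t := by
    have hper : Function.Periodic (fun t : ℝ => FC r (HC r β φ ψ) n y t) (2 * Real.pi) := by
      intro t
      have := FC_periodic (r := r) (HC_periodic r β φ ψ) n y t
      simpa using this
    rw [intervalIntegral.integral_comp_add_right (fun t : ℝ => FC r (HC r β φ ψ) n y t)]
    have := hper.intervalIntegral_add_eq (-Real.pi + Real.pi) (-Real.pi)
    convert this using 2 <;> ring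
  have hint : (∫ t in (-Real.pi)..Real.pi, Complex.exp (-(Complex.I * y * (t : ℝ))) *
        (vhat r β φ n t).1) * (starRingEnd ℂ) ψ.1 +
      (∫ t in (-Real.pi)..Real.pi, Complex.exp (-(Complex.I * y * (t : ℝ))) *
        (vhat r β φ n t).2) * (starRingEnd ℂ) ψ.2 =
      (1 + (-1 : ℂ) ^ ((n : ℤ) + y)) * ∫ t in (-Real.pi)..Real.pi, FC r (HC r β φ ψ) n y t := by
    rw [← intervalIntegral.integral_mul_const, ← intervalIntegral.integral_mul_const,
      ← intervalIntegral.integral_add (Continuous.intervalIntegrable (by fun_prop) _ _)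
        (Continuous.intervalIntegrable (by fun_prop) _ _), add_mul, one_mul]
    nth_rewrite 2 [← hshift]
    rw [← intervalIntegral.integral_const_mul, ← intervalIntegral.integral_add
      (hFc.intervalIntegrable _ _) (hFs.intervalIntegrable _ _)]
    refine intervalIntegral.integral_congr fun t _ => ?_
    rw [← hsplit, innC]; ring
  rw [innC]
  linear_combination ω ^ (-y) * (1 / (2 * Real.pi)) * hint

/-! ### Eigenvectors, the saddle point and the amplitude -/

section eigenvector

variable {a b ω : ℂ}

theorem phit_exp (t : ℝ) : phit (Complex.exp (Complex.I * t)) = Real.cos t := by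
  rw [phit, ← Complex.exp_neg, exp_I, exp_neg_I]
  rw [show ((Complex.cos t + Complex.I * Complex.sin t) +
    (Complex.cos t - Complex.I * Complex.sin t)) / 2 = ((Real.cos t : ℝ) : ℂ) by push_cast; ring,
    Complex.ofReal_re]

theorem lamS_exp (a : ℂ) (t : ℝ) : lamS a (Complex.exp (Complex.I * t)) =
    ‖a‖ * Complex.cos t + Complex.I * (SR ‖a‖ t : ℝ) := by
  rw [lamS, phit_exp, SR]; push_cast; rfl

theorem lamS_sub_exp (a : ℂ) (t : ℝ) :
    lamS a (Complex.exp (Complex.I * t)) - ‖a‖ * (starRingEnd ℂ) (Complex.exp (Complex.I * t)) =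
      Complex.I * (SR ‖a‖ t + ‖a‖ * Real.sin t : ℝ) := by
  have : (starRingEnd ℂ) (Complex.exp (Complex.I * t)) = Complex.exp (-(Complex.I * t)) := by
    rw [← Complex.exp_conj]; simp
  rw [lamS_exp, this, exp_neg_I]; push_cast; ring

/-- `S + r sin t` and `S - r sin t` have product `s² > 0` and sum `2S > 0`, hence are positive; the
first one is the modulus of the second component of `p u`. -/
theorem SR_add_pos {r s : ℝ} (hs : 0 < s) (hrs : r ^ 2 + s ^ 2 = 1) (t : ℝ) :
    (SR r t + r * Real.sin t) * (SR r t - r * Real.sin t) = s ^ 2 ∧ 0 < SR r t + r * Real.sin t := by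
  have h1 : (SR r t + r * Real.sin t) * (SR r t - r * Real.sin t) = s ^ 2 := by
    linear_combination SR_sq hrs t + r ^ 2 * (Real.sin_sq_add_cos_sq t).symm + hrs.symm
  refine ⟨h1, ?_⟩
  have hS : 0 < SR r t := hs.trans_le (SR_ge hrs t)
  by_contra h
  push Not at h
  have : 0 ≤ SR r t - r * Real.sin t := by linarith
  nlinarith [pow_pos hs 2]

theorem pnormF_sq_s8 (hb : b ≠ 0) (hrs : ‖a‖ ^ 2 + ‖b‖ ^ 2 = 1) (t : ℝ) :
    pnormF a b (Complex.exp (Complex.I * t)) ^ 2 =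
      2 * SR ‖a‖ t * (SR ‖a‖ t + ‖a‖ * Real.sin t) := by
  obtain ⟨h1, h2⟩ := SR_add_pos (norm_pos_iff.2 hb) hrs t
  rw [pnormF, Real.sq_sqrt (by positivity), lamS_sub_exp, norm_mul, Complex.norm_I, one_mul,
    Complex.norm_real, Real.norm_eq_abs, sq_abs]
  linear_combination -h1

/-- `f_ψ` is the matrix element of the projection `Π` onto the line of `u(z)`. -/
theorem fpsi_exp (hb : b ≠ 0) (hrs : ‖a‖ ^ 2 + ‖b‖ ^ 2 = 1) (φ ψ : ℂ × ℂ)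
    (hω1 : ‖ω‖ = 1) (ha : a / (‖a‖ : ℂ) = ω) (t : ℝ) :
    fpsi a b φ ψ (Complex.exp (Complex.I * t)) = HC ‖a‖ (ω * b) φ ψ t := by
  have hs := norm_pos_iff.2 hb
  obtain ⟨h1, h2⟩ := SR_add_pos hs hrs t
  have hS : 0 < SR ‖a‖ t := hs.trans_le (SR_ge hrs t)
  have hp := pnormF_sq_s8 hb hrs t
  have hββ : (ω * b) * (starRingEnd ℂ) (ω * b) = (‖b‖ : ℂ) ^ 2 := by
    rw [Complex.mul_conj, Complex.normSq_eq_norm_sq, norm_mul, hω1, one_mul]; push_cast; rfl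
  have hzc : (starRingEnd ℂ) (Complex.exp (Complex.I * t)) = Complex.exp (-(Complex.I * t)) := by
    rw [← Complex.exp_conj]; simp
  have hee : Complex.exp (-(Complex.I * t)) * Complex.exp (Complex.I * t) = 1 := by
    rw [← Complex.exp_add]; simp
  have e1 : (‖a‖ : ℂ) * Complex.exp (-(Complex.I * t)) - LB ‖a‖ t =
      Complex.I * (SR ‖a‖ t - ‖a‖ * Real.sin t : ℝ) := by
    rw [LB, SC_real hs hrs, exp_neg_I]; push_cast; ring
  have e2 : (‖a‖ : ℂ) * Complex.exp (Complex.I * t) - LB ‖a‖ t =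
      Complex.I * (SR ‖a‖ t + ‖a‖ * Real.sin t : ℝ) := by
    rw [LB, SC_real hs hrs, exp_I]; push_cast; ring
  rw [HC, e1, e2, SC_real hs hrs, fpsi, uvec, innC, innC, lamS_sub_exp, mul_div_right_comm, ha]
  set p := pnormF a b (Complex.exp (Complex.I * t))
  set X := SR ‖a‖ t + ‖a‖ * Real.sin t
  set Y := SR ‖a‖ t - ‖a‖ * Real.sin t
  set S := SR ‖a‖ t
  have hp0 : (p : ℂ) ≠ 0 := by
    intro h
    have : p = 0 := by exact_mod_cast h
    rw [this] at hp
    have : 0 < 2 * S * X := by positivity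
    linarith [hp]
  have hp' : (p : ℂ) ^ 2 = 2 * S * X := by exact_mod_cast hp
  have h1' : (X : ℂ) * Y = (‖b‖ : ℂ) ^ 2 := by exact_mod_cast h1
  have hS0 : (S : ℂ) ≠ 0 := by exact_mod_cast hS.ne'
  have hX0 : (X : ℂ) ≠ 0 := by exact_mod_cast h2.ne'
  simp only [map_mul, map_inv₀, Complex.conj_ofReal, Complex.conj_I, hzc] at hββ ⊢
  set z := Complex.exp (Complex.I * t)
  set z' := Complex.exp (-(Complex.I * t))
  set o := (starRingEnd ℂ) ω
  set b' := (starRingEnd ℂ) b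
  set x1 := (starRingEnd ℂ) ψ.1
  set x2 := (starRingEnd ℂ) ψ.2
  have L : ((φ.1 * ((p : ℂ)⁻¹ * (o * b' * z')) + φ.2 * ((p : ℂ)⁻¹ * (-Complex.I * X))) *
      ((p : ℂ)⁻¹ * (ω * b * z) * x1 + (p : ℂ)⁻¹ * (Complex.I * X) * x2)) =
      ((φ.1 * (o * b' * z') + φ.2 * (-Complex.I * X)) *
      ((ω * b * z) * x1 + (Complex.I * X) * x2)) / (p : ℂ) ^ 2 := by
    field_simp
  rw [L, hp', div_eq_div_iff (by simp [hS0, hX0]) (by simp [hS0])]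
  linear_combination (2 * S * Complex.I * φ.1 * x1) * (z' * z * hββ + (‖b‖ : ℂ) ^ 2 * hee - h1') -
    (2 * S * X * (z * ω * b * φ.2 * x1 - z' * o * b' * φ.1 * x2)
      + 2 * S * Complex.I * φ.2 * X ^ 2 * x2) * Complex.I_sq

/-- Since `u, Ju` is an orthonormal basis, `g_ψ(z) = ⟨φ, ψ⟩ - f_ψ(z)`; the shift by `π` turns the
complementary projection into `Π`. -/
theorem gpsi_exp (hb : b ≠ 0) (hrs : ‖a‖ ^ 2 + ‖b‖ ^ 2 = 1) (φ ψ : ℂ × ℂ)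
    (hω1 : ‖ω‖ = 1) (ha : a / (‖a‖ : ℂ) = ω) (t : ℝ) :
    gpsi a b φ ψ (Complex.exp (-(Complex.I * t))) = HC ‖a‖ (ω * b) φ ψ (Real.pi - t : ℝ) := by
  have e : Complex.exp (-(Complex.I * t)) = Complex.exp (Complex.I * (-t : ℝ)) := by
    congr 1; push_cast; ring
  have e' : ((Real.pi - t : ℝ) : ℂ) = ((-t : ℝ) : ℂ) + Real.pi := by push_cast; ring
  rw [e, e', HC_add_pi, ← fpsi_exp hb hrs φ ψ hω1 ha]
  generalize -t = t
  have hs := norm_pos_iff.2 hb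
  obtain ⟨h1, h2⟩ := SR_add_pos hs hrs t
  have hS : 0 < SR ‖a‖ t := hs.trans_le (SR_ge hrs t)
  have hp := pnormF_sq_s8 hb hrs t
  have hunit : innC (uvec a b (Complex.exp (Complex.I * t)))
      (uvec a b (Complex.exp (Complex.I * t))) = 1 := by
    have hz : ‖Complex.exp (Complex.I * t)‖ = 1 := by
      rw [mul_comm]; exact Complex.norm_exp_ofReal_mul_I t
    rw [innC, Complex.mul_conj, Complex.mul_conj, Complex.normSq_eq_norm_sq,
      Complex.normSq_eq_norm_sq, uvec, lamS_sub_exp, mul_div_right_comm, ha]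
    simp only [norm_mul, norm_inv, hω1, hz, Complex.norm_I, Complex.norm_real, Real.norm_eq_abs,
      one_mul, mul_one, mul_pow, inv_pow, sq_abs]
    rw [hp]
    have : (2 * SR ‖a‖ t * (SR ‖a‖ t + ‖a‖ * Real.sin t))⁻¹ * ‖b‖ ^ 2 +
        (2 * SR ‖a‖ t * (SR ‖a‖ t + ‖a‖ * Real.sin t))⁻¹ * (SR ‖a‖ t + ‖a‖ * Real.sin t) ^ 2 =
        1 := by
      rw [← h1]; field_simp; ring
    exact_mod_cast this
  set u := uvec a b (Complex.exp (Complex.I * t)) with hu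
  rw [innC] at hunit
  rw [gpsi, fpsi, ← hu, Jmap, innC, innC, innC, innC, innC]
  simp only [map_neg, Complex.conj_conj]
  linear_combination (φ.1 * (starRingEnd ℂ) ψ.1 + φ.2 * (starRingEnd ℂ) ψ.2) * hunit

end eigenvector

/-- The saddle point `t(ξ)`: it solves `μ'(t) = ξ`, there `μ''(t) = (1 - ξ²)√(r² - ξ²)/s` with
`r = |a|` and `s = |b|`, and its cosine is bounded below uniformly in `|ξ| ≤ α`. -/
theorem tF_facts {a b : ℂ} (ha : a ≠ 0) (hb : b ≠ 0) (hrs : ‖a‖ ^ 2 + ‖b‖ ^ 2 = 1) {α ξ : ℝ}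
    (hα0 : 0 < α) (hαa : α < ‖a‖) (hξ : |ξ| ≤ α) :
    -(Real.pi / 2) ≤ tF a b ξ ∧ tF a b ξ ≤ Real.pi / 2 ∧
      √(‖a‖ ^ 2 - α ^ 2) ≤ Real.cos (tF a b ξ) ∧ VR ‖a‖ (tF a b ξ) = ξ ∧
      ‖a‖ * ‖b‖ ^ 2 * Real.cos (tF a b ξ) / SR ‖a‖ (tF a b ξ) ^ 3 =
        (1 - ξ ^ 2) * √(‖a‖ ^ 2 - ξ ^ 2) / ‖b‖ := by
  have hr := norm_pos_iff.2 ha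
  have hs := norm_pos_iff.2 hb
  set r := ‖a‖
  set s := ‖b‖
  have hξα : ξ ^ 2 ≤ α ^ 2 := by rw [← sq_abs]; gcongr
  have hαr : α ^ 2 < r ^ 2 := by gcongr
  have hr1 : r ^ 2 < 1 := by nlinarith [pow_pos hs 2]
  have hq : 0 < 1 - ξ ^ 2 := by linarith
  have hd : 0 < r ^ 2 - ξ ^ 2 := by linarith
  have hqs := Real.sq_sqrt hq.le
  have hds := Real.sq_sqrt hd.le
  have hq0 := Real.sqrt_pos.2 hq
  have hd0 := Real.sqrt_pos.2 hd
  have hq1 : √(1 - ξ ^ 2) ≤ 1 := by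
    rw [Real.sqrt_le_left (by norm_num)]; nlinarith [sq_nonneg ξ]
  set q := √(1 - ξ ^ 2) with hqdef
  set d := √(r ^ 2 - ξ ^ 2) with hddef
  have hXY : (s * ξ / (r * q)) ^ 2 + (d / (r * q)) ^ 2 = 1 := by
    field_simp
    rw [hds, hqs]; linear_combination ξ ^ 2 * hrs
  have hX : |s * ξ / (r * q)| ≤ 1 := by
    rw [← sq_le_one_iff_abs_le_one]; nlinarith [sq_nonneg (d / (r * q))]
  rw [abs_le] at hX
  have htdef : tF a b ξ = Real.arcsin (s * ξ / (r * q)) := rfl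
  have hsin : Real.sin (tF a b ξ) = s * ξ / (r * q) := by
    rw [htdef, Real.sin_arcsin hX.1 hX.2]
  have hcos : Real.cos (tF a b ξ) = d / (r * q) := by
    rw [htdef, Real.cos_arcsin, ← hXY, add_sub_cancel_left, Real.sqrt_sq (by positivity)]
  have hSR : SR r (tF a b ξ) = s / q := by
    rw [SR, hcos, ← Real.sqrt_sq (by positivity : 0 ≤ s / q)]
    congr 1
    field_simp
    rw [hds, hqs]; linear_combination (-1 : ℝ) * hrs
  refine ⟨Real.neg_pi_div_two_le_arcsin _, Real.arcsin_le_pi_div_two _, ?_, ?_, ?_⟩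
  · rw [hcos, le_div_iff₀ (by positivity)]
    have h1 : √(r ^ 2 - α ^ 2) ≤ d := Real.sqrt_le_sqrt (by linarith)
    have h2 : r * q ≤ 1 := by nlinarith
    calc √(r ^ 2 - α ^ 2) * (r * q) ≤ d * 1 := by gcongr
      _ = d := mul_one _
  · rw [VR, hsin, hSR]; field_simp
  · rw [hcos, hSR, ← hqs]; field_simp

theorem LC_mu {a : ℂ} {s : ℝ} (hs : 0 < s) (hrs : ‖a‖ ^ 2 + s ^ 2 = 1) (t : ℝ) :
    LC ‖a‖ t = Complex.exp (Complex.I * (muF a t : ℝ)) ∧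
      LC ‖a‖ (Real.pi - t : ℝ) = -Complex.exp (-(Complex.I * (muF a t : ℝ))) := by
  have hb : (‖a‖ * Real.cos t) ^ 2 ≤ 1 := by
    have := one_sub_ge hrs t
    nlinarith [sq_nonneg s]
  have hb' := abs_le.1 ((sq_le_one_iff_abs_le_one _).1 hb)
  have hc : Complex.cos (muF a t : ℝ) = ‖a‖ * Complex.cos t := by
    rw [← Complex.ofReal_cos, muF, Real.cos_arccos hb'.1 hb'.2]; push_cast; rfl
  have hsn : Complex.sin (muF a t : ℝ) = (SR ‖a‖ t : ℝ) := by
    rw [← Complex.ofReal_sin, muF, Real.sin_arccos, SR, mul_pow]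
  constructor
  · rw [LC, SC_real hs hrs, exp_I, hc, hsn]
  · rw [LC]
    push_cast
    rw [SC_pi_sub, SC_real hs hrs, Complex.cos_pi_sub, exp_neg_I, hc, hsn]; ring

/-- The integrand at the two saddles. -/
theorem FC_saddle {a : ℂ} {s : ℝ} (hs : 0 < s) (hrs : ‖a‖ ^ 2 + s ^ 2 = 1) (H : ℂ → ℂ) {n : ℕ}
    (hn : 0 < n) {y : ℤ} {ξ : ℝ} (hξ : ξ = y / n) (t : ℝ) :
    FC ‖a‖ H n y t = Complex.exp (Complex.I * ((n * (muF a t - ξ * t) : ℝ) : ℂ)) * H t ∧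
      FC ‖a‖ H n y (Real.pi - t : ℝ) = (-1 : ℂ) ^ ((n : ℤ) + y) *
        Complex.exp (-(Complex.I * ((n * (muF a t - ξ * t) : ℝ) : ℂ))) * H (Real.pi - t : ℝ) := by
  obtain ⟨h1, h2⟩ := LC_mu hs hrs t
  have hy : (y : ℂ) = n * ξ := by
    have hn' : (n : ℝ) ≠ 0 := by exact_mod_cast hn.ne'
    have : (y : ℝ) = n * ξ := by rw [hξ]; field_simp
    exact_mod_cast this
  constructor
  · rw [FC, h1, ← Complex.exp_nat_mul, ← Complex.exp_add, hy]
    congr 2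
    push_cast; ring
  · rw [FC, h2, neg_pow, ← Complex.exp_nat_mul, zpow_add₀ (by norm_num), zpow_natCast,
      ← exp_int_pi, show -(Complex.I * (y : ℂ) * ((Real.pi - t : ℝ) : ℂ)) =
        (Complex.I * y * Real.pi + Complex.I * y * t) - y * (2 * Real.pi * Complex.I) by
          push_cast; ring, Complex.exp_periodic.sub_int_mul_eq, Complex.exp_add,
      show -(Complex.I * ((n * (muF a t - ξ * t) : ℝ) : ℂ)) =
        n * -(Complex.I * (muF a t : ℝ)) + Complex.I * y * t by rw [hy]; push_cast; ring,
      Complex.exp_add]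
    ring

theorem exp_pi_div_four :
    Complex.exp ((Real.pi : ℂ) * Complex.I / 4) = (√2 / 2 : ℝ) * (1 + Complex.I) ∧
      Complex.exp (-((Real.pi : ℂ) * Complex.I / 4)) = (√2 / 2 : ℝ) * (1 - Complex.I) := by
  have e : (Real.pi : ℂ) * Complex.I / 4 = Complex.I * ((Real.pi / 4 : ℝ) : ℂ) := by
    push_cast; ring
  rw [e, exp_I, exp_neg_I, ← Complex.ofReal_cos, ← Complex.ofReal_sin, Real.cos_pi_div_four,
    Real.sin_pi_div_four]
  constructor <;> ring

/-- An `O(n^{-3/2})` error is `O(1/n)` relative to a prefactor `P` of order at least `n^{-1/2}`. -/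
theorem remainder_bound {n C P M : ℝ} (hn : 0 < n) (hC : 0 ≤ C) (hP : 0 < P)
    (h : 1 ≤ P * (√n * M)) :
    C / (n * √n) ≤ (C * M + 1) / n * (2 * Real.pi * P) := by
  have hsn : 0 < √n := Real.sqrt_pos.2 hn
  have h3 : (1 : ℝ) ≤ 2 * Real.pi := by linarith [Real.pi_gt_three]
  rw [div_mul_eq_mul_div, div_le_div_iff₀ (by positivity) hn]
  have h4 : C ≤ C * (P * (√n * M)) := le_mul_of_one_le_right hC h
  have h5 : C * (P * (√n * M)) ≤ C * (P * (√n * M)) * (2 * Real.pi) :=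
    le_mul_of_one_le_right (by positivity) h3
  have h6 : 0 ≤ 2 * Real.pi * P * (n * √n) := by positivity
  calc C * n ≤ C * (P * (√n * M)) * (2 * Real.pi) * n := by
        gcongr; exact h4.trans h5
    _ ≤ (C * M + 1) * (2 * Real.pi * P) * (n * √n) := by linarith

/-- The exact identity defining the relative error `E` from the absolute one. -/
theorem amplitude_algebra (p w e1 e2 f g J : ℂ) {P : ℝ} (hP : 0 < P) :
    p * w * (1 / (2 * (Real.pi : ℂ)) * J) = p * w * (P : ℂ) *
      (e1 * ((√2 / 2 : ℝ) * (1 + Complex.I)) * f + e2 * ((√2 / 2 : ℝ) * (1 - Complex.I)) * g +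
        (J - ((√2 * Real.pi * P : ℝ) : ℂ) * ((1 + Complex.I) * (e1 * f) +
          (1 - Complex.I) * (e2 * g))) / ((2 * Real.pi * P : ℝ) : ℂ)) := by
  have hPc : (P : ℂ) ≠ 0 := by exact_mod_cast hP.ne'
  have hpic : (Real.pi : ℂ) ≠ 0 := by exact_mod_cast Real.pi_pos.ne'
  push_cast
  field_simp
  ring

/-- Proposition `amp1`: stationary-phase asymptotics of the transition
amplitude in the allowed region, uniformly over `|y/n| ≤ α < |a|`. -/
theorem stmt8 (a b : ℂ) (hab1 : ‖a‖ ^ 2 + ‖b‖ ^ 2 = 1) (hab : a * b ≠ 0)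
    (φ : ℂ × ℂ) (hφ : nsq φ = 1) (α : ℝ) (hα0 : 0 < α) (hαa : α < ‖a‖)
    (ψ : ℂ × ℂ) (hψ : nsq ψ = 1) :
    ∃ C : ℝ, 0 < C ∧
      ∀ n : ℕ, 0 < n → ∀ y : ℤ, ∀ ξ : ℝ, ξ = (y : ℝ) / (n : ℝ) → |ξ| ≤ α →
        ∃ E : ℂ, ‖E‖ ≤ C / (n : ℝ) ∧
          innC (((qwStep a b)^[n] (qwDelta φ)) y) ψ =
            (1 + (-1 : ℂ) ^ ((n : ℤ) + y)) * (a / (‖a‖ : ℂ)) ^ (-y) *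
              ((Real.sqrt (‖b‖ /
                  (2 * Real.pi * (n : ℝ) * (1 - ξ ^ 2) * Real.sqrt (‖a‖ ^ 2 - ξ ^ 2))) : ℝ) : ℂ) *
              (Complex.exp (Complex.I * (((n : ℝ) * (muF a (tF a b ξ) - ξ * tF a b ξ) : ℝ) : ℂ)
                    + (Real.pi : ℂ) * Complex.I / 4) *
                  fpsi a b φ ψ (Complex.exp (Complex.I * ((tF a b ξ : ℝ) : ℂ)))
                + Complex.exp (-(Complex.I * (((n : ℝ) * (muF a (tF a b ξ) - ξ * tF a b ξ) : ℝ) : ℂ))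
                    - (Real.pi : ℂ) * Complex.I / 4) *
                  gpsi a b φ ψ (Complex.exp (-(Complex.I * ((tF a b ξ : ℝ) : ℂ))))
                + E) := by
  have ha : a ≠ 0 := left_ne_zero_of_mul hab
  have hb : b ≠ 0 := right_ne_zero_of_mul hab
  have hr := norm_pos_iff.2 ha
  have hs := norm_pos_iff.2 hb
  have hrc : (‖a‖ : ℂ) ≠ 0 := by exact_mod_cast hr.ne'
  set ω : ℂ := a / (‖a‖ : ℂ) with hωdef
  have haω : a = ‖a‖ * ω := by rw [hωdef]; field_simp
  have hω1 : ‖ω‖ = 1 := by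
    rw [hωdef, norm_div, Complex.norm_real, norm_norm, div_self hr.ne']
  have hωω : ω * (starRingEnd ℂ) ω = 1 := by
    rw [Complex.mul_conj, Complex.normSq_eq_norm_sq, hω1]; simp
  obtain ⟨δ, hδ0, hδ1, hδ⟩ := exists_delta (r := ‖a‖) (by nlinarith [pow_pos hs 2])
  have hc0 : 0 < √(‖a‖ ^ 2 - α ^ 2) := Real.sqrt_pos.2 (by nlinarith)
  obtain ⟨C, hC, hosc⟩ := osc_integral hr hs hab1 hδ0 hδ1 hδ
    (HC_differentiableOn hδ (ω * b) φ ψ) (HC_periodic ‖a‖ (ω * b) φ ψ) hc0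
  -- the factor `√(2π/|b|)` bounds `1 / (P√n)`, where `P` is the prefactor of the statement
  refine ⟨C * √(2 * Real.pi / ‖b‖) + 1, by positivity, ?_⟩
  intro n hn y ξ hξ hξα
  have hn0 : (0 : ℝ) < n := by exact_mod_cast hn
  -- for `n + y` odd both sides vanish
  by_cases hpar : (1 + (-1 : ℂ) ^ ((n : ℤ) + y)) = 0
  · refine ⟨0, by rw [norm_zero]; positivity, ?_⟩
    rw [amp_eq hs hab1 rfl hωω hω1 haω, hpar]; ring
  have hpar' : (-1 : ℂ) ^ ((n : ℤ) + y) = 1 := by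
    rcases Int.even_or_odd ((n : ℤ) + y) with h | h
    · exact h.neg_one_zpow
    · exact absurd (by rw [h.neg_one_zpow]; ring) hpar
  obtain ⟨ht1, ht2, hcos, hV, hm⟩ := tF_facts ha hb hab1 hα0 hαa hξα
  have hmain := hosc n y (tF a b ξ) _ hn ht1 ht2 hcos (hV.trans hξ) hm
  obtain ⟨hF1, hF2⟩ := FC_saddle hs hab1 (HC ‖a‖ (ω * b) φ ψ) hn hξ (tF a b ξ)
  rw [hF1, hF2, hpar', one_mul, ← fpsi_exp hb hab1 φ ψ hω1 hωdef.symm,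
    ← gpsi_exp hb hab1 φ ψ hω1 hωdef.symm] at hmain
  rw [amp_eq hs hab1 rfl hωω hω1 haω, Complex.exp_add,
    sub_eq_add_neg (-(Complex.I * _)) ((Real.pi : ℂ) * Complex.I / 4), Complex.exp_add,
    exp_pi_div_four.1, exp_pi_div_four.2]
  set f := fpsi a b φ ψ (Complex.exp (Complex.I * ((tF a b ξ : ℝ) : ℂ)))
  set g := gpsi a b φ ψ (Complex.exp (-(Complex.I * ((tF a b ξ : ℝ) : ℂ))))
  set e1 := Complex.exp (Complex.I * (((n : ℝ) * (muF a (tF a b ξ) - ξ * tF a b ξ) : ℝ) : ℂ))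
  set e2 := Complex.exp (-(Complex.I * (((n : ℝ) * (muF a (tF a b ξ) - ξ * tF a b ξ) : ℝ) : ℂ)))
  set J := ∫ t in (-Real.pi)..Real.pi, FC ‖a‖ (HC ‖a‖ (ω * b) φ ψ) n y t
  have hξ2 : ξ ^ 2 ≤ α ^ 2 := by rw [← sq_abs]; gcongr
  have hαr : α ^ 2 < ‖a‖ ^ 2 := by gcongr
  have hq : 0 < 1 - ξ ^ 2 := by nlinarith [pow_pos hs 2]
  have hd0 : 0 < √(‖a‖ ^ 2 - ξ ^ 2) := Real.sqrt_pos.2 (by linarith)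
  have hd1 : √(‖a‖ ^ 2 - ξ ^ 2) ≤ 1 := by
    rw [Real.sqrt_le_left (by norm_num)]; nlinarith [sq_nonneg ξ, sq_nonneg ‖b‖]
  set d := √(‖a‖ ^ 2 - ξ ^ 2)
  have hpi := Real.pi_pos
  set P := √(‖b‖ / (2 * Real.pi * n * (1 - ξ ^ 2) * d)) with hP
  have hP0 : 0 < P := Real.sqrt_pos.2 (by positivity)
  -- the Laplace factor `√(π / (nμ''))` is `√2 π` times the prefactor of the statement
  have hQ : √(Real.pi / (n * ((1 - ξ ^ 2) * d / ‖b‖))) = √2 * Real.pi * P := by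
    rw [hP, ← Real.sqrt_sq hpi.le, ← Real.sqrt_mul (by norm_num), ← Real.sqrt_mul (by positivity)]
    congr 1
    rw [Real.sqrt_sq hpi.le]
    field_simp
  have hPn : 1 ≤ P * (√n * √(2 * Real.pi / ‖b‖)) := by
    rw [hP, ← Real.sqrt_mul hn0.le, ← Real.sqrt_mul (by positivity)]
    rw [Real.one_le_sqrt]
    rw [show ‖b‖ / (2 * Real.pi * n * (1 - ξ ^ 2) * d) * (n * (2 * Real.pi / ‖b‖)) =
      1 / ((1 - ξ ^ 2) * d) by field_simp, le_div_iff₀ (by positivity), one_mul]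
    nlinarith [sq_nonneg ξ]
  rw [hQ] at hmain
  have hPc : (P : ℂ) ≠ 0 := by exact_mod_cast hP0.ne'
  have hpic : (Real.pi : ℂ) ≠ 0 := by exact_mod_cast hpi.ne'
  refine ⟨(J - ((√2 * Real.pi * P : ℝ) : ℂ) * ((1 + Complex.I) * (e1 * f) +
    (1 - Complex.I) * (e2 * g))) / ((2 * Real.pi * P : ℝ) : ℂ), ?_, ?_⟩
  · rw [norm_div, Complex.norm_real, Real.norm_of_nonneg (by positivity), div_le_iff₀ (by positivity)]
    exact hmain.trans (remainder_bound hn0 hC hP0 hPn)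
  · exact amplitude_algebra _ _ e1 e2 f g J hP0
end
end

section
/- For every η with |η| < |a|, setting f_i(η) = f_{e_i}(e^{i t(η)}) and g_i(η) = g_{e_i}(e^{−i t(η)}) for i = 1, 2 (where e₁, e₂ is the standard basis of ℂ²), one has |f₁(η)|² + |f₂(η)|² + |g₁(η)|² + |g₂(η)|² = 1 + η λ_A(φ), where λ_A(φ) = |φ₂|² − |φ₁|² + (1/|a|²)(a b conj(φ₁) φ₂ + conj(a) conj(b) φ₁ conj(φ₂)). -/
/-!
Since `u(z)` and `Ju(z)` are unit vectors, summing over the standard basis reduces the left side to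
`|⟨φ, u(z)⟩|² + |⟨φ, Ju(conj z)⟩|²` with `z = e^{it(η)}`. Put `S = √(1 - |a|² cos² t)`. On the unit
circle `λ(z) - |a| conj z = i (S + |a| sin t)`, and the angle `t(η)` is exactly the one for which
`|a| sin t = η S`. Hence `p(z)² = 2 S² (1 + η)`, which gives
`|u₁|² = (1 - η)/2`, `|u₂|² = (1 + η)/2` and `conj(u₁) u₂ = (conj(ab)/|a|) conj z · i/(2S)`
(`uvec_spec`). Passing to `conj z` replaces `η` by `-η`. In the expansion of the two squared moduli
the diagonal terms add up to `1 + η (|φ₂|² - |φ₁|²)`, and the cross terms involve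
`i (conj z - z)/(2S) = sin t / S = η/|a|`, which produces the rest of `η λ_A(φ)`.
-/

open Filter Topology Asymptotics MeasureTheory

noncomputable section

lemma sum_fpsi (a b : ℂ) (φ : ℂ × ℂ) (z : ℂ) (h : nsq (uvec a b z) = 1) :
    ‖fpsi a b φ (1, 0) z‖ ^ 2 + ‖fpsi a b φ (0, 1) z‖ ^ 2 = ‖innC φ (uvec a b z)‖ ^ 2 := by
  unfold nsq at h
  have h1 : innC (uvec a b z) (1, 0) = (uvec a b z).1 := by simp [innC]
  have h2 : innC (uvec a b z) (0, 1) = (uvec a b z).2 := by simp [innC]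
  rw [fpsi, fpsi, h1, h2, norm_mul, norm_mul]
  linear_combination ‖innC φ (uvec a b z)‖ ^ 2 * h

lemma sum_gpsi (a b : ℂ) (φ : ℂ × ℂ) (z : ℂ) (h : nsq (uvec a b z) = 1) :
    ‖gpsi a b φ (1, 0) z‖ ^ 2 + ‖gpsi a b φ (0, 1) z‖ ^ 2
      = ‖innC φ (Jmap (uvec a b z))‖ ^ 2 := by
  unfold nsq at h
  have h1 : ‖innC (Jmap (uvec a b z)) (1, 0)‖ = ‖(uvec a b z).2‖ := by simp [innC, Jmap]
  have h2 : ‖innC (Jmap (uvec a b z)) (0, 1)‖ = ‖(uvec a b z).1‖ := by simp [innC, Jmap]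
  rw [gpsi, gpsi, norm_mul, norm_mul, h1, h2]
  linear_combination ‖innC φ (Jmap (uvec a b z))‖ ^ 2 * h

lemma norm_innC_sq (φ w : ℂ × ℂ) :
    ‖innC φ w‖ ^ 2 = ‖φ.1‖ ^ 2 * ‖w.1‖ ^ 2 + ‖φ.2‖ ^ 2 * ‖w.2‖ ^ 2
      + 2 * (φ.1 * (starRingEnd ℂ) φ.2 * ((starRingEnd ℂ) w.1 * w.2)).re := by
  simp only [innC, Complex.sq_norm, Complex.normSq_apply, Complex.add_re, Complex.add_im,
    Complex.mul_re, Complex.mul_im, Complex.conj_re, Complex.conj_im]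
  ring

lemma norm_innC_Jmap_sq (φ w : ℂ × ℂ) :
    ‖innC φ (Jmap w)‖ ^ 2 = ‖φ.1‖ ^ 2 * ‖w.2‖ ^ 2 + ‖φ.2‖ ^ 2 * ‖w.1‖ ^ 2
      - 2 * (φ.1 * (starRingEnd ℂ) φ.2 * ((starRingEnd ℂ) w.1 * w.2)).re := by
  simp only [innC, Jmap, Complex.sq_norm, Complex.normSq_apply, Complex.add_re, Complex.add_im,
    Complex.mul_re, Complex.mul_im, Complex.conj_re, Complex.conj_im, Complex.neg_re,
    Complex.neg_im]
  ring

/-- The entries of `u(z)` for `|z| = 1`, where `η` is determined by `|a| Im z = η S`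
with `S = √(1 - |a|² (Re z)²)`. -/
lemma uvec_spec (a b : ℂ) (hab1 : ‖a‖ ^ 2 + ‖b‖ ^ 2 = 1) (ha : 0 < ‖a‖) (z : ℂ) (η S : ℝ)
    (hη : -1 < η) (hS : 0 < S) (hz : z.re ^ 2 + z.im ^ 2 = 1)
    (hS2 : S ^ 2 = 1 - ‖a‖ ^ 2 * z.re ^ 2) (hs : ‖a‖ * z.im = η * S) :
    ‖(uvec a b z).1‖ ^ 2 = (1 - η) / 2 ∧ ‖(uvec a b z).2‖ ^ 2 = (1 + η) / 2 ∧
      (starRingEnd ℂ) (uvec a b z).1 * (uvec a b z).2 =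
        (starRingEnd ℂ) (a * b) * ((starRingEnd ℂ) z * Complex.I) *
          ((1 / (2 * ‖a‖ * S) : ℝ) : ℂ) := by
  have hnz : ‖z‖ ^ 2 = 1 := by
    rw [Complex.sq_norm, Complex.normSq_apply]; linarith
  have hphi : phit z = z.re := by
    simp only [phit, Complex.inv_def, Complex.normSq_eq_norm_sq, hnz]
    simp
  have hlam : lamS a z - (‖a‖ : ℂ) * (starRingEnd ℂ) z = Complex.I * ((S * (1 + η) : ℝ) : ℂ) := by
    have : Real.sqrt (1 - ‖a‖ ^ 2 * z.re ^ 2) = S := by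
      rw [← hS2, Real.sqrt_sq hS.le]
    rw [lamS, hphi, this]
    apply Complex.ext <;> simp
    linarith
  have hb : ‖b‖ ^ 2 = S ^ 2 * (1 - η ^ 2) := by
    have : (‖a‖ * z.im) ^ 2 = (η * S) ^ 2 := by rw [hs]
    nlinarith
  have hpp : 0 < 1 + η := by linarith
  have hp2 : pnormF a b z ^ 2 = 2 * S ^ 2 * (1 + η) := by
    rw [pnormF, Real.sq_sqrt (by positivity), hlam, hb, norm_mul, Complex.norm_I,
      Complex.norm_real, Real.norm_of_nonneg (by positivity)]
    ring
  have hp0 : pnormF a b z ≠ 0 := by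
    intro h
    rw [h] at hp2
    have : 0 < 2 * S ^ 2 * (1 + η) := by positivity
    simp at hp2; grind
  have hu1 : ‖(uvec a b z).1‖ ^ 2 = (pnormF a b z ^ 2)⁻¹ * ‖b‖ ^ 2 * ‖z‖ ^ 2 := by
    simp only [uvec, norm_mul, norm_inv, norm_div, Complex.norm_real, mul_pow, inv_pow, div_pow,
      Real.norm_eq_abs, sq_abs]
    field_simp
  have hu2 : ‖(uvec a b z).2‖ ^ 2 = (pnormF a b z ^ 2)⁻¹ * (S * (1 + η)) ^ 2 := by
    simp only [uvec, hlam, norm_mul, norm_inv, Complex.norm_real, mul_pow, inv_pow,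
      Real.norm_eq_abs, sq_abs, Complex.norm_I]
    ring
  refine ⟨?_, ?_, ?_⟩
  · rw [hu1, hp2, hb, hnz]
    field_simp
    ring
  · rw [hu2, hp2]
    field_simp
  · have hc : ((pnormF a b z : ℝ) : ℂ)⁻¹ * ((pnormF a b z : ℝ) : ℂ)⁻¹ * (‖a‖ : ℂ)⁻¹ *
        ((S * (1 + η) : ℝ) : ℂ) = ((1 / (2 * ‖a‖ * S) : ℝ) : ℂ) := by
      norm_cast
      rw [← mul_inv, ← sq, hp2]
      field_simp
    rw [← hc]
    simp only [uvec, hlam, map_mul, map_inv₀, map_div₀, Complex.conj_ofReal]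
    ring

/-- The defining property of `t = t(η)`: `|a| sin t = η S` for `S = √(1 - |a|² cos² t)`. -/
lemma tF_spec (a b : ℂ) (hab1 : ‖a‖ ^ 2 + ‖b‖ ^ 2 = 1) (ha : 0 < ‖a‖) (hb : 0 < ‖b‖) (η : ℝ)
    (hη : |η| < ‖a‖) :
    ∃ S : ℝ, 0 < S ∧ S ^ 2 = 1 - ‖a‖ ^ 2 * Real.cos (tF a b η) ^ 2 ∧
      ‖a‖ * Real.sin (tF a b η) = η * S := by
  have hη2 : η ^ 2 < ‖a‖ ^ 2 := by rw [← sq_abs]; gcongr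
  have hq : 0 < 1 - η ^ 2 := by nlinarith
  have hR := Real.sqrt_pos.mpr hq
  have hR2 := Real.sq_sqrt hq.le
  set R := Real.sqrt (1 - η ^ 2) with hRdef
  have hx2 : (‖b‖ * η / (‖a‖ * R)) ^ 2 ≤ 1 := by
    rw [div_pow, div_le_one (by positivity), mul_pow, mul_pow, hR2]
    nlinarith
  have hx := abs_le.mp ((sq_le_one_iff_abs_le_one _).mp hx2)
  have hsin : Real.sin (tF a b η) = ‖b‖ * η / (‖a‖ * R) := Real.sin_arcsin hx.1 hx.2
  refine ⟨‖b‖ / R, by positivity, ?_, ?_⟩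
  · rw [Real.cos_sq', hsin]
    field_simp
    rw [hR2]
    linear_combination (1 - η ^ 2) * hab1
  · rw [hsin]
    field_simp

/-- for `|η| < |a|`, with `f_i(η) = f_{e_i}(e^{it(η)})`,
`g_i(η) = g_{e_i}(e^{−it(η)})`, one has
`|f₁|² + |f₂|² + |g₁|² + |g₂|² = 1 + η λ_A(φ)`. -/
theorem stmt9 (a b : ℂ) (hab1 : ‖a‖ ^ 2 + ‖b‖ ^ 2 = 1) (hab : a * b ≠ 0)
    (φ : ℂ × ℂ) (hφ : nsq φ = 1) (η : ℝ) (hη : |η| < ‖a‖) :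
    ‖fpsi a b φ (1, 0) (Complex.exp (Complex.I * ((tF a b η : ℝ) : ℂ)))‖ ^ 2 +
      ‖fpsi a b φ (0, 1) (Complex.exp (Complex.I * ((tF a b η : ℝ) : ℂ)))‖ ^ 2 +
      ‖gpsi a b φ (1, 0) (Complex.exp (-(Complex.I * ((tF a b η : ℝ) : ℂ))))‖ ^ 2 +
      ‖gpsi a b φ (0, 1) (Complex.exp (-(Complex.I * ((tF a b η : ℝ) : ℂ))))‖ ^ 2 =
      1 + η * lamA a b φ := by
  have ha : 0 < ‖a‖ := norm_pos_iff.mpr (left_ne_zero_of_mul hab)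
  have hb : 0 < ‖b‖ := norm_pos_iff.mpr (right_ne_zero_of_mul hab)
  obtain ⟨S, hS, hS2, hs⟩ := tF_spec a b hab1 ha hb η hη
  have ha1 : ‖a‖ < 1 := by nlinarith
  have hη' := abs_lt.mp (hη.trans ha1)
  set t := tF a b η
  have hre : (Complex.exp (Complex.I * (t : ℂ))).re = Real.cos t := by
    rw [mul_comm, Complex.exp_ofReal_mul_I_re]
  have him : (Complex.exp (Complex.I * (t : ℂ))).im = Real.sin t := by
    rw [mul_comm, Complex.exp_ofReal_mul_I_im]
  have hconj : Complex.exp (-(Complex.I * (t : ℂ)))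
      = (starRingEnd ℂ) (Complex.exp (Complex.I * (t : ℂ))) := by
    rw [← Complex.exp_conj]; simp
  rw [hconj]
  set z := Complex.exp (Complex.I * (t : ℂ))
  have hz : z.re ^ 2 + z.im ^ 2 = 1 := by rw [hre, him, Real.cos_sq_add_sin_sq]
  obtain ⟨u1, u2, u3⟩ := uvec_spec a b hab1 ha z η S hη'.1 hS hz (by rw [hre, hS2])
    (by rw [him, hs])
  obtain ⟨v1, v2, v3⟩ := uvec_spec a b hab1 ha ((starRingEnd ℂ) z) (-η) S (by linarith) hS
    (by simpa using hz) (by rw [Complex.conj_re, hre, hS2])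
    (by rw [Complex.conj_im, him]; linarith)
  have hf := sum_fpsi a b φ z (by rw [nsq, u1, u2]; ring)
  have hg := sum_gpsi a b φ ((starRingEnd ℂ) z) (by rw [nsq, v1, v2]; ring)
  rw [add_assoc, hf, hg, norm_innC_sq, norm_innC_Jmap_sq, u1, u2, u3, v1, v2, v3]
  -- The sum of the two cross terms, using `i (conj z - z) = 2 sin t` and `sin t = η S / |a|`.
  have hcross : φ.1 * (starRingEnd ℂ) φ.2 * ((starRingEnd ℂ) (a * b) *
        ((starRingEnd ℂ) z * Complex.I) * ((1 / (2 * ‖a‖ * S) : ℝ) : ℂ))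
      - φ.1 * (starRingEnd ℂ) φ.2 * ((starRingEnd ℂ) (a * b) *
        ((starRingEnd ℂ) ((starRingEnd ℂ) z) * Complex.I) * ((1 / (2 * ‖a‖ * S) : ℝ) : ℂ))
      = φ.1 * (starRingEnd ℂ) φ.2 * (starRingEnd ℂ) (a * b) * ((η / ‖a‖ ^ 2 : ℝ) : ℂ) := by
    have h1 : ((starRingEnd ℂ) z - z) * Complex.I = ((2 * Real.sin t : ℝ) : ℂ) := by
      apply Complex.ext <;> simp [him, -Complex.ofReal_sin]
      ring
    have h2 : 2 * Real.sin t * (1 / (2 * ‖a‖ * S)) = η / ‖a‖ ^ 2 := by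
      field_simp
      linarith
    rw [← h2, Complex.ofReal_mul, ← h1, Complex.conj_conj]
    ring
  have hcr := congrArg Complex.re hcross
  rw [Complex.sub_re, Complex.re_mul_ofReal] at hcr
  have hlam : (a * b * (starRingEnd ℂ) φ.1 * φ.2 +
      (starRingEnd ℂ) a * (starRingEnd ℂ) b * φ.1 * (starRingEnd ℂ) φ.2).re
      = 2 * (φ.1 * (starRingEnd ℂ) φ.2 * (starRingEnd ℂ) (a * b)).re := by
    simp only [map_mul, Complex.add_re, Complex.mul_re, Complex.mul_im, Complex.conj_re,
      Complex.conj_im]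
    ring
  rw [lamA, hlam]
  unfold nsq at hφ
  linear_combination 2 * hcr + hφ
end
end

section
/- Let −|a| < α < β < |a| with 0 ∉ [α, β]. For each positive integer n, let y₀ < y₁ < ... < y_{s_n} enumerate the integers y with y + n even and nα ≤ y ≤ nβ. Then there exists a constant C > 0 such that |Σ_{j=0}^{k} e^{i n θ(y_j/n)}| ≤ C for all n and all k with 0 ≤ k ≤ s_n. -/
/-!
Put `x_k = y_k / n`. The parameter `t = t(η)` is the critical point defined by `μ'(t) = η`, so the
derivative of `θ(η) = 2μ(t(η)) - 2ηt(η)` is just `-2t(η)` (`hasDerivAt_thetaF`). As consecutive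
`y_k` differ by `2`, the mean value theorem gives phase increments
`δ_k = nθ(x_{k+1}) - nθ(x_k) = -4t(ξ_k)` with `ξ_k` between `x_k` and `x_{k+1}`. Since `t` is strictly
increasing with values in `(-π/2, π/2)` and vanishes only at `0`, the `δ_k` are decreasing and stay in
a compact set that contains no multiple of `2π`; here `0 ∉ [α, β]` is used. The claim is then the
Kusmin–Landau inequality (`kusmin_landau`), proved by summation by parts from
`e^{if_k} = (e^{if_{k+1}} - e^{if_k}) / (e^{iδ_k} - 1)`.
-/

open Filter Topology Asymptotics MeasureTheory

noncomputable section

/-- The set of integers `y` with `y + n` even and `nα ≤ y ≤ nβ`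
(for `n ≥ 1`, `nα ≤ y ↔ ⌈nα⌉ ≤ y` and `y ≤ nβ ↔ y ≤ ⌊nβ⌋`). These are exactly the points
`y₀ < y₁ < ⋯ < y_{s_n}` of the paper; a partial sum `∑_{j=0}^{k}` over the enumeration is the
same as a sum over the elements `≤ m` for a cutoff `m = y_k`. -/
def Tset (α β : ℝ) (n : ℕ) : Finset ℤ :=
  (Finset.Icc ⌈(n : ℝ) * α⌉ ⌊(n : ℝ) * β⌋).filter fun y => Even ((n : ℤ) + y)

/-! ### Kusmin–Landau inequality -/

lemma norm_cexp_sub_cexp_le (x y : ℝ) :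
    ‖Complex.exp (Complex.I * x) - Complex.exp (Complex.I * y)‖ ≤ |x - y| := by
  have h : Complex.exp (Complex.I * x) - Complex.exp (Complex.I * y)
      = Complex.exp (Complex.I * y) * (Complex.exp (Complex.I * ((x - y : ℝ) : ℂ)) - 1) := by
    rw [mul_sub, ← Complex.exp_add]
    push_cast
    ring_nf
  rw [h, norm_mul, Complex.norm_exp_I_mul_ofReal, one_mul]
  simpa using Real.norm_exp_I_mul_ofReal_sub_one_le (x := x - y)

/-- Summation by parts, as an induction: the partial sum is compared with
`e^{if_{N+1}} / (e^{iδ_N} - 1)`, and the error grows by the variation of `1 / (e^{iδ_k} - 1)`. -/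
lemma kusmin_landau_aux (f δ : ℕ → ℝ) (c : ℝ) (hc : 0 < c) (N : ℕ)
    (hf : ∀ k ≤ N, f (k + 1) = f k + δ k)
    (hδ : ∀ k ≤ N, c ≤ ‖Complex.exp (Complex.I * δ k) - 1‖)
    (hanti : ∀ k < N, δ (k + 1) ≤ δ k) :
    ‖∑ k ∈ Finset.range (N + 1), Complex.exp (Complex.I * f k)
        - Complex.exp (Complex.I * f (N + 1)) * (Complex.exp (Complex.I * δ N) - 1)⁻¹‖
      ≤ 1 / c + (δ 0 - δ N) / c ^ 2 := by
  have hne : ∀ k ≤ N, Complex.exp (Complex.I * δ k) - 1 ≠ 0 := fun k hk =>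
    norm_pos_iff.1 (hc.trans_le (hδ k hk))
  have hstep : ∀ k ≤ N, Complex.exp (Complex.I * f k)
      - Complex.exp (Complex.I * f (k + 1)) * (Complex.exp (Complex.I * δ k) - 1)⁻¹
      = -(Complex.exp (Complex.I * f k) * (Complex.exp (Complex.I * δ k) - 1)⁻¹) := by
    intro k hk
    have h1 := hne k hk
    rw [hf k hk]
    push_cast
    rw [mul_add, Complex.exp_add]
    field_simp
    ring
  induction N with
  | zero =>
    rw [zero_add, Finset.sum_range_one, hstep 0 le_rfl, norm_neg, norm_mul,
      Complex.norm_exp_I_mul_ofReal, one_mul, norm_inv, sub_self, zero_div, add_zero, one_div]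
    exact inv_anti₀ hc (hδ 0 le_rfl)
  | succ N ih =>
    have ih' := ih (fun k hk => hf k (by omega)) (fun k hk => hδ k (by omega))
      (fun k hk => hanti k (by omega)) (fun k hk => hne k (by omega))
      (fun k hk => hstep k (by omega))
    have hz := hne N (by omega)
    have hw := hne (N + 1) le_rfl
    have key : ∑ k ∈ Finset.range (N + 1 + 1), Complex.exp (Complex.I * f k)
        - Complex.exp (Complex.I * f (N + 1 + 1)) * (Complex.exp (Complex.I * δ (N + 1)) - 1)⁻¹
        = (∑ k ∈ Finset.range (N + 1), Complex.exp (Complex.I * f k)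
          - Complex.exp (Complex.I * f (N + 1)) * (Complex.exp (Complex.I * δ N) - 1)⁻¹)
          + Complex.exp (Complex.I * f (N + 1)) *
            ((Complex.exp (Complex.I * δ N) - 1)⁻¹
              - (Complex.exp (Complex.I * δ (N + 1)) - 1)⁻¹) := by
      rw [Finset.sum_range_succ, add_sub_assoc, hstep (N + 1) le_rfl]
      ring
    have hdiff : ‖(Complex.exp (Complex.I * δ N) - 1)⁻¹
        - (Complex.exp (Complex.I * δ (N + 1)) - 1)⁻¹‖ ≤ (δ N - δ (N + 1)) / c ^ 2 := by
      rw [inv_sub_inv hz hw, norm_div, norm_mul, sub_sub_sub_cancel_right, sq]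
      have h1 := norm_cexp_sub_cexp_le (δ (N + 1)) (δ N)
      rw [abs_sub_comm, abs_of_nonneg (sub_nonneg.2 (hanti N (by omega)))] at h1
      exact div_le_div₀ (sub_nonneg.2 (hanti N (by omega))) h1 (by positivity)
        (mul_le_mul (hδ N (by omega)) (hδ (N + 1) le_rfl) hc.le (norm_nonneg _))
    rw [key]
    refine (norm_add_le _ _).trans ?_
    rw [norm_mul, Complex.norm_exp_I_mul_ofReal, one_mul]
    refine (add_le_add ih' hdiff).trans (le_of_eq ?_)
    ring

/-- Exponential sums whose phase increments `δ_k` decrease, are bounded, and stay away from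
`2πℤ` are bounded independently of their length. -/
lemma kusmin_landau (f δ : ℕ → ℝ) (c M : ℝ) (hc : 0 < c) (hM : 0 ≤ M) (N : ℕ)
    (hf : ∀ k, k + 1 < N → f (k + 1) = f k + δ k)
    (hδ : ∀ k, k + 1 < N → c ≤ ‖Complex.exp (Complex.I * δ k) - 1‖)
    (hanti : ∀ k, k + 2 < N → δ (k + 1) ≤ δ k)
    (hbd : ∀ k, k + 1 < N → |δ k| ≤ M) :
    ‖∑ k ∈ Finset.range N, Complex.exp (Complex.I * f k)‖ ≤ 1 + 2 / c + 2 * M / c ^ 2 := by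
  have hpos : 0 ≤ 2 / c + 2 * M / c ^ 2 := by positivity
  match N with
  | 0 =>
    simp only [Finset.range_zero, Finset.sum_empty, norm_zero]
    linarith
  | 1 =>
    rw [Finset.sum_range_one, Complex.norm_exp_I_mul_ofReal]
    linarith
  | N + 2 =>
    have h := kusmin_landau_aux f δ c hc N (fun k hk => hf k (by omega))
      (fun k hk => hδ k (by omega)) (fun k hk => hanti k (by omega))
    have hg : ‖Complex.exp (Complex.I * f (N + 1)) * (Complex.exp (Complex.I * δ N) - 1)⁻¹‖
        ≤ 1 / c := by
      rw [norm_mul, Complex.norm_exp_I_mul_ofReal, one_mul, norm_inv, one_div]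
      exact inv_anti₀ hc (hδ N (by omega))
    have hvar : (δ 0 - δ N) / c ^ 2 ≤ 2 * M / c ^ 2 := by
      have h0 := abs_le.1 (hbd 0 (by omega))
      have h1 := abs_le.1 (hbd N (by omega))
      gcongr
      linarith
    have hlast := Complex.norm_exp_I_mul_ofReal (f (N + 1))
    have hsplit := norm_le_norm_sub_add
      (∑ k ∈ Finset.range (N + 1), Complex.exp (Complex.I * f k))
      (Complex.exp (Complex.I * f (N + 1)) * (Complex.exp (Complex.I * δ N) - 1)⁻¹)
    rw [Finset.sum_range_succ]
    refine (norm_add_le _ _).trans ?_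
    have h2 : 2 / c = 1 / c + 1 / c := by ring
    linarith

/-! ### The phase function -/

/-- The sine of `t(η)` is increasing in `η`, because `η / √(1 - η²) = tan (arcsin η)`. -/
lemma strictMonoOn_sinArg {A B : ℝ} (hA : 0 < A) (hB : 0 < B) :
    StrictMonoOn (fun η : ℝ => B * η / (A * √(1 - η ^ 2))) (Set.Ioo (-1) 1) := by
  intro x hx y hy hxy
  have h : ∀ η : ℝ, B * η / (A * √(1 - η ^ 2)) = B / A * Real.tan (Real.arcsin η) := by
    intro η
    rw [Real.tan_arcsin, div_mul_div_comm]
  simp only [h]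
  refine mul_lt_mul_of_pos_left ?_ (by positivity)
  refine Real.tan_lt_tan_of_lt_of_lt_pi_div_two (Real.neg_pi_div_two_lt_arcsin.2 hx.1)
    (Real.arcsin_lt_pi_div_two.2 hy.2) ?_
  exact Real.strictMonoOn_arcsin ⟨hx.1.le, hx.2.le⟩ ⟨hy.1.le, hy.2.le⟩ hxy

lemma sinArg_mem {A B η : ℝ} (hA : 0 < A) (hB : 0 < B) (hAB : A ^ 2 + B ^ 2 = 1)
    (hη : η ∈ Set.Ioo (-A) A) : B * η / (A * √(1 - η ^ 2)) ∈ Set.Ioo (-1 : ℝ) 1 := by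
  have hA1 : A < 1 := by nlinarith
  have hs : √(1 - A ^ 2) = B := by
    rw [show 1 - A ^ 2 = B ^ 2 by linarith, Real.sqrt_sq hB.le]
  have hηI : η ∈ Set.Ioo (-1 : ℝ) 1 := ⟨by linarith [hη.1], by linarith [hη.2]⟩
  -- The value at `η = ± A` is `± 1`.
  have h1 := strictMonoOn_sinArg hA hB hηI ⟨by linarith, hA1⟩ hη.2
  have h2 := strictMonoOn_sinArg hA hB ⟨by linarith, by linarith⟩ hηI hη.1
  simp only [neg_sq, hs] at h1 h2
  have e1 : B * A / (A * B) = 1 := by field_simp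
  have e2 : B * -A / (A * B) = -1 := by field_simp
  rw [e1] at h1
  rw [e2] at h2
  exact ⟨h2, h1⟩

lemma strictMonoOn_tF {a b : ℂ} (hA : 0 < ‖a‖) (hB : 0 < ‖b‖) (hAB : ‖a‖ ^ 2 + ‖b‖ ^ 2 = 1) :
    StrictMonoOn (tF a b) (Set.Ioo (-‖a‖) ‖a‖) := by
  intro x hx y hy hxy
  have hA1 : ‖a‖ < 1 := by nlinarith
  have hx' := sinArg_mem hA hB hAB hx
  have hy' := sinArg_mem hA hB hAB hy
  exact Real.strictMonoOn_arcsin ⟨hx'.1.le, hx'.2.le⟩ ⟨hy'.1.le, hy'.2.le⟩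
    (strictMonoOn_sinArg hA hB ⟨by linarith [hx.1], by linarith [hx.2]⟩
      ⟨by linarith [hy.1], by linarith [hy.2]⟩ hxy)

/-- The contribution of `t'(η)` cancels, since `μ'(t(η)) = η`. -/
lemma hasDerivAt_thetaF {a b : ℂ} (hA : 0 < ‖a‖) (hB : 0 < ‖b‖)
    (hAB : ‖a‖ ^ 2 + ‖b‖ ^ 2 = 1) {η : ℝ} (hη : η ∈ Set.Ioo (-‖a‖) ‖a‖) :
    HasDerivAt (thetaF a b) (-2 * tF a b η) η := by
  set A := ‖a‖ with hAdef
  set B := ‖b‖ with hBdef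
  have hA1 : A < 1 := by nlinarith
  have hη2 : η ^ 2 < 1 := by nlinarith [hη.1, hη.2]
  have hq : 0 < 1 - η ^ 2 := by linarith
  have hr : 0 < √(1 - η ^ 2) := Real.sqrt_pos.2 hq
  have hr2 : √(1 - η ^ 2) ^ 2 = 1 - η ^ 2 := Real.sq_sqrt hq.le
  have hs := sinArg_mem hA hB hAB hη
  have htd : DifferentiableAt ℝ (tF a b) η := by
    have hin : DifferentiableAt ℝ (fun η : ℝ => B * η / (A * √(1 - η ^ 2))) η := by
      refine DifferentiableAt.div (by fun_prop) ?_ (by positivity)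
      exact ((by fun_prop : DifferentiableAt ℝ (fun η : ℝ => 1 - η ^ 2) η).sqrt hq.ne').const_mul _
    exact (Real.differentiableAt_arcsin.2 ⟨hs.1.ne', hs.2.ne⟩).comp η hin
  have ht := htd.hasDerivAt
  have hsin : Real.sin (tF a b η) = B * η / (A * √(1 - η ^ 2)) :=
    Real.sin_arcsin hs.1.le hs.2.le
  have hdet : 1 - (A * Real.cos (tF a b η)) ^ 2 = (B / √(1 - η ^ 2)) ^ 2 := by
    rw [mul_pow, Real.cos_sq', hsin, div_pow, div_pow, mul_pow, mul_pow, hr2]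
    field_simp
    linear_combination (η ^ 2 - 1) * hAB
  have hroot : √(1 - (A * Real.cos (tF a b η)) ^ 2) = B / √(1 - η ^ 2) := by
    rw [hdet, Real.sqrt_sq (by positivity)]
  have hpos : 0 < 1 - (A * Real.cos (tF a b η)) ^ 2 := by rw [hdet]; positivity
  have hmu : HasDerivAt (muF a) η (tF a b η) := by
    have h1 : HasDerivAt (fun t : ℝ => A * Real.cos t) (A * -Real.sin (tF a b η)) (tF a b η) :=
      (Real.hasDerivAt_cos _).const_mul A
    have h2 := HasDerivAt.comp (h := fun t : ℝ => A * Real.cos t) (tF a b η)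
      (Real.hasDerivAt_arccos
        (by intro h; rw [h] at hpos; norm_num at hpos)
        (by intro h; rw [h] at hpos; norm_num at hpos)) h1
    refine HasDerivAt.congr_deriv (f := muF a) h2 ?_
    rw [hroot, hsin]
    field_simp
  have h := ((hmu.comp η ht).const_mul 2).sub
    ((((hasDerivAt_id η).const_mul 2)).mul ht)
  refine HasDerivAt.congr_deriv (f := thetaF a b) h ?_
  simp only [id]
  ring

/-! ### The sum over a parity class -/

/-- The sum over the integers of `[L, R]` of the parity of `n` that are `≤ m`, written as a sum over
an arithmetic progression of step `2`. -/
lemma exists_progression (n L R m : ℤ) (F : ℤ → ℂ) :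
    ∃ (y₀ : ℤ) (N : ℕ), L ≤ y₀ ∧ (∀ k : ℕ, k < N → y₀ + 2 * k ≤ R) ∧
      ∑ y ∈ ((Finset.Icc L R).filter fun y => Even (n + y)).filter (· ≤ m), F y
        = ∑ k ∈ Finset.range N, F (y₀ + 2 * k) := by
  refine ⟨L + (n + L) % 2, ((min R m - (L + (n + L) % 2) + 2) / 2).toNat, by omega,
    fun k hk => by omega, ?_⟩
  symm
  refine Finset.sum_bij (fun (k : ℕ) _ => L + (n + L) % 2 + 2 * (k : ℤ)) ?_ ?_ ?_ ?_
  · intro k hk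
    simp only [Finset.mem_range, Finset.mem_filter, Finset.mem_Icc, Int.even_iff] at hk ⊢
    omega
  · intro k _ l _ h
    omega
  · intro y hy
    simp only [Finset.mem_filter, Finset.mem_Icc, Int.even_iff] at hy
    refine ⟨((y - (L + (n + L) % 2)) / 2).toNat, ?_, ?_⟩
    · simp only [Finset.mem_range]
      omega
    · omega
  · intro k _
    rfl

/-- Lemma `RmLb`(1): if `0 ∉ [α,β]`, the partial exponential sums
`∑_{j=0}^{k} e^{inθ(y_j/n)}` are bounded uniformly in `n` and `k ≤ s_n`. -/
theorem stmt10 (a b : ℂ) (hab1 : ‖a‖ ^ 2 + ‖b‖ ^ 2 = 1) (hab : a * b ≠ 0)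
    (α β : ℝ) (hα : -‖a‖ < α) (hαβ : α < β) (hβ : β < ‖a‖)
    (h0 : 0 ∉ Set.Icc α β) :
    ∃ C : ℝ, 0 < C ∧
      ∀ n : ℕ, 0 < n → ∀ m : ℤ,
        ‖∑ y ∈ (Tset α β n).filter (· ≤ m),
            Complex.exp (Complex.I * (n : ℂ) * ((thetaF a b ((y : ℝ) / (n : ℝ)) : ℝ) : ℂ))‖ ≤ C := by
  have hA : 0 < ‖a‖ := norm_pos_iff.2 (left_ne_zero_of_mul hab)
  have hB : 0 < ‖b‖ := norm_pos_iff.2 (right_ne_zero_of_mul hab)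
  have hmono := strictMonoOn_tF hA hB hab1
  have hsub : Set.Icc α β ⊆ Set.Ioo (-‖a‖) ‖a‖ := fun x hx =>
    ⟨hα.trans_le hx.1, hx.2.trans_lt hβ⟩
  have hαm : α ∈ Set.Icc α β := ⟨le_rfl, hαβ.le⟩
  have hβm : β ∈ Set.Icc α β := ⟨hαβ.le, le_rfl⟩
  have ht0 : tF a b 0 = 0 := by simp [tF]
  have h0m : (0 : ℝ) ∈ Set.Ioo (-‖a‖) ‖a‖ := ⟨by linarith, hA⟩
  have htne : ∀ s ∈ Set.Icc (tF a b α) (tF a b β), s ≠ 0 := by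
    rintro s hs rfl
    rw [← ht0] at hs
    exact h0 ⟨(hmono.le_iff_le (hsub hαm) h0m).1 hs.1, (hmono.le_iff_le h0m (hsub hβm)).1 hs.2⟩
  have htlt : tF a b β < Real.pi / 2 :=
    Real.arcsin_lt_pi_div_two.2 (sinArg_mem hA hB hab1 (hsub hβm)).2
  have htgt : -(Real.pi / 2) < tF a b α :=
    Real.neg_pi_div_two_lt_arcsin.2 (sinArg_mem hA hB hab1 (hsub hαm)).1
  -- By compactness, `e^{-4is}` stays away from `1` for `s` in `[t(α), t(β)]`.
  obtain ⟨c, hc, hcb⟩ : ∃ c : ℝ, 0 < c ∧ ∀ s ∈ Set.Icc (tF a b α) (tF a b β),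
      c ≤ ‖Complex.exp (Complex.I * ((-4 * s : ℝ) : ℂ)) - 1‖ := by
    have hle : tF a b α ≤ tF a b β := (hmono (hsub hαm) (hsub hβm) hαβ).le
    obtain ⟨s₀, hs₀, hmin⟩ := isCompact_Icc.exists_isMinOn (Set.nonempty_Icc.2 hle)
      (f := fun s : ℝ => ‖Complex.exp (Complex.I * ((-4 * s : ℝ) : ℂ)) - 1‖) (by fun_prop)
    refine ⟨_, norm_pos_iff.2 ?_, fun s hs => hmin hs⟩
    intro hzero
    obtain ⟨j, hj⟩ := Complex.exp_eq_one_iff.1 (sub_eq_zero.1 hzero)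
    have hj' : -4 * s₀ = j * (2 * Real.pi) := by
      have := congrArg Complex.im hj
      simpa using this
    have hpi := Real.pi_pos
    have hj1 : (j : ℝ) < 1 := by
      by_contra! h
      nlinarith [hs₀.1]
    have hj2 : (-1 : ℝ) < j := by
      by_contra! h
      nlinarith [hs₀.2]
    have hj1' : j < 1 := by exact_mod_cast hj1
    have hj2' : -1 < j := by exact_mod_cast hj2
    obtain rfl : j = 0 := by omega
    apply htne s₀ hs₀
    push_cast at hj'
    linarith
  refine ⟨1 + 2 / c + 2 * (2 * Real.pi) / c ^ 2, by positivity, fun n hn m => ?_⟩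
  have hn' : (0 : ℝ) < n := by exact_mod_cast hn
  obtain ⟨y₀, N, hL, hR, hsum⟩ := exists_progression n ⌈(n : ℝ) * α⌉ ⌊(n : ℝ) * β⌋ m
    (fun y => Complex.exp (Complex.I * (n : ℂ) * ((thetaF a b ((y : ℝ) / (n : ℝ)) : ℝ) : ℂ)))
  unfold Tset
  rw [hsum]
  set x : ℕ → ℝ := fun k => ((y₀ + 2 * (k : ℤ) : ℤ) : ℝ) / (n : ℝ) with hx
  have hxs : ∀ k, x (k + 1) - x k = 2 / n := by
    intro k
    simp only [hx]
    push_cast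
    ring
  have hxm : ∀ k < N, x k ∈ Set.Icc α β := by
    intro k hk
    have h1 : (n : ℝ) * α ≤ ((y₀ + 2 * (k : ℤ) : ℤ) : ℝ) := Int.ceil_le.1 (by omega)
    have h2 : ((y₀ + 2 * (k : ℤ) : ℤ) : ℝ) ≤ (n : ℝ) * β := Int.le_floor.1 (hR k hk)
    exact ⟨(le_div_iff₀ hn').2 (by linarith), (div_le_iff₀ hn').2 (by linarith)⟩
  have hmvt : ∀ k, ∃ ξ : ℝ, k + 1 < N → (ξ ∈ Set.Ioo (x k) (x (k + 1)) ∧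
      n * thetaF a b (x (k + 1)) = n * thetaF a b (x k) + -4 * tF a b ξ) := by
    intro k
    by_cases hk : k + 1 < N
    · have hlt : x k < x (k + 1) := by
        have := hxs k
        have : (0 : ℝ) < 2 / n := by positivity
        linarith
      have hd : ∀ z ∈ Set.Icc (x k) (x (k + 1)),
          HasDerivAt (thetaF a b) (-2 * tF a b z) z := fun z hz =>
        hasDerivAt_thetaF hA hB hab1
          (hsub ⟨(hxm k (by omega)).1.trans hz.1, hz.2.trans (hxm (k + 1) hk).2⟩)
      obtain ⟨ξ, hξ, he⟩ := exists_hasDerivAt_eq_slope (thetaF a b) (fun z => -2 * tF a b z) hlt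
        (fun z hz => (hd z hz).continuousAt.continuousWithinAt)
        (fun z hz => hd z ⟨hz.1.le, hz.2.le⟩)
      refine ⟨ξ, fun _ => ⟨hξ, ?_⟩⟩
      rw [hxs k] at he
      field_simp at he
      linarith
    · exact ⟨0, fun h => absurd h hk⟩
  choose ξ hξ using hmvt
  have hξm : ∀ k, k + 1 < N → ξ k ∈ Set.Icc α β := fun k hk =>
    ⟨(hxm k (by omega)).1.trans (hξ k hk).1.1.le, (hξ k hk).1.2.le.trans (hxm (k + 1) hk).2⟩
  have htm : ∀ k, k + 1 < N → tF a b (ξ k) ∈ Set.Icc (tF a b α) (tF a b β) := fun k hk =>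
    ⟨hmono.monotoneOn (hsub hαm) (hsub (hξm k hk)) (hξm k hk).1,
      hmono.monotoneOn (hsub (hξm k hk)) (hsub hβm) (hξm k hk).2⟩
  have hKL := kusmin_landau (fun k => n * thetaF a b (x k)) (fun k => -4 * tF a b (ξ k)) c
    (2 * Real.pi) hc (by positivity) N (fun k hk => (hξ k hk).2)
    (fun k hk => hcb _ (htm k hk))
    (fun k hk => by
      have := hmono (hsub (hξm k (by omega))) (hsub (hξm (k + 1) (by omega)))
        ((hξ k (by omega)).1.2.trans (hξ (k + 1) (by omega)).1.1)
      linarith)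
    (fun k hk => by
      have := htm k hk
      exact abs_le.2 ⟨by linarith [this.2], by linarith [this.1]⟩)
  convert hKL using 4 with k
  rw [Complex.ofReal_mul, Complex.ofReal_natCast, mul_assoc]
end
end
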